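/- Let q ≥ 4 be a power of 2. Then every irreducible complex character χ of SU_3(q) of even degree whose character field ℚ(χ) is not contained in ℝ has degree χ(1) = q(q²−q+1) and unitary discriminant q+1. -/

import Mathlib

open Matrix

noncomputable section

namespace Paper

/-- The character of a matrix representation. -/
def charOf {G : Type} [Group G] {n : ℕ} (ρ : G →* GL (Fin n) ℂ) : G → ℂ :=
  fun g => Matrix.trace ((ρ g : Matrix (Fin n) (Fin n) ℂ))

/-- Irreducibility of a complex matrix representation. -/
def IsIrredRep {G : Type} [Group G] {n : ℕ} (ρ : G →* GL (Fin n) ℂ) : Prop :=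
  0 < n ∧ ∀ W : Submodule ℂ (Fin n → ℂ),
    (∀ (g : G), ∀ v ∈ W, (ρ g : Matrix (Fin n) (Fin n) ℂ).mulVec v ∈ W) → W = ⊥ ∨ W = ⊤

/-- `χ` is an irreducible complex character of `G`. -/
def IsIrrChar {G : Type} [Group G] (χ : G → ℂ) : Prop :=
  ∃ (n : ℕ) (ρ : G →* GL (Fin n) ℂ), IsIrredRep ρ ∧ χ = charOf ρ

/-- The character field `ℚ(χ)`, as a subfield of `ℂ`. -/
def charField {G : Type} [Group G] (χ : G → ℂ) : Subfield ℂ :=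
  Subfield.closure (Set.range χ)

/-- The subfield of real numbers inside `ℂ`. -/
def realsIn : Subfield ℂ := Subfield.closure (Set.range ((↑) : ℝ → ℂ))

/-- The character field of `χ` is not contained in `ℝ`. -/
def NotReal {G : Type} [Group G] (χ : G → ℂ) : Prop := ¬ charField χ ≤ realsIn

/-- `χ` has unitary discriminant `d`. -/
def HasUnitaryDisc {G : Type} [Group G] (χ : G → ℂ) (d : ℂ) : Prop :=
  ∀ (n : ℕ) (ρ : G →* GL (Fin n) ℂ),
    χ = charOf ρ →
    (∀ g i j, ((ρ g : Matrix (Fin n) (Fin n) ℂ)) i j ∈ charField χ) →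
    ∀ H : Matrix (Fin n) (Fin n) ℂ,
      (∀ i j, H i j ∈ charField χ) →
      IsUnit H.det →
      H.conjTranspose = H →
      (∀ g, ((ρ g : Matrix (Fin n) (Fin n) ℂ)).conjTranspose * H *
        (ρ g : Matrix (Fin n) (Fin n) ℂ) = H) →
      ∃ z ∈ charField χ, z ≠ 0 ∧
        (-1 : ℂ) ^ (n * (n - 1) / 2) * H.det = d * (z * (starRingEnd ℂ) z)

/-- `χ` has orthogonal discriminant `d`. -/
def HasOrthDisc {G : Type} [Group G] (χ : G → ℂ) (d : ℂ) : Prop :=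
  ∀ (n : ℕ) (ρ : G →* GL (Fin n) ℂ),
    χ = charOf ρ →
    (∀ g i j, ((ρ g : Matrix (Fin n) (Fin n) ℂ)) i j ∈ charField χ) →
    ∀ H : Matrix (Fin n) (Fin n) ℂ,
      (∀ i j, H i j ∈ charField χ) →
      IsUnit H.det →
      H.transpose = H →
      (∀ g, ((ρ g : Matrix (Fin n) (Fin n) ℂ)).transpose * H *
        (ρ g : Matrix (Fin n) (Fin n) ℂ) = H) →
      ∃ z ∈ charField χ, z ≠ 0 ∧
        (-1 : ℂ) ^ (n * (n - 1) / 2) * H.det = d * z ^ 2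

/-- `χ` is a rational character. -/
def IsRationalChar {G : Type} [Group G] (χ : G → ℂ) : Prop :=
  ∀ g, ∃ r : ℚ, χ g = (r : ℂ)

/-- `χ` is the character of a representation over `ℚ`. -/
def RealizableOverQ {G : Type} [Group G] (χ : G → ℂ) : Prop :=
  ∃ (n : ℕ) (ρ : G →* GL (Fin n) ℂ), χ = charOf ρ ∧
    ∀ g i j, ∃ r : ℚ, ((ρ g : Matrix (Fin n) (Fin n) ℂ)) i j = (r : ℂ)

end Paper

namespace Paper

variable (p k : ℕ) (F : Type) [Field F] [Fintype F] [ExpChar F p]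

/-- The Gram matrix `Ω` (anti-diagonal ones). -/
def Om : Matrix (Fin 3) (Fin 3) F :=
  Matrix.of fun i j => if (i : ℕ) + (j : ℕ) = 2 then 1 else 0

/-- Entrywise `q`-power Frobenius `Φ` on `3×3` matrices, where `q = p^k`. -/
def Phi : Matrix (Fin 3) (Fin 3) F →+* Matrix (Fin 3) (Fin 3) F :=
  (iterateFrobenius F p k).mapMatrix

/-- The special unitary group `SU₃(q) = {g ∈ SL₃(F_{q²}) : Φ(g)ᵀ·Ω·g = Ω}`. -/
def SU3 : Subgroup (Matrix.SpecialLinearGroup (Fin 3) F) where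
  carrier := {g | (Phi p k F g.val)ᵀ * Om F * g.val = Om F}
  one_mem' := by
    show (Phi p k F (1 : Matrix.SpecialLinearGroup (Fin 3) F).val)ᵀ * Om F *
        (1 : Matrix.SpecialLinearGroup (Fin 3) F).val = Om F
    simp
  mul_mem' := by
    intro a b ha hb
    show (Phi p k F (a.val * b.val))ᵀ * Om F * (a.val * b.val) = Om F
    have ha' : (Phi p k F a.val)ᵀ * Om F * a.val = Om F := ha
    have hb' : (Phi p k F b.val)ᵀ * Om F * b.val = Om F := hb
    calc (Phi p k F (a.val * b.val))ᵀ * Om F * (a.val * b.val)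
        = (Phi p k F b.val)ᵀ * ((Phi p k F a.val)ᵀ * Om F * a.val) * b.val := by
          rw [_root_.map_mul, Matrix.transpose_mul]; simp only [Matrix.mul_assoc]
      _ = (Phi p k F b.val)ᵀ * Om F * b.val := by rw [ha']
      _ = Om F := hb'
  inv_mem' := by
    intro a ha
    show (Phi p k F (a⁻¹).val)ᵀ * Om F * (a⁻¹).val = Om F
    have ha' : (Phi p k F a.val)ᵀ * Om F * a.val = Om F := ha
    have h1 : a.val * (a⁻¹).val = 1 := by
      rw [← Matrix.SpecialLinearGroup.coe_mul, mul_inv_cancel,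
        Matrix.SpecialLinearGroup.coe_one]
    nth_rewrite 1 [← ha']
    calc (Phi p k F (a⁻¹).val)ᵀ * ((Phi p k F a.val)ᵀ * Om F * a.val) * (a⁻¹).val
        = (Phi p k F a.val * Phi p k F (a⁻¹).val)ᵀ * Om F * (a.val * (a⁻¹).val) := by
          rw [Matrix.transpose_mul]; simp only [Matrix.mul_assoc]
      _ = Om F := by rw [← _root_.map_mul, h1, _root_.map_one, Matrix.transpose_one,
            Matrix.one_mul, Matrix.mul_one]

end Paper

/-!
Let `U` be the unipotent radical of the Borel subgroup, `Z` its centre, and `χ` of even degree and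
not real. Suppose `χ` has no `U`-fixed vector; counting multiplicities modulo 2, it has no `Z`-fixed
vector either. Summing `χ(g) - χ(g⁻¹)` over the twists by diagonal automorphisms gives a class
function with vanishing averages over `Z`, and such a function is zero: a Chevalley–Warning count
moves every element into the big cell, where its value depends on the trace only. Hence some
diagonal twist of `χ` is its conjugate, and as the twists have odd order, `χ` would be real. So `U`
fixes a line on which the diagonal torus acts by a character `A`. The eigenvalue of the Weyl element
on this line is a root of the quadratic Hecke relation, and parity and non-reality leave only
`A ≠ 1` and the eigenvalue `q⁻²`, which gives the degree.

For the discriminant, an invariant Hermitian form splits orthogonally along the isotypic parts of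
`Z`. Each nontrivial part carries two elements `e`, `y` of `U` such that `e` has eigenvalues `±1`
and `y` exchanges its eigenspaces isometrically, so it contributes a norm. The `Z`-fixed part has an
orthogonal basis of `q²` vectors with relative squared lengths `q⁻⁴`, once, and `(q + 1) q⁻⁴`, an
odd number of times.
-/

namespace Paper

section QuadraticField

theorem addChar_mul_self {A : Type*} [Ring A] [CharP A 2] (ψ : AddChar A ℂ) (a : A) :
    ψ a * ψ a = 1 := by
  rw [← AddChar.map_add_eq_mul, CharTwo.add_self_eq_zero, AddChar.map_zero_eq_one]

/-- `F` has `q²` elements, where `q = 2 ^ k`. -/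
class HasCardSq (k : ℕ) (F : Type*) [Fintype F] : Prop where
  card_eq : Fintype.card F = (2 ^ k) ^ 2

variable {F : Type*} [Field F] [ExpChar F 2] (k : ℕ)

instance charTwo_of_expChar : CharP F 2 := by
  cases ‹ExpChar F 2›
  assumption

/-- The `q`-power Frobenius `x ↦ x̄` of `F`. -/
def frob : F →+* F := iterateFrobenius F 2 k

theorem frob_apply (x : F) : frob k x = x ^ 2 ^ k := by
  rw [frob, iterateFrobenius_def]

/-- The subfield `𝔽_q` of `F` fixed by the `q`-power Frobenius. -/
def baseField (F : Type*) [Field F] [ExpChar F 2] : Subfield F :=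
  RingHom.eqLocusField (frob k) (RingHom.id F)

instance [Finite F] : Fintype (baseField k F) := Fintype.ofFinite _

variable {k} in
theorem mem_baseField {x : F} : x ∈ baseField k F ↔ frob k x = x := Iff.rfl

/-- The trace map `x ↦ x + x̄` of `F / 𝔽_q`, as an additive endomorphism of `F`. -/
def traceHom : F →+ F := AddMonoidHom.id F + (frob k : F →+* F).toAddMonoidHom

theorem traceHom_apply (x : F) : traceHom k x = x + frob k x := rfl

theorem card_traceHom_ker : Nat.card (traceHom k : F →+ F).ker = Nat.card (baseField k F) :=
  Nat.card_congr <| Equiv.subtypeEquivRight fun x => by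
    rw [AddMonoidHom.mem_ker, traceHom_apply, CharTwo.add_eq_zero, mem_baseField, eq_comm]

variable [Fintype F] [HasCardSq k F]

theorem exponent_ne_zero (F : Type*) [Field F] [Fintype F] [HasCardSq k F] : k ≠ 0 := by
  rintro rfl
  have h := Fintype.one_lt_card (α := F)
  rw [HasCardSq.card_eq (k := 0)] at h
  norm_num at h

@[simp] theorem frob_frob (x : F) : frob k (frob k x) = x := by
  rw [frob_apply, frob_apply, ← pow_mul, ← sq, ← HasCardSq.card_eq (k := k) (F := F),
    FiniteField.pow_card]

theorem frob_add_frob_self (x : F) : frob k (x + frob k x) = x + frob k x := by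
  rw [map_add, frob_frob, add_comm]

theorem frob_mul_frob_self (x : F) : frob k (x * frob k x) = x * frob k x := by
  rw [map_mul, frob_frob, mul_comm]

theorem card_baseField_le : Nat.card (baseField k F) ≤ 2 ^ k := by
  classical
  have hq : 1 < 2 ^ k := Nat.one_lt_two_pow (exponent_ne_zero k F)
  set P : Polynomial F := Polynomial.X ^ 2 ^ k - Polynomial.X
  have hsub : (baseField k F : Set F) ⊆ P.roots.toFinset := fun x hx => by
    rw [SetLike.mem_coe, mem_baseField, frob_apply] at hx
    rw [Finset.mem_coe, Multiset.mem_toFinset,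
      Polynomial.mem_roots (FiniteField.X_pow_card_sub_X_ne_zero F hq)]
    simp [hx]
  calc Nat.card (baseField k F) = (baseField k F : Set F).ncard := Nat.card_coe_set_eq _
    _ ≤ P.roots.toFinset.card := by
        rw [← Set.ncard_coe_finset]
        exact Set.ncard_le_ncard hsub (Finset.finite_toSet _)
    _ ≤ P.natDegree := (Multiset.toFinset_card_le _).trans (Polynomial.card_roots' _)
    _ = 2 ^ k := FiniteField.X_pow_card_sub_X_natDegree_eq F hq

theorem coe_traceHom_range_subset : ((traceHom k : F →+ F).range : Set F) ⊆ baseField k F := by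
  rintro _ ⟨x, rfl⟩
  exact frob_add_frob_self k x

theorem card_traceHom_range_mul :
    Nat.card (traceHom k : F →+ F).range * Nat.card (baseField k F) = (2 ^ k) ^ 2 := by
  rw [← card_traceHom_ker, ← HasCardSq.card_eq (k := k) (F := F), ← Nat.card_eq_fintype_card,
    AddSubgroup.card_eq_card_quotient_mul_card_addSubgroup (traceHom k : F →+ F).ker,
    Nat.card_congr (QuotientAddGroup.quotientKerEquivRange (traceHom k : F →+ F)).toEquiv]

theorem card_traceHom_range_le : Nat.card (traceHom k : F →+ F).range ≤ Nat.card (baseField k F) :=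
  Nat.card_mono (Set.toFinite _) (coe_traceHom_range_subset k)

theorem card_baseField : Fintype.card (baseField k F) = 2 ^ k := by
  rw [← Nat.card_eq_fintype_card]
  have hq : 0 < 2 ^ k := by positivity
  nlinarith [card_traceHom_range_mul k (F := F), card_traceHom_range_le k (F := F),
    card_baseField_le k (F := F)]

theorem exists_add_frob_eq {c : F} (hc : frob k c = c) : ∃ b, b + frob k b = c := by
  have hmul := card_traceHom_range_mul k (F := F)
  rw [Nat.card_eq_fintype_card (α := baseField k F), card_baseField, sq] at hmul
  have hrange : ((traceHom k : F →+ F).range : Set F) = baseField k F := by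
    refine Set.eq_of_subset_of_ncard_le (coe_traceHom_range_subset k) (Eq.le ?_)
    calc (baseField k F : Set F).ncard = Nat.card (baseField k F) := rfl
      _ = Fintype.card (baseField k F) := Nat.card_eq_fintype_card
      _ = 2 ^ k := card_baseField k
      _ = Nat.card (traceHom k : F →+ F).range :=
          (Nat.eq_of_mul_eq_mul_right (by positivity) hmul).symm
  exact hrange.ge hc

theorem exists_sq_eq {c : F} (hc : frob k c = c) : ∃ s, frob k s = s ∧ s ^ 2 = c := by
  refine ⟨c ^ 2 ^ (k - 1), by rw [map_pow, hc], ?_⟩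
  rw [← pow_mul, ← pow_succ, Nat.sub_add_cancel (Nat.pos_of_ne_zero (exponent_ne_zero k F)),
    ← frob_apply, hc]

theorem exists_mul_frob_eq {c : F} (hc : frob k c = c) : ∃ s, s * frob k s = c := by
  obtain ⟨s, hs, rfl⟩ := exists_sq_eq k hc
  exact ⟨s, by rw [hs, sq]⟩

/-- A nontrivial additive character of `F` invariant under `x ↦ x̄`. -/
structure IsFrobFixed (ψ : AddChar F ℂ) : Prop where
  ne_one : ψ ≠ 1
  frob_eq : ∀ a, ψ (frob k a) = ψ a

theorem exists_isFrobFixed : ∃ ψ : AddChar F ℂ, IsFrobFixed k ψ := by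
  obtain ⟨b, hb⟩ := exists_add_frob_eq k (map_one (frob k (F := F)))
  obtain ⟨φ, hφ⟩ := (AddChar.exists_apply_ne_zero (α := F) (a := 1)).2 one_ne_zero
  refine ⟨φ.compAddMonoidHom (traceHom k), AddChar.ne_one_iff.2 ⟨b, ?_⟩, fun a => ?_⟩
  · rwa [AddChar.compAddMonoidHom_apply, traceHom_apply, hb]
  · rw [AddChar.compAddMonoidHom_apply, AddChar.compAddMonoidHom_apply, traceHom_apply,
      traceHom_apply, frob_frob, add_comm]

end QuadraticField

section UnitaryGroup

theorem Om_eq {F : Type} [Field F] : Om F = !![0, 0, 1; 0, 1, 0; 1, 0, 0] := by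
  ext i j; fin_cases i <;> fin_cases j <;> simp [Om]

theorem Om_mul_Om {F : Type} [Field F] : Om F * Om F = 1 := by
  rw [Om_eq]
  ext i j
  fin_cases i <;> fin_cases j <;> simp [Matrix.mul_apply, Fin.sum_univ_three]

variable (k : ℕ) (F : Type) [Field F] [ExpChar F 2]

/-- The group `SU₃(q)` in characteristic two, as a type. -/
abbrev SU := ↥(SU3 2 k F)

variable {F}

/-- The hermitian form on `F ^ 3` with Gram matrix `Ω`. -/
def hermForm (x y : Fin 3 → F) : F :=
  frob k (x 0) * y 2 + frob k (x 1) * y 1 + frob k (x 2) * y 0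

variable {k}

/-- The underlying matrix of an element of `SU₃(q)`. -/
def mat (g : SU k F) : Matrix (Fin 3) (Fin 3) F := g.1.1

@[simp] theorem mat_mul (g h : SU k F) : mat (g * h) = mat g * mat h := rfl

@[simp] theorem mat_one : mat (1 : SU k F) = 1 := rfl

theorem mat_injective : Function.Injective (mat : SU k F → Matrix (Fin 3) (Fin 3) F) :=
  fun _ _ h => Subtype.ext (Subtype.ext h)

theorem det_mat (g : SU k F) : (mat g).det = 1 := g.1.2

theorem map_frob_mat_transpose_mul (g : SU k F) :
    ((mat g).map (frob k))ᵀ * Om F * mat g = Om F := g.2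

/-- The element of `SU₃(q)` given by a matrix of determinant one that preserves `Ω`. -/
def ofMatrix (M : Matrix (Fin 3) (Fin 3) F) (hdet : M.det = 1)
    (hM : (M.map (frob k))ᵀ * Om F * M = Om F) : SU k F := ⟨⟨M, hdet⟩, hM⟩

theorem hermForm_col (g : SU k F) (i j : Fin 3) :
    hermForm k ((mat g).col i) ((mat g).col j) = Om F i j := by
  rw [← map_frob_mat_transpose_mul g]
  simp only [hermForm, Om_eq, Matrix.mul_apply, Fin.sum_univ_three, Matrix.transpose_apply,
    Matrix.map_apply, Matrix.col_apply]
  simp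
  ring

theorem hermForm_mat_mulVec (g : SU k F) (x y : Fin 3 → F) :
    hermForm k (mat g *ᵥ x) (mat g *ᵥ y) = hermForm k x y := by
  have h (i j : Fin 3) := hermForm_col g i j
  simp only [hermForm, Matrix.col_apply] at h
  have h00 := h 0 0
  have h01 := h 0 1
  have h02 := h 0 2
  have h10 := h 1 0
  have h11 := h 1 1
  have h12 := h 1 2
  have h20 := h 2 0
  have h21 := h 2 1
  have h22 := h 2 2
  simp only [Om_eq, of_apply, cons_val', cons_val_zero, cons_val_one, cons_val]
    at h00 h01 h02 h10 h11 h12 h20 h21 h22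
  simp only [hermForm, Matrix.mulVec, dotProduct, Fin.sum_univ_three, map_add, map_mul]
  linear_combination (frob k (x 0) * y 0) * h00 + (frob k (x 0) * y 1) * h01 +
    (frob k (x 0) * y 2) * h02 + (frob k (x 1) * y 0) * h10 + (frob k (x 1) * y 1) * h11 +
    (frob k (x 1) * y 2) * h12 + (frob k (x 2) * y 0) * h20 + (frob k (x 2) * y 1) * h21 +
    (frob k (x 2) * y 2) * h22

end UnitaryGroup

section Unipotent

variable (k : ℕ) (F : Type) [Field F] [ExpChar F 2]

/-- The group of pairs `(a, b)` with `b + b̄ = a ā`, which parametrizes the upper unitriangular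
elements `!![1, a, b; 0, 1, ā; 0, 0, 1]` of `SU₃(q)`. -/
@[ext] structure Unipotent where
  a : F
  b : F
  rel : b + frob k b = a * frob k a

namespace Unipotent

instance [Finite F] : Finite (Unipotent k F) :=
  Finite.of_injective (fun u => (u.a, u.b)) fun _ _ h => by
    rw [Prod.mk.injEq] at h
    exact Unipotent.ext h.1 h.2

instance [Finite F] : Fintype (Unipotent k F) := Fintype.ofFinite _

variable {k F}

instance : One (Unipotent k F) := ⟨⟨0, 0, by simp⟩⟩

@[simp] theorem one_a : (1 : Unipotent k F).a = 0 := rfl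
@[simp] theorem one_b : (1 : Unipotent k F).b = 0 := rfl

theorem a_eq_zero_of_b_eq_zero {u : Unipotent k F} (hb : u.b = 0) : u.a = 0 := by
  simpa [hb] using u.rel

theorem b_ne_zero {u : Unipotent k F} (hu : u ≠ 1) : u.b ≠ 0 :=
  fun hb => hu (Unipotent.ext (a_eq_zero_of_b_eq_zero hb) hb)

/-- The parameter `b` of a nontrivial unipotent element, as a unit. -/
def unitB (u : Unipotent k F) (hu : u ≠ 1) : Fˣ := Units.mk0 u.b (b_ne_zero hu)

/-- The element `(0, c)` of the centre of the unipotent group. -/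
def center (c : baseField k F) : Unipotent k F where
  a := 0
  b := c
  rel := by simp [mem_baseField.1 c.2, CharTwo.add_self_eq_zero]

@[simp] theorem center_a (c : baseField k F) : (center c).a = 0 := rfl
@[simp] theorem center_b (c : baseField k F) : (center c).b = c := rfl

theorem center_zero : center (0 : baseField k F) = 1 := rfl

variable [Fintype F] [HasCardSq k F]

instance : Mul (Unipotent k F) := ⟨fun u v =>
  { a := u.a + v.a
    b := u.b + v.b + u.a * frob k v.a
    rel := by
      simp only [map_add, map_mul, frob_frob]
      linear_combination u.rel + v.rel }⟩

instance : Inv (Unipotent k F) := ⟨fun u =>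
  { a := u.a
    b := frob k u.b
    rel := by
      rw [frob_frob, add_comm]
      exact u.rel }⟩

@[simp] theorem mul_a (u v : Unipotent k F) : (u * v).a = u.a + v.a := rfl
@[simp] theorem mul_b (u v : Unipotent k F) : (u * v).b = u.b + v.b + u.a * frob k v.a := rfl
@[simp] theorem inv_a (u : Unipotent k F) : u⁻¹.a = u.a := rfl
@[simp] theorem inv_b (u : Unipotent k F) : u⁻¹.b = frob k u.b := rfl

instance : Group (Unipotent k F) where
  mul_assoc u v w := Unipotent.ext (by simp [add_assoc]) (by simp; ring)
  one_mul u := Unipotent.ext (by simp) (by simp)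
  mul_one u := Unipotent.ext (by simp) (by simp)
  inv_mul_cancel u := by
    refine Unipotent.ext (CharTwo.add_self_eq_zero u.a) ?_
    rw [mul_b, inv_a, inv_b, one_b, ← u.rel, add_comm (frob k u.b), CharTwo.add_self_eq_zero]

theorem center_add (c d : baseField k F) : center (c + d) = center c * center d :=
  Unipotent.ext (by simp) (by simp)

theorem center_mul_comm (c : baseField k F) (u : Unipotent k F) : center c * u = u * center c :=
  Unipotent.ext (by simp) (by simp [add_comm])

/-- Conjugation by the torus element with parameter `t`. -/
def torusAct (t : Fˣ) (u : Unipotent k F) : Unipotent k F where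
  a := (t : F) ^ 2 / frob k (t : F) * u.a
  b := (t : F) * frob k (t : F) * u.b
  rel := by
    have ht : frob k (t : F) ≠ 0 := by simp
    have h := u.rel
    simp only [map_mul, frob_frob, map_div₀, map_pow]
    field_simp
    linear_combination h

@[simp] theorem torusAct_a (t : Fˣ) (u : Unipotent k F) :
    (torusAct t u).a = (t : F) ^ 2 / frob k (t : F) * u.a := rfl
@[simp] theorem torusAct_b (t : Fˣ) (u : Unipotent k F) :
    (torusAct t u).b = (t : F) * frob k (t : F) * u.b := rfl

/-- The left unipotent factor of `w u w` in the Bruhat decomposition, for `u ≠ 1`. -/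
def weylLeft (u : Unipotent k F) : Unipotent k F where
  a := u.a / frob k u.b
  b := u.b⁻¹
  rel := by
    by_cases hb : u.b = 0
    · simp [hb, a_eq_zero_of_b_eq_zero hb]
    · have hb' : frob k u.b ≠ 0 := by simpa using hb
      simp only [map_div₀, map_inv₀, frob_frob]
      field_simp
      linear_combination u.rel

/-- The right unipotent factor of `w u w` in the Bruhat decomposition, for `u ≠ 1`. -/
def weylRight (u : Unipotent k F) : Unipotent k F where
  a := u.a / u.b
  b := u.b⁻¹
  rel := by
    by_cases hb : u.b = 0
    · simp [hb, a_eq_zero_of_b_eq_zero hb]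
    · have hb' : frob k u.b ≠ 0 := by simpa using hb
      simp only [map_div₀, map_inv₀]
      field_simp
      linear_combination u.rel

end Unipotent

end Unipotent

section Generators

open Unipotent

variable {k : ℕ} {F : Type} [Field F] [ExpChar F 2]

/-- The Weyl group element `Ω`. -/
def weyl : SU k F :=
  ofMatrix (Om F) (by rw [Om_eq]; simp [Matrix.det_fin_three, CharTwo.neg_eq]) (by
    rw [Om_eq]
    ext i j
    fin_cases i <;> fin_cases j <;> simp [Matrix.mul_apply, Fin.sum_univ_three])

theorem mat_weyl : mat (weyl : SU k F) = !![0, 0, 1; 0, 1, 0; 1, 0, 0] := Om_eq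

theorem weyl_mul_weyl : (weyl : SU k F) * weyl = 1 := mat_injective Om_mul_Om

theorem weyl_inv : (weyl : SU k F)⁻¹ = weyl := inv_eq_of_mul_eq_one_left weyl_mul_weyl

variable (k) in
/-- The map `t ↦ 1 / t̄` on units, which describes the action of the Weyl element on the torus. -/
def invConj (t : Fˣ) : Fˣ := (Units.map (frob k : F →+* F) t)⁻¹

@[simp] theorem coe_invConj (t : Fˣ) : (invConj k t : F) = (frob k (t : F))⁻¹ := by
  simp [invConj]

variable [Fintype F] [HasCardSq k F]

@[simp] theorem invConj_invConj (t : Fˣ) : invConj k (invConj k t) = t := by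
  ext; simp

/-- The embedding `(a, b) ↦ !![1, a, b; 0, 1, ā; 0, 0, 1]`. -/
def upper : Unipotent k F →* SU k F :=
  MonoidHom.mk'
    (fun u => ofMatrix !![1, u.a, u.b; 0, 1, frob k u.a; 0, 0, 1]
      (by simp [Matrix.det_fin_three])
      (by
        rw [Om_eq]
        ext i j
        fin_cases i <;> fin_cases j <;>
          simp [Matrix.mul_apply, Fin.sum_univ_three, CharTwo.add_self_eq_zero]
        linear_combination u.rel + u.a * frob k u.a * CharTwo.two_eq_zero (R := F)))
    fun u v => mat_injective <| by
      rw [mat_mul]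
      ext i j
      fin_cases i <;> fin_cases j <;>
        simp [mat, ofMatrix, Matrix.mul_apply, Fin.sum_univ_three] <;> ring

theorem mat_upper (u : Unipotent k F) :
    mat (upper u) = !![1, u.a, u.b; 0, 1, frob k u.a; 0, 0, 1] := rfl

theorem upper_injective : Function.Injective (upper : Unipotent k F → SU k F) := fun u v h => by
  have h' : mat (upper u) = mat (upper v) := by rw [h]
  exact Unipotent.ext (congrFun (congrFun h' 0) 1) (congrFun (congrFun h' 0) 2)

/-- The maximal torus `t ↦ diag(t, t̄ / t, 1 / t̄)`. -/
def torus : Fˣ →* SU k F :=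
  MonoidHom.mk'
    (fun t => ofMatrix !![(t : F), 0, 0; 0, frob k (t : F) / t, 0; 0, 0, (frob k (t : F))⁻¹]
      (by
        simp [Matrix.det_fin_three]
        field)
      (by
        rw [Om_eq]
        ext i j
        fin_cases i <;> fin_cases j <;>
          simp [Matrix.mul_apply, Fin.sum_univ_three]))
    fun s t => mat_injective <| by
      rw [mat_mul]
      ext i j
      fin_cases i <;> fin_cases j <;>
        simp [mat, ofMatrix, Matrix.mul_apply, Fin.sum_univ_three] <;> field

theorem mat_torus (t : Fˣ) :
    mat (torus t : SU k F) =
      !![(t : F), 0, 0; 0, frob k (t : F) / t, 0; 0, 0, (frob k (t : F))⁻¹] := rfl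

theorem weyl_mul_torus (t : Fˣ) : (weyl : SU k F) * torus t = torus (invConj k t) * weyl := by
  apply mat_injective
  rw [mat_mul, mat_mul, mat_torus, mat_torus, mat_weyl]
  ext i j
  fin_cases i <;> fin_cases j <;> simp [Matrix.mul_apply, Fin.sum_univ_three]
  field

theorem torus_mul_upper (t : Fˣ) (u : Unipotent k F) :
    torus t * upper u = upper (torusAct t u) * torus t := by
  apply mat_injective
  rw [mat_mul, mat_mul, mat_torus, mat_upper, mat_upper]
  have ht : frob k (t : F) ≠ 0 := by simp
  ext i j
  fin_cases i <;> fin_cases j <;> simp [Matrix.mul_apply, Fin.sum_univ_three] <;> field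

theorem weyl_mul_upper_mul_weyl (u : Unipotent k F) (hu : u ≠ 1) :
    weyl * upper u * weyl =
      upper (weylLeft u) * torus (invConj k (unitB u hu)) * weyl * upper (weylRight u) := by
  apply mat_injective
  have hb := b_ne_zero hu
  have hb' : frob k u.b ≠ 0 := by simpa using hb
  have h2 : (2 : F) = 0 := CharTwo.two_eq_zero
  simp only [mat_mul, mat_torus, mat_upper, mat_weyl]
  ext i j
  fin_cases i <;> fin_cases j <;>
    simp [Matrix.mul_apply, Fin.sum_univ_three, unitB, weylLeft, weylRight] <;> field_simp
  · linear_combination (-u.a) * h2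
  · linear_combination -u.rel - u.a * frob k u.a * h2
  · linear_combination u.rel - frob k u.b * h2
  · linear_combination (-frob k u.a) * h2

end Generators

section Bruhat

open Unipotent

variable {k : ℕ} {F : Type} [Field F] [ExpChar F 2]

theorem col_mat_mul (g h : SU k F) (j : Fin 3) : (mat (g * h)).col j = mat g *ᵥ (mat h).col j :=
  rfl

theorem mat_one_zero_eq_zero {g : SU k F} (h : mat g 2 0 = 0) : mat g 1 0 = 0 := by
  simpa [hermForm, Om_eq, h] using hermForm_col g 0 0

theorem mat_zero_zero_ne_zero {g : SU k F} (h : mat g 2 0 = 0) : mat g 0 0 ≠ 0 := by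
  intro h0
  have hdet := det_mat g
  simp [Matrix.det_fin_three, h, h0, mat_one_zero_eq_zero h] at hdet

variable [Fintype F] [HasCardSq k F]

theorem exists_eq_upper {g : SU k F} (h0 : mat g 0 0 = 1) (h2 : mat g 2 0 = 0) :
    ∃ u, g = upper u := by
  have h1 := mat_one_zero_eq_zero h2
  have e21 : mat g 2 1 = 0 := by simpa [hermForm, Om_eq, h0, h1, h2] using hermForm_col g 0 1
  have e22 : mat g 2 2 = 1 := by simpa [hermForm, Om_eq, h0, h1, h2] using hermForm_col g 0 2
  have e11 : mat g 1 1 = 1 := by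
    simpa [Matrix.det_fin_three, h0, h1, h2, e21, e22] using det_mat g
  have e12 : frob k (mat g 0 1) = mat g 1 2 := by
    have h := hermForm_col g 1 2
    simpa [hermForm, Om_eq, e11, e21, e22, CharTwo.add_eq_zero] using h
  have rel := hermForm_col g 2 2
  simp only [hermForm, col_apply, e22, ← e12, frob_frob, Om_eq, mul_one, map_one, one_mul, of_apply,
    cons_val', cons_val, cons_val_fin_one] at rel
  refine ⟨⟨mat g 0 1, mat g 0 2, ?_⟩, mat_injective ?_⟩
  · linear_combination rel - mat g 0 1 * frob k (mat g 0 1) * CharTwo.two_eq_zero (R := F)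
  · rw [mat_upper]
    ext i j
    fin_cases i <;> fin_cases j <;> simp [h0, h1, h2, e11, e12, e21, e22]

theorem mat_mul_torus_apply_zero (g : SU k F) (t : Fˣ) (i : Fin 3) :
    mat (g * torus t) i 0 = mat g i 0 * t := by
  simp [mat_torus, Matrix.mul_apply, Fin.sum_univ_three]

theorem exists_eq_upper_mul_torus {g : SU k F} (h : mat g 2 0 = 0) :
    ∃ (u : Unipotent k F) (t : Fˣ), g = upper u * torus t := by
  set t : Fˣ := Units.mk0 _ (mat_zero_zero_ne_zero h)
  obtain ⟨u, hu⟩ := exists_eq_upper (g := g * torus t⁻¹)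
    (by rw [mat_mul_torus_apply_zero]; exact t.mul_inv)
    (by rw [mat_mul_torus_apply_zero, h, zero_mul])
  exact ⟨u, t, by rw [← hu, map_inv, inv_mul_cancel_right]⟩

theorem exists_big_cell_col {x : Fin 3 → F} (hx : hermForm k x x = 0) {t : Fˣ}
    (ht : x 2 = invConj k t) :
    ∃ u : Unipotent k F, (mat (upper u * torus t * weyl)).col 0 = x := by
  have hx2 : x 2 ≠ 0 := ht ▸ Units.ne_zero _
  have hfx2 : frob k (x 2) ≠ 0 := by simpa using hx2
  refine ⟨⟨frob k (x 1) / frob k (x 2), x 0 / x 2, ?_⟩, ?_⟩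
  · simp only [map_div₀, frob_frob]
    rw [hermForm] at hx
    field_simp
    linear_combination hx - frob k (x 1) * x 1 * CharTwo.two_eq_zero (R := F)
  · have ht' : (frob k (t : F))⁻¹ = x 2 := by rw [ht, coe_invConj]
    ext i
    fin_cases i <;>
      simp [mat_upper, mat_torus, mat_weyl, ht', hx2]

theorem exists_big_cell {g : SU k F} {t : Fˣ} (h : mat g 2 0 = invConj k t) :
    ∃ u v : Unipotent k F, g = upper u * torus t * weyl * upper v := by
  obtain ⟨u, hu⟩ := exists_big_cell_col
    (show hermForm k ((mat g).col 0) _ = 0 by simp [hermForm_col, Om_eq]) h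
  set b := upper u * torus t * weyl
  have hcol : (mat (b⁻¹ * g)).col 0 = (1 : Matrix (Fin 3) (Fin 3) F).col 0 := by
    rw [← mat_one, ← inv_mul_cancel b, col_mat_mul, col_mat_mul, hu]
  obtain ⟨v, hv⟩ := exists_eq_upper (g := b⁻¹ * g)
    ((congrFun hcol 0).trans (by simp)) ((congrFun hcol 2).trans (by simp))
  exact ⟨u, v, by rw [← hv, mul_inv_cancel_left]⟩

theorem exists_big_cell_of_ne_zero {g : SU k F} (h : mat g 2 0 ≠ 0) :
    ∃ (u : Unipotent k F) (t : Fˣ) (v : Unipotent k F),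
      g = upper u * torus t * weyl * upper v := by
  obtain ⟨u, v, h⟩ := exists_big_cell (g := g) (t := invConj k (Units.mk0 _ h)) (by simp)
  exact ⟨u, _, v, h⟩

theorem exists_col_eq_of_isotropic {x : Fin 3 → F} (hx0 : x ≠ 0) (hx : hermForm k x x = 0) :
    ∃ g : SU k F, (mat g).col 0 = x := by
  by_cases h2 : x 2 = 0
  · have h1 : x 1 = 0 := by simpa [hermForm, h2] using hx
    have h0 : x 0 ≠ 0 := fun h0 => hx0 (by ext i; fin_cases i <;> assumption)
    refine ⟨torus (Units.mk0 _ h0), ?_⟩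
    ext i
    fin_cases i <;> simp [mat_torus, h1, h2]
  · obtain ⟨u, hu⟩ := exists_big_cell_col hx (t := invConj k (Units.mk0 _ h2)) (by simp)
    exact ⟨_, hu⟩

theorem mat_borel_zero_zero (u : Unipotent k F) (t : Fˣ) :
    mat (upper u * torus t) 0 0 = (t : F) := by
  simp [mat_upper, mat_torus, Matrix.mul_apply, Fin.sum_univ_three]

theorem mat_borel_two_zero (u : Unipotent k F) (t : Fˣ) : mat (upper u * torus t) 2 0 = 0 := by
  simp [mat_upper, mat_torus, Matrix.mul_apply, Fin.sum_univ_three]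

theorem mat_big_cell_col (u : Unipotent k F) (t : Fˣ) (v : Unipotent k F) :
    (mat (upper u * torus t * weyl * upper v)).col 0 =
      (frob k (t : F))⁻¹ • ![u.b, frob k u.a, 1] := by
  ext i
  fin_cases i <;>
    simp [mat_upper, mat_torus, mat_weyl, mul_comm]

theorem mat_big_cell_two_zero (u : Unipotent k F) (t : Fˣ) (v : Unipotent k F) :
    mat (upper u * torus t * weyl * upper v) 2 0 = (frob k (t : F))⁻¹ := by
  simpa using congrFun (mat_big_cell_col u t v) 2

/-- The Bruhat parametrization: the Borel subgroup `U T` and the big cell `U T w U`. -/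
def bruhatMap : (Unipotent k F × Fˣ) ⊕ (Unipotent k F × Fˣ × Unipotent k F) → SU k F
  | Sum.inl (u, t) => upper u * torus t
  | Sum.inr (u, t, v) => upper u * torus t * weyl * upper v

theorem borel_ne_big_cell (u : Unipotent k F) (t : Fˣ) (u' : Unipotent k F) (t' : Fˣ)
    (v' : Unipotent k F) : upper u * torus t ≠ upper u' * torus t' * weyl * upper v' := fun h => by
  have h0 : (0 : F) = (frob k (t' : F))⁻¹ := by
    rw [← mat_borel_two_zero u t, h, mat_big_cell_two_zero]
  exact inv_ne_zero (by simp) h0.symm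

theorem bruhatMap_injective : Function.Injective (bruhatMap (k := k) (F := F)) := by
  rintro (⟨u, t⟩ | ⟨u, t, v⟩) (⟨u', t'⟩ | ⟨u', t', v'⟩) h <;> simp only [bruhatMap] at h
  · obtain rfl : t = t' := Units.ext <| by
      simpa only [mat_borel_zero_zero] using congrArg (fun g => mat g 0 0) h
    rw [upper_injective (mul_right_cancel h)]
  · exact absurd h (borel_ne_big_cell u t u' t' v')
  · exact absurd h.symm (borel_ne_big_cell u' t' u t v)
  · have hcol := congrArg (fun g => (mat g).col 0) h
    simp only [mat_big_cell_col] at hcol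
    obtain rfl : t = t' := Units.ext ((frob k).injective (by simpa using congrFun hcol 2))
    have hvec := smul_right_injective _ (inv_ne_zero (show frob k (t : F) ≠ 0 by simp)) hcol
    obtain rfl : u = u' :=
      Unipotent.ext ((frob k).injective (congrFun hvec 1)) (congrFun hvec 0)
    rw [upper_injective (mul_left_cancel h)]

theorem bruhatMap_bijective : Function.Bijective (bruhatMap (k := k) (F := F)) := by
  refine ⟨bruhatMap_injective, fun g => ?_⟩
  by_cases h : mat g 2 0 = 0
  · obtain ⟨u, t, rfl⟩ := exists_eq_upper_mul_torus h
    exact ⟨Sum.inl (u, t), rfl⟩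
  · obtain ⟨u, t, v, rfl⟩ := exists_big_cell_of_ne_zero h
    exact ⟨Sum.inr (u, t, v), rfl⟩

instance : Fintype (SU k F) := Fintype.ofFinite _

theorem sum_bruhat [DecidableEq F] {M : Type*} [AddCommMonoid M] (f : SU k F → M) :
    ∑ g, f g = ∑ u, ∑ t : Fˣ, f (upper u * torus t) +
      ∑ u, ∑ t : Fˣ, ∑ v, f (upper u * torus t * weyl * upper v) := by
  rw [← bruhatMap_bijective.sum_comp f, Fintype.sum_sum_type]
  simp only [Fintype.sum_prod_type, bruhatMap]

end Bruhat

section Representations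

open scoped ComplexOrder

variable {G : Type*} [Group G] {m n : ℕ}

/-- Irreducibility of a representation by complex matrices. Homomorphisms to the matrix monoid
rather than to `GL` are used so that the matrices `R g` can be added and multiplied freely. -/
structure IsIrred (R : G →* Matrix (Fin n) (Fin n) ℂ) : Prop where
  pos : 0 < n
  eq_bot_or_eq_top : ∀ W : Submodule ℂ (Fin n → ℂ), (∀ g, ∀ v ∈ W, R g *ᵥ v ∈ W) → W = ⊥ ∨ W = ⊤

theorem map_mul_map_inv (R : G →* Matrix (Fin n) (Fin n) ℂ) (g : G) : R g * R g⁻¹ = 1 := by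
  rw [← map_mul, mul_inv_cancel, map_one]

theorem map_inv_mul_map (R : G →* Matrix (Fin n) (Fin n) ℂ) (g : G) : R g⁻¹ * R g = 1 := by
  rw [← map_mul, inv_mul_cancel, map_one]

variable {R S : G →* Matrix (Fin n) (Fin n) ℂ}

theorem IsIrred.span_orbit_eq_top (hR : IsIrred R) {v : Fin n → ℂ} (hv : v ≠ 0) :
    Submodule.span ℂ (Set.range fun g => R g *ᵥ v) = ⊤ := by
  set W := Submodule.span ℂ (Set.range fun g => R g *ᵥ v)
  have hvW : v ∈ W := Submodule.subset_span ⟨1, by simp⟩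
  have hmap (g : G) : W ≤ W.comap (R g).mulVecLin := by
    rw [Submodule.span_le]
    rintro _ ⟨h, rfl⟩
    exact Submodule.subset_span ⟨g * h, by simp [Matrix.mulVec_mulVec]⟩
  refine (hR.eq_bot_or_eq_top W fun g x hx => hmap g hx).resolve_left fun h => hv ?_
  rwa [h, Submodule.mem_bot] at hvW

theorem IsIrred.eq_zero_of_mulVec_orbit (hR : IsIrred R) {M : Matrix (Fin m) (Fin n) ℂ}
    {v : Fin n → ℂ} (hv : v ≠ 0) (h : ∀ g, M *ᵥ (R g *ᵥ v) = 0) : M = 0 := by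
  have htop : (⊤ : Submodule ℂ (Fin n → ℂ)) ≤ LinearMap.ker M.mulVecLin := by
    rw [← hR.span_orbit_eq_top hv, Submodule.span_le]
    rintro _ ⟨g, rfl⟩
    exact h g
  refine Matrix.ext_of_mulVec_single fun i => ?_
  rw [Matrix.zero_mulVec]
  exact htop Submodule.mem_top

theorem exists_eigenvector_mem_range {e X : Matrix (Fin n) (Fin n) ℂ} (he0 : e ≠ 0)
    (he : IsIdempotentElem e) (hX : e * X = X) :
    ∃ (v : Fin n → ℂ) (c : ℂ), v ≠ 0 ∧ e *ᵥ v = v ∧ X *ᵥ v = c • v := by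
  let W := LinearMap.range e.mulVecLin
  have he_apply : ∀ x ∈ W, e *ᵥ x = x := by
    rintro _ ⟨y, rfl⟩
    simp [Matrix.mulVec_mulVec, he.eq]
  have hXW : ∀ x ∈ W, X.mulVecLin x ∈ W := fun x _ => ⟨X *ᵥ x, by simp [Matrix.mulVec_mulVec, hX]⟩
  have : Nontrivial W := by
    rw [Submodule.nontrivial_iff_ne_bot, Ne, LinearMap.range_eq_bot]
    exact fun h => he0 ((LinearEquiv.map_eq_zero_iff Matrix.toLin').1 h)
  obtain ⟨c, hc⟩ := Module.End.exists_eigenvalue (X.mulVecLin.restrict hXW)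
  obtain ⟨v, hv⟩ := hc.exists_hasEigenvector
  exact ⟨v, c, fun h => hv.2 (Subtype.ext h), he_apply _ v.2,
    by simpa using congrArg Subtype.val hv.apply_eq_smul⟩

theorem IsIrred.exists_eq_smul_one (hR : IsIrred R) {X : Matrix (Fin n) (Fin n) ℂ}
    (hX : ∀ g, X * R g = R g * X) : ∃ c : ℂ, X = c • 1 := by
  have : Nonempty (Fin n) := ⟨⟨0, hR.pos⟩⟩
  obtain ⟨v, c, hv, -, hc⟩ :=
    exists_eigenvector_mem_range (X := X) one_ne_zero IsIdempotentElem.one (one_mul X)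
  refine ⟨c, sub_eq_zero.1 (hR.eq_zero_of_mulVec_orbit hv fun g => ?_)⟩
  rw [Matrix.mulVec_mulVec, sub_mul, hX]
  simp [Matrix.sub_mulVec, ← Matrix.mulVec_mulVec, hc, Matrix.mulVec_smul, Matrix.smul_mulVec]

theorem trace_eq_finrank_range {e : Matrix (Fin n) (Fin n) ℂ} (he : IsIdempotentElem e) :
    e.trace = Module.finrank ℂ (LinearMap.range e.mulVecLin) := by
  have h : LinearMap.IsProj (LinearMap.range e.mulVecLin) e.mulVecLin := by
    refine ⟨fun x => ⟨x, rfl⟩, ?_⟩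
    rintro _ ⟨y, rfl⟩
    simp [Matrix.mulVec_mulVec, he.eq]
  rw [← h.trace, ← Matrix.trace_toLin'_eq]
  rfl

/-- The algebra `e R(G) e` acts irreducibly on the range of `e`. -/
theorem IsIrred.exists_mul_mul_eq_smul (hR : IsIrred R) {e : Matrix (Fin n) (Fin n) ℂ}
    (he : IsIdempotentElem e) (he0 : e ≠ 0)
    (hcomm : ∀ g h, e * R g * e * (e * R h * e) = e * R h * e * (e * R g * e)) (g : G) :
    ∃ c : ℂ, e * R g * e = c • e := by
  obtain ⟨v, c, hv, hev, hc⟩ := exists_eigenvector_mem_range (X := e * R g * e) he0 he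
    (by simp only [← mul_assoc, he.eq])
  refine ⟨c, sub_eq_zero.1 (hR.eq_zero_of_mulVec_orbit hv fun h => ?_)⟩
  have hv_fixed : (e * R h * e) *ᵥ v = e *ᵥ (R h *ᵥ v) := by
    simp only [← Matrix.mulVec_mulVec, hev]
  have hmul : e * R g * e * (e * R h * e) = e * R g * e * (R h * e) := by
    rw [mul_assoc e (R h), ← mul_assoc _ e, mul_assoc (e * R g) e e, he.eq]
  have key : (e * R g * e) *ᵥ (R h *ᵥ v) = c • e *ᵥ (R h *ᵥ v) :=
    calc (e * R g * e) *ᵥ (R h *ᵥ v)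
        = (e * R g * e * (e * R h * e)) *ᵥ v := by
          rw [hmul, ← Matrix.mulVec_mulVec _ (e * R g * e), ← Matrix.mulVec_mulVec _ (R h), hev]
      _ = c • e *ᵥ (R h *ᵥ v) := by
          rw [hcomm, ← Matrix.mulVec_mulVec, hc, Matrix.mulVec_smul, hv_fixed]
  rw [Matrix.sub_mulVec, key, Matrix.smul_mulVec, sub_self]

theorem IsIrred.trace_eq_one_of_mul_mul_eq_smul (hR : IsIrred R) {e : Matrix (Fin n) (Fin n) ℂ}
    (he : IsIdempotentElem e) (he0 : e ≠ 0) (h : ∀ g, ∃ c : ℂ, e * R g * e = c • e) :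
    e.trace = 1 := by
  obtain ⟨v, -, hv, hev, -⟩ := exists_eigenvector_mem_range he0 he he
  have hline : (⊤ : Submodule ℂ (Fin n → ℂ)) ≤ (ℂ ∙ v).comap e.mulVecLin := by
    rw [← hR.span_orbit_eq_top hv, Submodule.span_le]
    rintro _ ⟨g, rfl⟩
    obtain ⟨c, hc⟩ := h g
    have : e *ᵥ (R g *ᵥ v) = c • v := by
      conv_rhs => rw [← hev, ← Matrix.smul_mulVec, ← hc]
      simp only [← Matrix.mulVec_mulVec, hev]
    exact Submodule.mem_span_singleton.2 ⟨c, this.symm⟩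
  have hrange : LinearMap.range e.mulVecLin = ℂ ∙ v := by
    refine le_antisymm ?_ ?_
    · rintro _ ⟨x, rfl⟩
      exact hline Submodule.mem_top
    · rw [Submodule.span_singleton_le_iff_mem]
      exact ⟨v, hev⟩
  rw [trace_eq_finrank_range he, hrange, finrank_span_singleton hv, Nat.cast_one]

theorem trace_eq_of_mul_eq_mul {Y : Matrix (Fin n) (Fin n) ℂ} (hY : IsUnit Y.det)
    (h : ∀ g, S g * Y = Y * R g) (g : G) : (S g).trace = (R g).trace := by
  have hS : S g = Y * R g * Y⁻¹ := by rw [← h, mul_assoc, Matrix.mul_nonsing_inv _ hY, mul_one]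
  rw [hS, Matrix.trace_mul_comm, ← mul_assoc, Matrix.nonsing_inv_mul _ hY, one_mul]

theorem IsIrred.of_mul_eq_mul (hR : IsIrred R) {Y : Matrix (Fin n) (Fin n) ℂ} (hY : IsUnit Y.det)
    (h : ∀ g, S g * Y = Y * R g) : IsIrred S := by
  refine ⟨hR.pos, fun W hW => ?_⟩
  have hsurj : Function.Surjective Y.mulVecLin := fun x =>
    ⟨Y⁻¹ *ᵥ x, by simp [Matrix.mulVec_mulVec, Matrix.mul_nonsing_inv _ hY]⟩
  have hinv : ∀ g, ∀ v ∈ W.comap Y.mulVecLin, R g *ᵥ v ∈ W.comap Y.mulVecLin := by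
    intro g v hv
    rw [Submodule.mem_comap, Matrix.mulVecLin_apply, Matrix.mulVec_mulVec, ← h,
      ← Matrix.mulVec_mulVec]
    exact hW g _ hv
  have hmap := Submodule.map_comap_eq_of_surjective hsurj W
  refine (hR.eq_bot_or_eq_top _ hinv).imp (fun h0 => ?_) fun h1 => ?_
  · rw [← hmap, h0, Submodule.map_bot]
  · rw [← hmap, h1, Submodule.map_top, LinearMap.range_eq_top.2 hsurj]

theorem trace_mul_trace_eq_sum_single (A B : Matrix (Fin n) (Fin n) ℂ) :
    A.trace * B.trace = ∑ i, ∑ j, (A * Matrix.single i j 1 * B : Matrix _ _ ℂ) i j := by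
  rw [Matrix.trace, Matrix.trace, Finset.sum_mul_sum]
  refine Finset.sum_congr rfl fun i _ => Finset.sum_congr rfl fun j _ => ?_
  simp [Matrix.mul_apply, Matrix.single_apply, ite_and]

section Finite

variable [Finite G]

theorem exists_posDef_invariant (R : G →* Matrix (Fin n) (Fin n) ℂ) :
    ∃ H : Matrix (Fin n) (Fin n) ℂ, H.PosDef ∧ ∀ g, (R g)ᴴ * H * R g = H := by
  have := Fintype.ofFinite G
  refine ⟨∑ g, (R g)ᴴ * R g, Matrix.posDef_sum ⟨1, Finset.mem_univ 1⟩ fun g _ => ?_, fun h => ?_⟩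
  · exact Matrix.PosDef.conjTranspose_mul_self _
      (Matrix.mulVec_injective_of_isUnit ((Group.isUnit g).map R))
  · rw [Finset.mul_sum, Finset.sum_mul]
    refine Fintype.sum_equiv (Equiv.mulRight h) _ _ fun g => ?_
    simp only [Equiv.coe_mulRight, map_mul, Matrix.conjTranspose_mul, mul_assoc]

theorem trace_map_inv (R : G →* Matrix (Fin n) (Fin n) ℂ) (g : G) :
    (R g⁻¹).trace = starRingEnd ℂ (R g).trace := by
  obtain ⟨H, hH, hinv⟩ := exists_posDef_invariant R
  have hdet : IsUnit H.det := (Matrix.isUnit_iff_isUnit_det _).1 hH.isUnit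
  have hadj : H * R g⁻¹ = (R g)ᴴ * H := by
    conv_lhs => rw [← hinv g]
    rw [mul_assoc, map_mul_map_inv, mul_one]
  have hconj : R g⁻¹ = H⁻¹ * ((R g)ᴴ * H) := by
    rw [← hadj, ← mul_assoc, Matrix.nonsing_inv_mul _ hdet, one_mul]
  rw [hconj, Matrix.trace_mul_comm, mul_assoc, Matrix.mul_nonsing_inv _ hdet, mul_one,
    Matrix.trace_conjTranspose]
  rfl

end Finite

variable [Fintype G]

theorem map_mul_sum_eq_sum_mul_map (R : G →* Matrix (Fin n) (Fin n) ℂ)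
    (S : G →* Matrix (Fin m) (Fin m) ℂ) (X : Matrix (Fin m) (Fin n) ℂ) (h : G) :
    S h * ∑ g, S g * X * R g⁻¹ = (∑ g, S g * X * R g⁻¹) * R h := by
  rw [Matrix.sum_mul, Matrix.mul_sum]
  refine Fintype.sum_equiv (Equiv.mulLeft h) _ _ fun g => ?_
  simp only [Equiv.coe_mulLeft, _root_.mul_inv_rev, map_mul, Matrix.mul_assoc, map_inv_mul_map,
    Matrix.mul_one]

theorem IsIrred.sum_mul_mul_inv (hR : IsIrred R) (X : Matrix (Fin n) (Fin n) ℂ) :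
    ∑ g, R g * X * R g⁻¹ = ((Fintype.card G : ℂ) * X.trace / n) • 1 := by
  obtain ⟨c, hc⟩ := hR.exists_eq_smul_one fun h => (map_mul_sum_eq_sum_mul_map R R X h).symm
  have htrace (g : G) : (R g * X * R g⁻¹).trace = X.trace := by
    rw [Matrix.trace_mul_comm, ← mul_assoc, map_inv_mul_map, one_mul]
  have hn : (n : ℂ) ≠ 0 := by exact_mod_cast hR.pos.ne'
  have hcard : (Fintype.card G : ℂ) * X.trace = c * n := by
    simpa [Matrix.trace_sum, htrace] using congrArg Matrix.trace hc
  rw [hc, hcard, mul_div_cancel_right₀ _ hn]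

theorem IsIrred.trace_map_eq_sum (hR : IsIrred R) {X : Matrix (Fin n) (Fin n) ℂ}
    (hX : X.trace ≠ 0) (g : G) : (R g).trace =
      n / (Fintype.card G * X.trace) * ∑ x, (X * R (x⁻¹ * g * x)).trace := by
  have hn : (n : ℂ) ≠ 0 := Nat.cast_ne_zero.2 hR.pos.ne'
  have hcard : (Fintype.card G : ℂ) ≠ 0 := Nat.cast_ne_zero.2 Fintype.card_ne_zero
  have hterm (x : G) : (R x * X * R x⁻¹ * R g).trace = (X * R (x⁻¹ * g * x)).trace := by
    rw [mul_assoc, mul_assoc, Matrix.trace_mul_comm, map_mul, map_mul, mul_assoc]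
  have h := congrArg (fun Y => (Y * R g).trace) (hR.sum_mul_mul_inv X)
  simp only [Finset.sum_mul, Matrix.trace_sum, hterm, Matrix.smul_mul, one_mul, Matrix.trace_smul,
    smul_eq_mul] at h
  rw [h]
  field_simp

theorem IsIrred.exists_mul_eq_mul (hR : IsIrred R)
    (hpair : ∑ g, (S g).trace * (R g⁻¹).trace ≠ 0) :
    ∃ Y : Matrix (Fin n) (Fin n) ℂ, IsUnit Y.det ∧ ∀ g, S g * Y = Y * R g := by
  obtain ⟨i, j, hij⟩ : ∃ i j : Fin n, ∑ g, S g * Matrix.single i j 1 * R g⁻¹ ≠ 0 := by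
    by_contra! hzero
    refine hpair ?_
    simp only [trace_mul_trace_eq_sum_single]
    rw [Finset.sum_comm]
    refine Finset.sum_eq_zero fun i _ => ?_
    rw [Finset.sum_comm]
    refine Finset.sum_eq_zero fun j _ => ?_
    simpa [Matrix.sum_apply] using congrFun (congrFun (hzero i j) i) j
  set Y := ∑ g, S g * Matrix.single i j 1 * R g⁻¹
  have hY (g : G) : S g * Y = Y * R g := map_mul_sum_eq_sum_mul_map R S _ g
  refine ⟨Y, isUnit_iff_ne_zero.2 fun hdet => hij ?_, hY⟩
  obtain ⟨v, hv, hYv⟩ := Matrix.exists_mulVec_eq_zero_iff.2 hdet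
  refine hR.eq_zero_of_mulVec_orbit hv fun g => ?_
  rw [Matrix.mulVec_mulVec, ← hY, ← Matrix.mulVec_mulVec, hYv, Matrix.mulVec_zero]

theorem sum_trace_mul_trace_inv_ne_zero (R : G →* Matrix (Fin n) (Fin n) ℂ) (hn : 0 < n) :
    ∑ g, (R g).trace * (R g⁻¹).trace ≠ 0 := by
  have hpos : 0 < ∑ g, Complex.normSq (R g).trace := by
    refine Finset.sum_pos' (fun g _ => Complex.normSq_nonneg _) ⟨1, Finset.mem_univ 1, ?_⟩
    simpa using hn.ne'
  simp only [trace_map_inv, Complex.mul_conj]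
  exact_mod_cast hpos.ne'

end Representations

section CharProj

variable {H H' : Type*} [Group H] [Group H'] {n : ℕ}

theorem apply_mul_apply_inv (χ : H →* ℂ) (h : H) : χ h * χ h⁻¹ = 1 := by
  rw [← map_mul, mul_inv_cancel, map_one]

theorem star_apply_inv [Finite H] (χ : H →* ℂ) (h : H) : star (χ h⁻¹) = χ h := by
  have hnorm : ‖χ h‖ = 1 := (MonoidHom.isOfFinOrder χ (isOfFinOrder_of_finite h)).norm_eq_one
  rw [eq_inv_of_mul_eq_one_right (apply_mul_apply_inv χ h), Complex.inv_eq_conj hnorm]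
  exact star_star _

variable [Fintype H] [Fintype H']

/-- The projection onto the isotypic component of the linear character `χ` in the
representation `S`. -/
def charProj (χ : H →* ℂ) (S : H →* Matrix (Fin n) (Fin n) ℂ) : Matrix (Fin n) (Fin n) ℂ :=
  (Fintype.card H : ℂ)⁻¹ • ∑ h, χ h⁻¹ • S h

variable {χ : H →* ℂ} {S : H →* Matrix (Fin n) (Fin n) ℂ}

theorem mul_charProj_eq {χ' : H' →* ℂ} {S' : H' →* Matrix (Fin n) (Fin n) ℂ} (σ : H ≃* H')
    (hχ : ∀ h, χ' (σ h) = χ h) {X : Matrix (Fin n) (Fin n) ℂ}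
    (hX : ∀ h, X * S h = S' (σ h) * X) : X * charProj χ S = charProj χ' S' * X := by
  rw [charProj, charProj, Matrix.mul_smul, Matrix.smul_mul, Finset.mul_sum, Finset.sum_mul,
    Fintype.card_congr σ.toEquiv]
  congr 1
  refine Fintype.sum_equiv σ.toEquiv _ _ fun h => ?_
  simp [hX, ← map_inv, hχ]

theorem map_mul_charProj (h : H) : S h * charProj χ S = χ h • charProj χ S := by
  rw [charProj, Matrix.mul_smul, smul_comm, Finset.mul_sum, Finset.smul_sum (r := χ h)]
  congr 1
  refine Fintype.sum_equiv (Equiv.mulLeft h) _ _ fun x => ?_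
  simp only [Equiv.coe_mulLeft, _root_.mul_inv_rev, map_mul, Matrix.mul_smul, smul_smul]
  rw [mul_left_comm, apply_mul_apply_inv, mul_one]

theorem charProj_mul_map (h : H) : charProj χ S * S h = χ h • charProj χ S := by
  rw [charProj, Matrix.smul_mul, smul_comm, Finset.sum_mul, Finset.smul_sum (r := χ h)]
  congr 1
  refine Fintype.sum_equiv (Equiv.mulRight h) _ _ fun x => ?_
  simp only [Equiv.coe_mulRight, _root_.mul_inv_rev, map_mul, Matrix.smul_mul, smul_smul]
  rw [← mul_assoc, apply_mul_apply_inv, one_mul]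

theorem charProj_mul_of_map_mul_eq {X : Matrix (Fin n) (Fin n) ℂ}
    (hX : ∀ h, S h * X = χ h • X) : charProj χ S * X = X := by
  have hcard : (Fintype.card H : ℂ) ≠ 0 := Nat.cast_ne_zero.2 Fintype.card_ne_zero
  have hterm (h : H) : χ h⁻¹ • S h * X = X := by
    rw [Matrix.smul_mul, hX, smul_smul, mul_comm, apply_mul_apply_inv, one_smul]
  rw [charProj, Matrix.smul_mul, Finset.sum_mul, Finset.sum_congr rfl fun h _ => hterm h,
    Finset.sum_const, Finset.card_univ, ← Nat.cast_smul_eq_nsmul ℂ, inv_smul_smul₀ hcard]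

theorem isIdempotentElem_charProj : IsIdempotentElem (charProj χ S) :=
  charProj_mul_of_map_mul_eq map_mul_charProj

theorem charProj_mul_charProj_of_ne {χ' : H →* ℂ} (h : χ ≠ χ') :
    charProj χ S * charProj χ' S = 0 := by
  obtain ⟨x, hx⟩ := DFunLike.ne_iff.1 h
  have hmul : χ x • (charProj χ S * charProj χ' S) = χ' x • (charProj χ S * charProj χ' S) := by
    rw [← Matrix.smul_mul, ← charProj_mul_map, mul_assoc, map_mul_charProj, Matrix.mul_smul]
  rw [← sub_eq_zero, ← sub_smul] at hmul
  exact (smul_eq_zero.1 hmul).resolve_left (sub_ne_zero.2 hx)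

theorem charProj_conjTranspose_mul {M : Matrix (Fin n) (Fin n) ℂ}
    (hM : ∀ h, (S h)ᴴ * M * S h = M) : (charProj χ S)ᴴ * M = M * charProj χ S := by
  have hadj (h : H) : (S h)ᴴ * M = M * S h⁻¹ := by
    conv_rhs => rw [← hM h, mul_assoc, map_mul_map_inv, mul_one]
  rw [charProj, conjTranspose_smul, conjTranspose_sum, Matrix.smul_mul, Matrix.mul_smul,
    Finset.sum_mul, Finset.mul_sum, star_inv₀, star_natCast]
  congr 1
  refine Fintype.sum_equiv (Equiv.inv H) _ _ fun h => ?_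
  rw [conjTranspose_smul, star_apply_inv, Matrix.smul_mul, hadj, Equiv.inv_apply, inv_inv,
    Matrix.mul_smul]

theorem sum_charProj {Z : Type*} [AddCommGroup Z] [Finite Z] [Fintype (Multiplicative Z)]
    (S : Multiplicative Z →* Matrix (Fin n) (Fin n) ℂ) :
    ∑ l : AddChar Z ℂ, charProj l.toMonoidHom S = 1 := by
  classical
  have horth (z : Multiplicative Z) : ∑ l : AddChar Z ℂ, l.toMonoidHom z⁻¹ • S z =
      if z = 1 then (Fintype.card (Multiplicative Z) : ℂ) • 1 else 0 := by
    have := Fintype.ofFinite Z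
    rw [← Finset.sum_smul]
    simp only [AddChar.toMonoidHom_apply, AddChar.sum_apply_eq_ite]
    split_ifs with h₁ h₂ h₂
    · rw [h₂, map_one, Fintype.card_congr Multiplicative.ofAdd]
    · simp_all
    · simp_all
    · rw [zero_smul]
  have hcard : (Fintype.card (Multiplicative Z) : ℂ) ≠ 0 := Nat.cast_ne_zero.2 Fintype.card_ne_zero
  simp only [charProj]
  rw [← Finset.smul_sum, Finset.sum_comm, Finset.sum_congr rfl fun z _ => horth z,
    Finset.sum_ite_eq' Finset.univ, if_pos (Finset.mem_univ _), inv_smul_smul₀ hcard]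

theorem exists_mul_charProj_ne_zero {T : Type*} [CommGroup T] [Fintype T]
    (S : T →* Matrix (Fin n) (Fin n) ℂ) {X : Matrix (Fin n) (Fin n) ℂ} (hX : X ≠ 0) :
    ∃ χ : T →* ℂ, X * charProj χ S ≠ 0 := by
  by_contra! h
  let _ : Fintype (Multiplicative (Additive T)) := ‹Fintype T›
  refine hX ?_
  rw [← mul_one X, ← sum_charProj (Z := Additive T) S, Finset.mul_sum]
  exact Finset.sum_eq_zero fun l _ => h l.toMonoidHom

end CharProj

section FieldSums

open Finset Unipotent

variable {k : ℕ} {F : Type} [Field F] [Fintype F] [ExpChar F 2] [DecidableEq F]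

theorem sum_add_frob_eq_zero {M : Type*} [AddCommMonoid M] (f : F → M) :
    ∑ b with b + frob k b = 0, f b = ∑ c : baseField k F, f c :=
  Finset.sum_subtype _ (fun b => by
    rw [Finset.mem_filter_univ, CharTwo.add_eq_zero, mem_baseField, eq_comm]) f

theorem sum_add_frob_eq {M : Type*} [AddCommMonoid M] {c : F} (hc : frob k c = c) (hc0 : c ≠ 0)
    (f : F → M) : ∑ b with b + frob k b = c, f b = ∑ b with b + frob k b = 1, f (c * b) := by
  refine (Finset.sum_equiv (Equiv.mulLeft₀ c hc0) (fun b => ?_) fun b _ => rfl).symm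
  rw [Finset.mem_filter_univ, Finset.mem_filter_univ, Equiv.mulLeft₀_apply, map_mul, hc, ← mul_add,
    mul_eq_left₀ hc0]

theorem sum_unipotent {M : Type*} [AddCommMonoid M] (f : F → F → M) :
    ∑ u : Unipotent k F, f u.a u.b = ∑ a, ∑ b with b + frob k b = a * frob k a, f a b := by
  rw [Finset.sum_sigma']
  exact Finset.sum_bij' (fun u _ => ⟨u.a, u.b⟩)
    (fun p hp => ⟨p.1, p.2, (Finset.mem_filter_univ p.2).1 (Finset.mem_sigma.1 hp).2⟩)
    (fun u _ => by simpa using u.rel) (fun _ _ => Finset.mem_univ _) (fun _ _ => rfl)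
    (fun _ _ => rfl) fun _ _ => rfl

variable [HasCardSq k F]

theorem card_add_frob_eq {c : F} (hc : frob k c = c) : #{b | b + frob k b = c} = 2 ^ k := by
  have hfibre : #{b | traceHom k b = c} = #{b : F | traceHom k b = 0} :=
    AddMonoidHom.card_fiber_eq_of_mem_range (traceHom k) (exists_add_frob_eq k hc)
      ⟨0, map_zero _⟩
  have hzero := sum_add_frob_eq_zero (k := k) fun _ : F => 1
  simp only [← Finset.card_eq_sum_ones, Finset.card_univ, card_baseField] at hzero
  exact hfibre.trans hzero

omit [DecidableEq F] in
theorem sum_unipotent_a (f : F → ℂ) : ∑ u : Unipotent k F, f u.a = 2 ^ k * ∑ a, f a := by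
  classical
  rw [sum_unipotent fun a _ => f a, Finset.mul_sum]
  refine Finset.sum_congr rfl fun a _ => ?_
  rw [Finset.sum_const, card_add_frob_eq (frob_mul_frob_self k a), nsmul_eq_mul]
  norm_cast

omit [DecidableEq F] in
theorem card_unipotent : (Fintype.card (Unipotent k F) : ℂ) = (2 ^ k) ^ 3 := by
  have h := sum_unipotent_a (k := k) (F := F) fun _ => 1
  rw [Finset.sum_const, Finset.sum_const, Finset.card_univ, Finset.card_univ,
    HasCardSq.card_eq (k := k) (F := F), nsmul_one, nsmul_one] at h
  rw [h]
  push_cast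
  ring

variable {A : MulChar F ℂ} (hA : ∀ c : F, frob k c = c → c ≠ 0 → A c = 1)
include hA

omit [DecidableEq F] in
theorem sum_mulChar_baseField : ∑ c : baseField k F, A c = 2 ^ k - 1 := by
  classical
  have hA' (c : baseField k F) : A c = 1 - if c = 0 then 1 else 0 := by
    split_ifs with hc
    · rw [hc, ZeroMemClass.coe_zero, MulChar.map_zero, sub_self]
    · rw [hA c c.2 (by simpa using hc), sub_zero]
  simp [hA', card_baseField]

theorem sum_mul_mulChar_unipotent {f : F → ℂ} (hf : f 0 = 1) :
    ∑ u : Unipotent k F, f u.a * A u.b =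
      2 ^ k - 1 + (∑ a, f a - 1) * ∑ b with b + frob k b = 1, A b := by
  have hterm : ∀ a ∈ Finset.univ.erase (0 : F), ∑ b with b + frob k b = a * frob k a, f a * A b =
      f a * ∑ b with b + frob k b = 1, A b := by
    intro a ha
    have hnorm : a * frob k a ≠ 0 :=
      mul_ne_zero (Finset.ne_of_mem_erase ha) (by simpa using Finset.ne_of_mem_erase ha)
    have hfrob := frob_mul_frob_self k a
    rw [sum_add_frob_eq hfrob hnorm, Finset.mul_sum]
    refine Finset.sum_congr rfl fun b _ => ?_
    rw [map_mul A, hA _ hfrob hnorm, one_mul]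
  rw [sum_unipotent fun a b => f a * A b, ← Finset.add_sum_erase _ _ (Finset.mem_univ 0),
    Finset.sum_congr rfl hterm, ← Finset.sum_mul, Finset.sum_erase_eq_sub (Finset.mem_univ 0)]
  simp [sum_add_frob_eq_zero, sum_mulChar_baseField hA, hf]

theorem sum_mulChar_add_frob_eq_one_of_ne_one (hA1 : A ≠ 1) :
    ∑ b with b + frob k b = 1, A b = -1 := by
  have hq : (2 : ℂ) ^ k - 1 ≠ 0 := by
    rw [sub_ne_zero]
    exact_mod_cast (Nat.one_lt_two_pow (exponent_ne_zero k F)).ne'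
  let tr (b : F) : baseField k F := ⟨b + frob k b, frob_add_frob_self k b⟩
  have htr (b : F) (c : baseField k F) : tr b = c ↔ b + frob k b = c := Subtype.ext_iff
  have hfibre : ∀ c ∈ Finset.univ.erase (0 : baseField k F),
      ∑ b with b + frob k b = (c : F), A b = ∑ b with b + frob k b = 1, A b := by
    intro c hc
    have hc0 : (c : F) ≠ 0 := by simpa using Finset.ne_of_mem_erase hc
    rw [sum_add_frob_eq c.2 hc0]
    exact Finset.sum_congr rfl fun b _ => by rw [map_mul A, hA _ c.2 hc0, one_mul]
  have hsum := Finset.sum_fiberwise Finset.univ tr A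
  simp only [htr] at hsum
  rw [MulChar.sum_eq_zero_of_ne_one hA1, ← Finset.add_sum_erase _ _ (Finset.mem_univ 0),
    Finset.sum_congr rfl hfibre, ZeroMemClass.coe_zero, sum_add_frob_eq_zero,
    sum_mulChar_baseField hA, Finset.sum_const, Finset.card_erase_of_mem (Finset.mem_univ _),
    Finset.card_univ, card_baseField, nsmul_eq_mul, Nat.cast_sub Nat.one_le_two_pow] at hsum
  push_cast at hsum
  exact mul_left_cancel₀ hq (by linear_combination hsum)

omit hA in
theorem sum_one_mulChar_add_frob_eq_one :
    ∑ b with b + frob k b = 1, (1 : MulChar F ℂ) b = 2 ^ k := by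
  have hone : ∀ b ∈ Finset.univ.filter (fun b : F => b + frob k b = 1),
      (1 : MulChar F ℂ) b = 1 := by
    intro b hb
    rw [Finset.mem_filter_univ] at hb
    refine MulChar.one_apply (isUnit_iff_ne_zero.2 ?_)
    rintro rfl
    simp at hb
  rw [Finset.sum_congr rfl hone, Finset.sum_const, card_add_frob_eq (map_one _), nsmul_one]
  norm_cast

end FieldSums

section HeckeAlgebra

open Unipotent

variable {k : ℕ} {F : Type} [Field F] [Fintype F] [ExpChar F 2] [HasCardSq k F] {n : ℕ}

omit [ExpChar F 2] in
theorem card_units [DecidableEq F] : (Fintype.card Fˣ : ℂ) = (2 ^ k) ^ 2 - 1 := by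
  rw [Fintype.card_units, HasCardSq.card_eq (k := k), Nat.cast_sub (Nat.one_le_pow _ _ (by simp))]
  push_cast
  rfl

theorem card_SU :
    (Fintype.card (SU k F) : ℂ) = (2 ^ k) ^ 3 * ((2 ^ k) ^ 2 - 1) * (1 + (2 ^ k) ^ 3) := by
  classical
  have h := sum_bruhat (k := k) (F := F) fun _ => (1 : ℂ)
  simp only [Finset.sum_const, Finset.card_univ, nsmul_eq_mul, mul_one, card_unipotent,
    card_units (k := k)] at h
  rw [h]
  ring

/-- The restriction of a multiplicative character to the unit group, with values in `ℂ`. -/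
def torusChar (A : MulChar F ℂ) : Fˣ →* ℂ := A.toMonoidHom.comp (Units.coeHom F)

omit [Fintype F] [ExpChar F 2] in
theorem torusChar_apply (A : MulChar F ℂ) (t : Fˣ) : torusChar A t = A t := rfl

omit [Fintype F] [ExpChar F 2] in
theorem mulChar_apply_unit_ne_zero (A : MulChar F ℂ) (t : Fˣ) : A t ≠ 0 := (t.isUnit.map A).ne_zero

variable (A : MulChar F ℂ) (R : SU k F →* Matrix (Fin n) (Fin n) ℂ)

/-- The projection onto the vectors fixed by the unipotent radical. -/
def unipotentProj : Matrix (Fin n) (Fin n) ℂ := charProj 1 (R.comp upper)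

/-- `torusAct` as an automorphism of the unipotent radical. -/
def torusActEquiv (t : Fˣ) : Unipotent k F ≃* Unipotent k F where
  toFun := torusAct t
  invFun := torusAct t⁻¹
  left_inv u := by
    have ht : frob k (t : F) ≠ 0 := by simp
    ext <;> simp <;> field_simp
  right_inv u := by
    have ht : frob k (t : F) ≠ 0 := by simp
    ext <;> simp <;> field_simp
  map_mul' u v := by
    have ht : frob k (t : F) ≠ 0 := by simp
    ext <;> simp <;> field_simp

variable {R} in
theorem map_torus_mul_unipotentProj (t : Fˣ) :
    R (torus t) * unipotentProj R = unipotentProj R * R (torus t) :=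
  mul_charProj_eq (torusActEquiv t) (fun _ => rfl) fun u => by
    rw [MonoidHom.comp_apply, ← map_mul, torus_mul_upper, map_mul]
    rfl

variable {R} in
theorem isIdempotentElem_unipotentProj : IsIdempotentElem (unipotentProj R) :=
  isIdempotentElem_charProj

variable [DecidableEq F]

/-- The projection onto the `A`-isotypic component of the torus. -/
def torusProj : Matrix (Fin n) (Fin n) ℂ := charProj (torusChar A) (R.comp torus)

/-- The projection onto the isotypic component of the character of the Borel subgroup inflated
from the character `A` of the torus. -/
def borelProj : Matrix (Fin n) (Fin n) ℂ := unipotentProj R * torusProj A R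

variable {A R}

theorem torusProj_mul_unipotentProj :
    torusProj A R * unipotentProj R = unipotentProj R * torusProj A R :=
  (mul_charProj_eq (MulEquiv.refl Fˣ) (fun _ => rfl) fun t =>
    (map_torus_mul_unipotentProj t).symm).symm

theorem isIdempotentElem_borelProj : IsIdempotentElem (borelProj A R) :=
  isIdempotentElem_charProj.mul_of_commute torusProj_mul_unipotentProj.symm
    isIdempotentElem_charProj

theorem torusProj_mul_borelProj : torusProj A R * borelProj A R = borelProj A R := by
  rw [borelProj, ← mul_assoc, torusProj_mul_unipotentProj, mul_assoc,
    show torusProj A R * torusProj A R = torusProj A R from isIdempotentElem_charProj]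

theorem borelProj_mul_upper (u : Unipotent k F) : borelProj A R * R (upper u) = borelProj A R := by
  have h : unipotentProj R * R (upper u) = (1 : ℂ) • unipotentProj R :=
    charProj_mul_map (χ := 1) (S := R.comp upper) u
  rw [borelProj, ← torusProj_mul_unipotentProj, mul_assoc, h, one_smul]

theorem upper_mul_borelProj (u : Unipotent k F) : R (upper u) * borelProj A R = borelProj A R := by
  have h : R (upper u) * unipotentProj R = (1 : ℂ) • unipotentProj R :=
    map_mul_charProj (χ := 1) (S := R.comp upper) u
  rw [borelProj, ← mul_assoc, h, one_smul]

theorem borelProj_mul_torus (t : Fˣ) : borelProj A R * R (torus t) = A t • borelProj A R := by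
  have h : torusProj A R * R (torus t) = A t • torusProj A R :=
    charProj_mul_map (χ := torusChar A) (S := R.comp torus) t
  rw [borelProj, mul_assoc, h, Matrix.mul_smul]

theorem torus_mul_borelProj (t : Fˣ) : R (torus t) * borelProj A R = A t • borelProj A R := by
  have h : R (torus t) * torusProj A R = A t • torusProj A R :=
    map_mul_charProj (χ := torusChar A) (S := R.comp torus) t
  rw [borelProj, ← mul_assoc, map_torus_mul_unipotentProj, mul_assoc, h, Matrix.mul_smul]

theorem exists_borelProj_ne_zero (hR : unipotentProj R ≠ 0) :
    ∃ A : MulChar F ℂ, borelProj A R ≠ 0 := by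
  obtain ⟨χ, hχ⟩ := exists_mul_charProj_ne_zero (R.comp torus) hR
  have hχ_eq : torusChar (MulChar.ofUnitHom χ.toHomUnits) = χ := by
    ext t
    exact MulChar.ofUnitHom_coe χ.toHomUnits t
  exact ⟨MulChar.ofUnitHom χ.toHomUnits, by rwa [borelProj, torusProj, hχ_eq]⟩

theorem borelProj_mul_borel (u : Unipotent k F) (t : Fˣ) :
    borelProj A R * R (upper u * torus t) = A t • borelProj A R := by
  rw [map_mul, ← mul_assoc, borelProj_mul_upper, borelProj_mul_torus]

theorem borel_inv_mul_borelProj (u : Unipotent k F) (t : Fˣ) :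
    R (upper u * torus t)⁻¹ * borelProj A R = (A t)⁻¹ • borelProj A R := by
  rw [_root_.mul_inv_rev, ← map_inv upper, ← map_inv torus, map_mul, mul_assoc,
    upper_mul_borelProj, torus_mul_borelProj, ← torusChar_apply, ← torusChar_apply,
    eq_inv_of_mul_eq_one_right (apply_mul_apply_inv (torusChar A) t)]

theorem borelProj_mul_conj_borel_mul (u : Unipotent k F) (t : Fˣ) (X : Matrix (Fin n) (Fin n) ℂ) :
    borelProj A R * (R (upper u * torus t) * X * R (upper u * torus t)⁻¹) * borelProj A R =
      borelProj A R * X * borelProj A R := by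
  calc _ = borelProj A R * R (upper u * torus t) * X *
        (R (upper u * torus t)⁻¹ * borelProj A R) := by simp only [mul_assoc]
    _ = _ := by
      rw [borelProj_mul_borel, borel_inv_mul_borelProj, Matrix.smul_mul, Matrix.smul_mul,
        Matrix.mul_smul, smul_smul, mul_inv_cancel₀ (mulChar_apply_unit_ne_zero A t), one_smul]

theorem borelProj_mul_borel_mul_borelProj (u : Unipotent k F) (t : Fˣ) :
    borelProj A R * R (upper u * torus t) * borelProj A R = A t • borelProj A R := by
  rw [borelProj_mul_borel, Matrix.smul_mul, isIdempotentElem_borelProj.eq]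

theorem borelProj_mul_big_cell_mul_borelProj (u : Unipotent k F) (t : Fˣ) (v : Unipotent k F) :
    borelProj A R * R (upper u * torus t * weyl * upper v) * borelProj A R =
      A t • (borelProj A R * R weyl * borelProj A R) := by
  rw [map_mul, map_mul _ _ weyl, ← mul_assoc, ← mul_assoc, borelProj_mul_borel, mul_assoc,
    upper_mul_borelProj, Matrix.smul_mul, Matrix.smul_mul]

theorem exists_borelProj_mul_mul_borelProj (g : SU k F) : ∃ a : ℂ,
    borelProj A R * R g * borelProj A R = a • borelProj A R ∨
      borelProj A R * R g * borelProj A R = a • (borelProj A R * R weyl * borelProj A R) := by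
  obtain ⟨⟨u, t⟩ | ⟨u, t, v⟩, rfl⟩ := bruhatMap_bijective.2 g
  · exact ⟨_, .inl (borelProj_mul_borel_mul_borelProj u t)⟩
  · exact ⟨_, .inr (borelProj_mul_big_cell_mul_borelProj u t v)⟩

/-- The representation `R` contains the character of the Borel subgroup attached to `A` exactly
once, and the Hecke operator of the Weyl element acts on it by `c`. -/
structure HasHeckeEigenvalue (A : MulChar F ℂ) (R : SU k F →* Matrix (Fin n) (Fin n) ℂ) (c : ℂ) :
    Prop where
  trace_eq_one : (borelProj A R).trace = 1
  mul_weyl_mul : borelProj A R * R weyl * borelProj A R = c • borelProj A R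

theorem IsIrred.exists_hasHeckeEigenvalue (hR : IsIrred R) (h0 : borelProj A R ≠ 0) :
    ∃ c, HasHeckeEigenvalue A R c := by
  set e := borelProj A R with he_def
  have he : IsIdempotentElem e := isIdempotentElem_borelProj
  have hleft : e * (e * R weyl * e) = e * R weyl * e := by simp only [← mul_assoc, he.eq]
  have hright : e * R weyl * e * e = e * R weyl * e := by rw [mul_assoc, he.eq]
  have hscalar := hR.exists_mul_mul_eq_smul he h0 fun g h => by
    obtain ⟨a, ha | ha⟩ := exists_borelProj_mul_mul_borelProj (A := A) (R := R) g <;>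
    obtain ⟨b, hb | hb⟩ := exists_borelProj_mul_mul_borelProj (A := A) (R := R) h <;>
    simp only [← he_def] at ha hb <;>
    rw [ha, hb] <;>
    simp only [Matrix.smul_mul, Matrix.mul_smul, he.eq, hleft, hright, smul_smul, mul_comm a b]
  obtain ⟨c, hc⟩ := hscalar weyl
  exact ⟨c, hR.trace_eq_one_of_mul_mul_eq_smul he h0 hscalar, hc⟩

variable {c : ℂ}

theorem HasHeckeEigenvalue.eq_of_smul_eq (h : HasHeckeEigenvalue A R c) {a b : ℂ}
    (hab : a • borelProj A R = b • borelProj A R) : a = b := by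
  simpa [h.trace_eq_one] using congrArg Matrix.trace hab

theorem HasHeckeEigenvalue.mul_weyl_mul_weyl_mul (h : HasHeckeEigenvalue A R c) :
    borelProj A R * R weyl * borelProj A R * R weyl * borelProj A R = c ^ 2 • borelProj A R := by
  rw [h.mul_weyl_mul, Matrix.smul_mul, Matrix.smul_mul, h.mul_weyl_mul, smul_smul, sq]

theorem HasHeckeEigenvalue.mul_conj_big_cell_mul (h : HasHeckeEigenvalue A R c)
    (u : Unipotent k F) (t : Fˣ) (v : Unipotent k F) :
    borelProj A R * (R (upper u * torus t * weyl * upper v) * borelProj A R *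
      R (upper u * torus t * weyl * upper v)⁻¹) * borelProj A R = c ^ 2 • borelProj A R := by
  have hsplit : R (upper u * torus t * weyl * upper v) * borelProj A R *
      R (upper u * torus t * weyl * upper v)⁻¹ = R (upper u * torus t) *
        (R weyl * borelProj A R * R weyl) * R (upper u * torus t)⁻¹ := by
    rw [mul_assoc _ weyl, _root_.mul_inv_rev, _root_.mul_inv_rev, ← map_inv upper, weyl_inv]
    calc _ = R (upper u * torus t) * (R weyl * (R (upper v) * borelProj A R * R (upper v⁻¹)) *
          R weyl) * R (upper u * torus t)⁻¹ := by simp only [map_mul, mul_assoc]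
      _ = _ := by rw [upper_mul_borelProj, borelProj_mul_upper]
  rw [hsplit, borelProj_mul_conj_borel_mul, ← h.mul_weyl_mul_weyl_mul]
  simp only [mul_assoc]

theorem HasHeckeEigenvalue.degree_mul (h : HasHeckeEigenvalue A R c) (hR : IsIrred R) :
    (n : ℂ) * (1 + (2 ^ k) ^ 3 * c ^ 2) = 1 + (2 ^ k) ^ 3 := by
  set e := borelProj A R with he_def
  have hsum : e * (∑ g, R g * e * R g⁻¹) * e =
      ((2 ^ k) ^ 3 * ((2 ^ k) ^ 2 - 1) * (1 + (2 ^ k) ^ 3 * c ^ 2)) • e := by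
    rw [sum_bruhat]
    simp only [mul_add, add_mul, Finset.mul_sum, Finset.sum_mul, he_def,
      borelProj_mul_conj_borel_mul, h.mul_conj_big_cell_mul, isIdempotentElem_borelProj.eq,
      Finset.sum_const, Finset.card_univ, ← Nat.cast_smul_eq_nsmul ℂ, smul_smul, card_unipotent,
      card_units (k := k), ← add_smul]
    congr 1
    ring
  have hn : (n : ℂ) ≠ 0 := Nat.cast_ne_zero.2 hR.pos.ne'
  have hcard : ((2 : ℂ) ^ k) ^ 3 * ((2 ^ k) ^ 2 - 1) ≠ 0 := by
    rw [← card_units (k := k) (F := F), ← card_unipotent (k := k) (F := F)]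
    exact mul_ne_zero (Nat.cast_ne_zero.2 Fintype.card_ne_zero)
      (Nat.cast_ne_zero.2 Fintype.card_ne_zero)
  rw [hR.sum_mul_mul_inv, h.trace_eq_one, Matrix.mul_smul, mul_one, mul_one, Matrix.smul_mul,
    he_def, isIdempotentElem_borelProj.eq, card_SU] at hsum
  have heq := h.eq_of_smul_eq hsum
  rw [div_eq_iff hn] at heq
  exact mul_left_cancel₀ hcard (by linear_combination -heq)

theorem HasHeckeEigenvalue.apply_invConj (h : HasHeckeEigenvalue A R c) (hc : c ≠ 0) (t : Fˣ) :
    A (invConj k t) = A t := by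
  have hswap : A t • (borelProj A R * R weyl * borelProj A R) =
      A (invConj k t) • (borelProj A R * R weyl * borelProj A R) := by
    rw [← Matrix.mul_smul, ← torus_mul_borelProj, ← mul_assoc, mul_assoc (borelProj A R),
      ← map_mul, weyl_mul_torus, map_mul, ← mul_assoc, borelProj_mul_torus, Matrix.smul_mul,
      Matrix.smul_mul]
  rw [h.mul_weyl_mul, smul_smul, smul_smul] at hswap
  exact (mul_right_cancel₀ hc (h.eq_of_smul_eq hswap)).symm

/-- `invConj` as an automorphism of the torus. -/
def invConjEquiv (k : ℕ) (F : Type) [Field F] [Fintype F] [ExpChar F 2] [HasCardSq k F] :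
    Fˣ ≃* Fˣ where
  toFun := invConj k
  invFun := invConj k
  left_inv := invConj_invConj
  right_inv := invConj_invConj
  map_mul' s t := by
    ext
    simp [mul_comm]

theorem weyl_mul_torusProj (hA : ∀ t : Fˣ, A (invConj k t) = A t) :
    R weyl * torusProj A R = torusProj A R * R weyl :=
  mul_charProj_eq (invConjEquiv k F) hA fun t => by
    rw [MonoidHom.comp_apply, ← map_mul, weyl_mul_torus, map_mul]
    rfl

omit [DecidableEq F] in
theorem apply_eq_one_of_apply_invConj (hA : ∀ t : Fˣ, A (invConj k t) = A t) (c : F)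
    (hc : frob k c = c) (hc0 : c ≠ 0) : A c = 1 := by
  obtain ⟨x, rfl⟩ := exists_mul_frob_eq k hc
  have hx : x ≠ 0 := left_ne_zero_of_mul hc0
  have hsymm := hA (Units.mk0 x hx)
  rw [coe_invConj, Units.val_mk0] at hsymm
  rw [map_mul, ← hsymm, ← map_mul, inv_mul_cancel₀ (by simpa using hx), map_one]

theorem HasHeckeEigenvalue.mul_weyl_mul_upper_mul_weyl_mul
    [DecidableEq (Unipotent k F)] (h : HasHeckeEigenvalue A R c)
    (hA : ∀ t : Fˣ, A (invConj k t) = A t) (u : Unipotent k F) :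
    borelProj A R * (R weyl * R (upper u) * R weyl) * borelProj A R =
      ((if u = 1 then 1 else 0) + c * A u.b) • borelProj A R := by
  rw [← map_mul, ← map_mul]
  split_ifs with hu
  · rw [hu, map_one, mul_one, weyl_mul_weyl, map_one, mul_one, isIdempotentElem_borelProj.eq]
    simp [MulChar.map_zero]
  · rw [weyl_mul_upper_mul_weyl u hu, borelProj_mul_big_cell_mul_borelProj, hA, h.mul_weyl_mul,
      smul_smul, zero_add, mul_comm]
    rfl

theorem HasHeckeEigenvalue.mul_weyl_mul_charProj_mul_weyl_mul (h : HasHeckeEigenvalue A R c)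
    (hA : ∀ t : Fˣ, A (invConj k t) = A t) (χ : Unipotent k F →* ℂ) :
    borelProj A R * (R weyl * charProj χ (R.comp upper) * R weyl) * borelProj A R =
      (((2 ^ k) ^ 3)⁻¹ * (1 + c * ∑ u : Unipotent k F, χ u⁻¹ * A u.b)) • borelProj A R := by
  classical
  rw [charProj, card_unipotent]
  simp only [Matrix.mul_smul, Matrix.smul_mul, Finset.mul_sum, Finset.sum_mul,
    MonoidHom.comp_apply, h.mul_weyl_mul_upper_mul_weyl_mul hA, smul_smul]
  rw [← Finset.sum_smul, smul_smul, ← Finset.mul_sum]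
  simp only [mul_add, Finset.sum_add_distrib, mul_ite, mul_one, mul_zero, Finset.sum_ite_eq',
    Finset.mem_univ, if_true, inv_one, map_one, mul_left_comm, Finset.mul_sum]

theorem HasHeckeEigenvalue.quadratic (h : HasHeckeEigenvalue A R c)
    (hA : ∀ t : Fˣ, A (invConj k t) = A t) :
    (2 ^ k) ^ 3 * c ^ 2 = 1 + c * ∑ u : Unipotent k F, A u.b := by
  have hsq : borelProj A R * (R weyl * unipotentProj R * R weyl) * borelProj A R =
      c ^ 2 • borelProj A R := by
    calc _ = borelProj A R * R weyl * unipotentProj R * R weyl *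
          (torusProj A R * borelProj A R) := by simp only [mul_assoc, torusProj_mul_borelProj]
      _ = borelProj A R * R weyl * unipotentProj R * (R weyl * torusProj A R) *
          borelProj A R := by simp only [mul_assoc]
      _ = borelProj A R * R weyl * borelProj A R * R weyl * borelProj A R := by
        rw [weyl_mul_torusProj hA]
        simp only [borelProj, mul_assoc]
      _ = _ := h.mul_weyl_mul_weyl_mul
  rw [unipotentProj, h.mul_weyl_mul_charProj_mul_weyl_mul hA] at hsq
  simp only [MonoidHom.one_apply, one_mul] at hsq
  rw [← h.eq_of_smul_eq hsq, mul_inv_cancel_left₀ (by simp)]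

theorem HasHeckeEigenvalue.eq_or_eq_of_ne_one (h : HasHeckeEigenvalue A R c)
    (hA : ∀ t : Fˣ, A (invConj k t) = A t) (hA1 : A ≠ 1) :
    c = ((2 ^ k) ^ 2)⁻¹ ∨ c = -(2 ^ k)⁻¹ := by
  have hbase := apply_eq_one_of_apply_invConj hA
  have hsum := sum_mul_mulChar_unipotent (k := k) hbase (f := fun _ => 1) rfl
  rw [sum_mulChar_add_frob_eq_one_of_ne_one hbase hA1] at hsum
  simp only [one_mul, Finset.sum_const, Finset.card_univ, HasCardSq.card_eq (k := k) (F := F),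
    nsmul_one, Nat.cast_pow, Nat.cast_ofNat] at hsum
  have hquad := h.quadratic hA
  rw [hsum] at hquad
  have hfactor : ((2 ^ k) ^ 2 * c - 1) * (2 ^ k * c + 1) = 0 := by linear_combination hquad
  refine (mul_eq_zero.1 hfactor).imp (fun h0 => ?_) fun h0 => ?_
  · exact eq_inv_of_mul_eq_one_right (sub_eq_zero.1 h0)
  · rw [← neg_eq_iff_eq_neg]
    exact eq_inv_of_mul_eq_one_right (by linear_combination -h0)

theorem HasHeckeEigenvalue.eq_or_eq_of_one (h : HasHeckeEigenvalue 1 R c) :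
    c = 1 ∨ c = -((2 ^ k) ^ 3)⁻¹ := by
  have hone (t : Fˣ) : (1 : MulChar F ℂ) t = 1 := MulChar.one_apply t.isUnit
  have hsymm (t : Fˣ) : (1 : MulChar F ℂ) (invConj k t) = (1 : MulChar F ℂ) t := by
    rw [hone, hone]
  have hsum := sum_mul_mulChar_unipotent (k := k) (apply_eq_one_of_apply_invConj hsymm)
    (f := fun _ => 1) rfl
  rw [sum_one_mulChar_add_frob_eq_one] at hsum
  simp only [one_mul, Finset.sum_const, Finset.card_univ, HasCardSq.card_eq (k := k) (F := F),
    nsmul_one, Nat.cast_pow, Nat.cast_ofNat] at hsum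
  have hquad := h.quadratic hsymm
  rw [hsum] at hquad
  have hfactor : (c - 1) * ((2 ^ k) ^ 3 * c + 1) = 0 := by linear_combination hquad
  refine (mul_eq_zero.1 hfactor).imp sub_eq_zero.1 fun h0 => ?_
  rw [← neg_eq_iff_eq_neg]
  exact eq_inv_of_mul_eq_one_right (by linear_combination -h0)

theorem HasHeckeEigenvalue.star_trace_map_eq (h : HasHeckeEigenvalue 1 R c) (hR : IsIrred R)
    (hc : starRingEnd ℂ c = c) (g : SU k F) :
    starRingEnd ℂ (R g).trace = (R g).trace := by
  have hreal (x : SU k F) : starRingEnd ℂ (borelProj 1 R * R x).trace =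
      (borelProj 1 R * R x).trace := by
    have htrace : (borelProj 1 R * R x).trace = (borelProj 1 R * R x * borelProj 1 R).trace := by
      rw [Matrix.trace_mul_comm (_ * _) (borelProj 1 R), ← mul_assoc,
        isIdempotentElem_borelProj.eq]
    rw [htrace]
    obtain ⟨⟨u, t⟩ | ⟨u, t, v⟩, rfl⟩ := bruhatMap_bijective.2 x
    · rw [bruhatMap, borelProj_mul_borel_mul_borelProj, Matrix.trace_smul, h.trace_eq_one,
        MulChar.one_apply t.isUnit, one_smul, map_one]
    · rw [bruhatMap, borelProj_mul_big_cell_mul_borelProj, h.mul_weyl_mul, Matrix.trace_smul,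
        Matrix.trace_smul, h.trace_eq_one, MulChar.one_apply t.isUnit, one_smul, smul_eq_mul,
        mul_one, hc]
  have hne : (borelProj 1 R).trace ≠ 0 := by rw [h.trace_eq_one]; exact one_ne_zero
  rw [hR.trace_map_eq_sum hne, h.trace_eq_one, map_mul, map_sum]
  simp only [hreal, mul_one, map_div₀, map_natCast]

theorem HasHeckeEigenvalue.degree_eq (h : HasHeckeEigenvalue A R ((2 ^ k) ^ 2)⁻¹)
    (hR : IsIrred R) : n + (2 ^ k) ^ 2 = (2 ^ k) ^ 3 + 2 ^ k := by
  have hq : ((2 : ℂ) ^ k + 1) ≠ 0 := by exact_mod_cast Nat.succ_ne_zero (2 ^ k)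
  have hdeg := h.degree_mul hR
  field_simp at hdeg
  have hcast : (n + (2 ^ k) ^ 2 : ℂ) = (2 ^ k) ^ 3 + 2 ^ k :=
    mul_right_cancel₀ hq (by linear_combination hdeg)
  exact_mod_cast hcast

theorem HasHeckeEigenvalue.ne_zero_of_even (h : HasHeckeEigenvalue A R c) (hR : IsIrred R)
    (hn : Even n) : c ≠ 0 := by
  rintro rfl
  have hcast : (n : ℂ) = 1 + (2 ^ k) ^ 3 := by linear_combination h.degree_mul hR
  have hodd : n = 1 + (2 ^ k) ^ 3 := by exact_mod_cast hcast
  rw [hodd, Nat.even_add, Nat.even_pow, Nat.even_pow] at hn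
  simp [exponent_ne_zero k F] at hn

theorem HasHeckeEigenvalue.eq_of_even (h : HasHeckeEigenvalue A R c) (hR : IsIrred R)
    (hn : Even n) (hreal : ¬∀ g, starRingEnd ℂ (R g).trace = (R g).trace) :
    A ≠ 1 ∧ c = ((2 ^ k) ^ 2)⁻¹ := by
  have hq : Even (2 ^ k) := Nat.even_pow.2 ⟨even_two, exponent_ne_zero k F⟩
  have hq1 : ((2 : ℂ) ^ k + 1) ≠ 0 := by exact_mod_cast Nat.succ_ne_zero (2 ^ k)
  have hq3 : (1 + ((2 : ℂ) ^ k) ^ 3) ≠ 0 := by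
    rw [add_comm]
    exact_mod_cast Nat.succ_ne_zero ((2 ^ k) ^ 3)
  have hdeg := h.degree_mul hR
  have hc := h.ne_zero_of_even hR hn
  have hA1 : A ≠ 1 := by
    rintro rfl
    rcases h.eq_or_eq_of_one with rfl | rfl
    · have hone : n = 1 := by
        have : (n : ℂ) = 1 := mul_right_cancel₀ hq3 (by linear_combination hdeg)
        exact_mod_cast this
      exact absurd hn (by rw [hone]; decide)
    · exact hreal (h.star_trace_map_eq hR (by simp [Complex.conj_ofNat]))
  refine ⟨hA1, (h.eq_or_eq_of_ne_one (h.apply_invConj hc) hA1).resolve_right ?_⟩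
  rintro rfl
  have hodd : n + 2 ^ k = (2 ^ k) ^ 2 + 1 := by
    field_simp at hdeg
    have : (n + 2 ^ k : ℂ) = (2 ^ k) ^ 2 + 1 :=
      mul_right_cancel₀ hq1 (by linear_combination hdeg)
    exact_mod_cast this
  have heven : Even (n + 2 ^ k) := hn.add hq
  rw [hodd, Nat.even_add, Nat.even_pow] at heven
  simp [hq] at heven

end HeckeAlgebra

section LinearCharacters

open Unipotent

variable {k : ℕ} {F : Type} [Field F] [Fintype F] [ExpChar F 2] [HasCardSq k F] {n : ℕ}

/-- The linear character `(a, b) ↦ ψ (x a)` of the unipotent group. -/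
def linChar (ψ : AddChar F ℂ) (x : F) : Unipotent k F →* ℂ where
  toFun u := ψ (x * u.a)
  map_one' := by simp
  map_mul' u v := by rw [mul_a, mul_add, AddChar.map_add_eq_mul]

@[simp] theorem linChar_apply (ψ : AddChar F ℂ) (x : F) (u : Unipotent k F) :
    linChar ψ x u = ψ (x * u.a) := rfl

theorem linChar_zero (ψ : AddChar F ℂ) : (linChar ψ 0 : Unipotent k F →* ℂ) = 1 := by
  ext u
  simp

theorem linChar_injective {ψ : AddChar F ℂ} (hψ : ψ ≠ 1) :
    Function.Injective (linChar ψ : F → Unipotent k F →* ℂ) := fun x y h => by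
  refine AddChar.to_mulShift_inj_of_isPrimitive (AddChar.IsPrimitive.of_ne_one hψ) ?_
  ext a
  obtain ⟨b, hb⟩ := exists_add_frob_eq k (frob_mul_frob_self k a)
  simpa using DFunLike.congr_fun h (⟨a, b, hb⟩ : Unipotent k F)

/-- The projection onto the `linChar ψ x`-isotypic component of the restriction of `R` to the
unipotent group. -/
def linProj (ψ : AddChar F ℂ) (R : SU k F →* Matrix (Fin n) (Fin n) ℂ) (x : F) :
    Matrix (Fin n) (Fin n) ℂ :=
  charProj (linChar ψ x) (R.comp upper)

variable (ψ : AddChar F ℂ) (R : SU k F →* Matrix (Fin n) (Fin n) ℂ)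

theorem linProj_zero : linProj ψ R 0 = unipotentProj R := by
  rw [linProj, linChar_zero, unipotentProj]

theorem isIdempotentElem_linProj (x : F) : IsIdempotentElem (linProj ψ R x) :=
  isIdempotentElem_charProj

theorem upper_mul_linProj (x : F) (u : Unipotent k F) :
    R (upper u) * linProj ψ R x = ψ (x * u.a) • linProj ψ R x :=
  map_mul_charProj (S := R.comp upper) u

theorem linProj_mul_upper (x : F) (u : Unipotent k F) :
    linProj ψ R x * R (upper u) = ψ (x * u.a) • linProj ψ R x :=
  charProj_mul_map (S := R.comp upper) u

theorem torus_mul_linProj (x : F) (t : Fˣ) :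
    R (torus t) * linProj ψ R (x * ((t : F) ^ 2 / frob k (t : F))) =
      linProj ψ R x * R (torus t) := by
  refine mul_charProj_eq (torusActEquiv t) (fun u => ?_) fun u => ?_
  · simp [torusActEquiv, mul_assoc]
  · rw [MonoidHom.comp_apply, ← map_mul, torus_mul_upper, map_mul]
    rfl

variable {ψ}

theorem linProj_mul_linProj_of_ne (hψ : ψ ≠ 1) {x y : F} (h : x ≠ y) :
    linProj ψ R x * linProj ψ R y = 0 :=
  charProj_mul_charProj_of_ne ((linChar_injective hψ).ne h)

end LinearCharacters

section CentralCharacters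

open Unipotent

/-- The characters of the centre of the unipotent group. -/
abbrev CentralChar (k : ℕ) (F : Type) [Field F] [ExpChar F 2] := AddChar (baseField k F) ℂ

variable {k : ℕ} {F : Type} [Field F] [Fintype F] [ExpChar F 2] [HasCardSq k F] {n : ℕ}

/-- The embedding of the centre into the unipotent group, as a homomorphism. -/
def centerHom : Multiplicative (baseField k F) →* Unipotent k F where
  toFun c := center c.toAdd
  map_one' := center_zero
  map_mul' c d := center_add c.toAdd d.toAdd

/-- The projection onto the isotypic component of the character `l` of the centre of the unipotent
group in the representation `R`. -/
def centralProj (R : SU k F →* Matrix (Fin n) (Fin n) ℂ) (l : CentralChar k F) :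
    Matrix (Fin n) (Fin n) ℂ :=
  charProj l.toMonoidHom (R.comp (upper.comp centerHom))

variable (R : SU k F →* Matrix (Fin n) (Fin n) ℂ)

theorem center_mul_centralProj (l : CentralChar k F) (c : baseField k F) :
    R (upper (center c)) * centralProj R l = l c • centralProj R l :=
  map_mul_charProj (S := R.comp (upper.comp centerHom)) (Multiplicative.ofAdd c)

theorem centralProj_mul_upper (l : CentralChar k F) (u : Unipotent k F) :
    centralProj R l * R (upper u) = R (upper u) * centralProj R l :=
  (mul_charProj_eq (MulEquiv.refl _) (fun _ => rfl) fun c => by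
    simp only [MonoidHom.comp_apply, MulEquiv.refl_apply, ← map_mul]
    exact congrArg (fun v => R (upper v)) (center_mul_comm c.toAdd u).symm).symm

theorem isIdempotentElem_centralProj (l : CentralChar k F) :
    IsIdempotentElem (centralProj R l) :=
  isIdempotentElem_charProj

theorem centralProj_mul_centralProj_of_ne {l m : CentralChar k F} (h : l ≠ m) :
    centralProj R l * centralProj R m = 0 :=
  charProj_mul_charProj_of_ne fun h' => h (AddChar.toMonoidHomEquiv.injective h')

theorem sum_centralProj : ∑ l : CentralChar k F, centralProj R l = 1 :=
  sum_charProj (R.comp (upper.comp centerHom))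

omit [Fintype F] [HasCardSq k F] in
theorem sum_unipotent_a_eq_zero [Finite F] [DecidableEq F] {M : Type*} [AddCommMonoid M]
    (f : Unipotent k F → M) : ∑ u with u.a = 0, f u = ∑ c : baseField k F, f (center c) := by
  refine (Finset.sum_bij (fun c _ => center c) ?_ ?_ ?_ fun _ _ => rfl).symm
  · exact fun c _ => (Finset.mem_filter_univ _).2 rfl
  · exact fun c _ d _ h => Subtype.ext (congrArg Unipotent.b h)
  · intro u hu
    rw [Finset.mem_filter_univ] at hu
    have hb : u.b ∈ baseField k F := by
      have hrel := u.rel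
      rw [hu, zero_mul, CharTwo.add_eq_zero] at hrel
      exact mem_baseField.2 hrel.symm
    exact ⟨⟨u.b, hb⟩, Finset.mem_univ _, Unipotent.ext hu.symm rfl⟩

variable {R} in
theorem centralProj_zero {ψ : AddChar F ℂ} (hψ : ψ ≠ 1) :
    centralProj R 0 = ∑ x, linProj ψ R x := by
  classical
  have horth (u : Unipotent k F) : ∑ x, linChar ψ x u⁻¹ • R (upper u) =
      if u.a = 0 then ((2 : ℂ) ^ k) ^ 2 • R (upper u) else 0 := by
    simp only [linChar_apply, inv_a, ← Finset.sum_smul, apply_ite (· • R (upper u)), zero_smul,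
      AddChar.sum_mulShift u.a (AddChar.IsPrimitive.of_ne_one hψ), HasCardSq.card_eq (k := k),
      Nat.cast_ite, Nat.cast_zero, Nat.cast_pow, Nat.cast_ofNat]
  have hq : (2 : ℂ) ^ k ≠ 0 := pow_ne_zero k two_ne_zero
  calc centralProj R 0 = ((2 : ℂ) ^ k)⁻¹ • ∑ c : baseField k F, R (upper (center c)) := by
        rw [centralProj, charProj, Fintype.card_congr Multiplicative.toAdd, card_baseField]
        push_cast
        congr 1
        refine Fintype.sum_equiv Multiplicative.toAdd _ _ fun c => ?_
        exact one_smul ℂ _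
    _ = ((2 : ℂ) ^ k)⁻¹ • ∑ u : Unipotent k F with u.a = 0, R (upper u) := by
        rw [sum_unipotent_a_eq_zero fun u : Unipotent k F => R (upper u)]
    _ = (((2 : ℂ) ^ k) ^ 3)⁻¹ • ∑ u : Unipotent k F, ∑ x, linChar ψ x u⁻¹ • R (upper u) := by
        rw [Finset.sum_congr rfl fun u _ => horth u, ← Finset.sum_filter,
          ← Finset.smul_sum (r := ((2 : ℂ) ^ k) ^ 2), smul_smul]
        congr 1
        field_simp
    _ = ∑ x, linProj ψ R x := by
        rw [Finset.sum_comm, Finset.smul_sum]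
        simp only [linProj, charProj, card_unipotent]
        rfl

end CentralCharacters

section FlipPairs

open Unipotent

variable {k : ℕ} {F : Type} [Field F] [Fintype F] [ExpChar F 2] [HasCardSq k F] {n : ℕ}

/-- Two elements `e`, `y` of the unipotent group that act on the `l`-isotypic component of the
centre as anticommuting operators, the first of them an involution. -/
structure IsFlipPair (l : CentralChar k F) (e y : Unipotent k F) : Prop where
  sq_eq : ∃ c, e * e = center c ∧ l c = 1
  mul_eq : ∃ d, e * y = y * e * center d ∧ l d = -1

theorem exists_ne_zero_apply_eq_one (hk : 2 ≤ k) (l : CentralChar k F) : ∃ c, c ≠ 0 ∧ l c = 1 := by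
  have hcard : ({1, -1} : Finset ℂ).card < (Finset.univ : Finset (baseField k F)).card := by
    rw [Finset.card_univ, card_baseField]
    exact Finset.card_le_two.trans_lt (lt_self_pow₀ one_lt_two hk)
  have hmaps (c : baseField k F) (_ : c ∈ Finset.univ) : l c ∈ ({1, -1} : Finset ℂ) := by
    simpa using mul_self_eq_one_iff.1 (addChar_mul_self l c)
  obtain ⟨c, -, d, -, hcd, h⟩ := Finset.exists_ne_map_eq_of_card_lt_of_maps_to hcard hmaps
  exact ⟨c + d, fun h0 => hcd (CharTwo.add_eq_zero.1 h0), by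
    rw [AddChar.map_add_eq_mul, h, addChar_mul_self]⟩

theorem exists_isFlipPair (hk : 2 ≤ k) {l : CentralChar k F} (hl : l ≠ 0) :
    ∃ e y, IsFlipPair l e y := by
  obtain ⟨c, hc0, hc⟩ := exists_ne_zero_apply_eq_one hk l
  obtain ⟨d, hd⟩ : ∃ d, l d ≠ 1 := DFunLike.ne_iff.1 hl
  obtain ⟨a, ha⟩ := exists_mul_frob_eq k (mem_baseField.1 c.2)
  have ha0 : a ≠ 0 := by
    rintro rfl
    exact hc0 (Subtype.ext (by simpa using ha.symm))
  obtain ⟨b, hb⟩ := exists_add_frob_eq k (frob_mul_frob_self k a)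
  obtain ⟨x, hx⟩ := exists_add_frob_eq k (mem_baseField.1 d.2)
  obtain ⟨b', hb'⟩ := exists_add_frob_eq k (frob_mul_frob_self k (frob k (x / a)))
  refine ⟨⟨a, b, hb⟩, ⟨frob k (x / a), b', hb'⟩, ⟨c, ?_, hc⟩, d, ?_, ?_⟩
  · ext <;> simp [CharTwo.add_self_eq_zero, ha]
  · ext
    · simp [add_comm]
    · have hsa : frob k a ≠ 0 := by simpa using ha0
      simp only [mul_a, mul_b, center_a, center_b, frob_frob, map_zero, mul_zero, add_zero, ← hx,
        map_div₀]
      field_simp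
      linear_combination (-frob k x) * CharTwo.two_eq_zero (R := F)
  · exact (mul_self_eq_one_iff.1 (addChar_mul_self l d)).resolve_left hd

/-- The projection onto the `1`-eigenspace of `e` in the `l`-isotypic component of the centre. -/
def posProj (R : SU k F →* Matrix (Fin n) (Fin n) ℂ) (l : CentralChar k F) (e : Unipotent k F) :
    Matrix (Fin n) (Fin n) ℂ :=
  (2 : ℂ)⁻¹ • ((1 + R (upper e)) * centralProj R l)

variable (R : SU k F →* Matrix (Fin n) (Fin n) ℂ) (l : CentralChar k F) (e : Unipotent k F)

theorem centralProj_mul_posProj : centralProj R l * posProj R l e = posProj R l e := by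
  rw [posProj, Matrix.mul_smul, ← mul_assoc, mul_add, mul_one, centralProj_mul_upper, add_mul,
    mul_assoc, (isIdempotentElem_centralProj R l).eq, add_mul, one_mul]

theorem posProj_mul_centralProj : posProj R l e * centralProj R l = posProj R l e := by
  rw [posProj, Matrix.smul_mul, mul_assoc, (isIdempotentElem_centralProj R l).eq]

namespace IsFlipPair

variable {l e} {y : Unipotent k F} (h : IsFlipPair l e y)
include h

theorem upper_mul_posProj : R (upper e) * posProj R l e = posProj R l e := by
  obtain ⟨c, hsq, hc⟩ := h.sq_eq
  rw [posProj, Matrix.mul_smul, ← mul_assoc, mul_add, mul_one, ← map_mul, ← map_mul, hsq, add_mul,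
    center_mul_centralProj, hc, one_smul, add_mul, one_mul, add_comm]

theorem isIdempotentElem_posProj : IsIdempotentElem (posProj R l e) := by
  rw [IsIdempotentElem]
  nth_rw 1 [posProj]
  rw [Matrix.smul_mul, mul_assoc, centralProj_mul_posProj, add_mul, one_mul,
    h.upper_mul_posProj, ← two_smul ℂ, inv_smul_smul₀ two_ne_zero]

theorem upper_mul_posProj_eq :
    R (upper y) * posProj R l e = (centralProj R l - posProj R l e) * R (upper y) := by
  obtain ⟨d, hcomm, hd⟩ := h.mul_eq
  have hanti : R (upper e) * R (upper y) * centralProj R l =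
      -(R (upper y) * R (upper e) * centralProj R l) := by
    rw [← map_mul, ← map_mul, hcomm, map_mul, map_mul, mul_assoc, center_mul_centralProj, hd,
      map_mul, map_mul, Matrix.mul_smul, neg_one_smul]
  rw [posProj, sub_mul, centralProj_mul_upper, Matrix.smul_mul, mul_assoc _ _ (R (upper y)),
    centralProj_mul_upper, add_mul 1 _ (R (upper y) * _), ← mul_assoc (R (upper e)), hanti,
    Matrix.mul_smul, add_mul, mul_add,
    one_mul, one_mul, ← mul_assoc (R (upper y))]
  module

theorem trace_centralProj : (centralProj R l).trace = 2 * (posProj R l e).trace := by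
  have hneg : centralProj R l - posProj R l e =
      R (upper y) * posProj R l e * R (upper y)⁻¹ := by
    rw [h.upper_mul_posProj_eq, mul_assoc, map_mul_map_inv, mul_one]
  have htrace := congrArg Matrix.trace hneg
  rw [Matrix.trace_sub, Matrix.trace_mul_comm, ← mul_assoc, map_inv_mul_map, one_mul] at htrace
  linear_combination htrace

theorem exists_trace_centralProj_eq : ∃ m : ℕ, (centralProj R l).trace = 2 * m :=
  ⟨_, by rw [h.trace_centralProj, trace_eq_finrank_range (h.isIdempotentElem_posProj R)]⟩

end IsFlipPair

end FlipPairs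

section Automorphisms

open Unipotent

variable {k : ℕ} {F : Type} [Field F] [ExpChar F 2]

variable (k F) in
/-- The group of elements `y` with `y ȳ = 1`, which is cyclic of order `q + 1`. -/
def normOne : Subgroup Fˣ := (MonoidHom.id Fˣ * Units.map (frob k : F →+* F)).ker

theorem mem_normOne {y : Fˣ} : y ∈ normOne k F ↔ (y : F) * frob k (y : F) = 1 := by
  simp [normOne, MonoidHom.mem_ker, Units.ext_iff]

theorem coe_mul_frob_coe (y : normOne k F) : (y.1 : F) * frob k (y.1 : F) = 1 := mem_normOne.1 y.2

theorem frob_coe (y : normOne k F) : frob k (y.1 : F) = (y.1 : F)⁻¹ :=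
  eq_inv_of_mul_eq_one_right (coe_mul_frob_coe y)

/-- The isometry `diag(1, y, 1)` for `y ȳ = 1`. -/
def diagMat : normOne k F →* Matrix (Fin 3) (Fin 3) F where
  toFun y := diagonal ![1, (y.1 : F), 1]
  map_one' := by
    ext i j
    fin_cases i <;> fin_cases j <;> simp
  map_mul' y z := by
    ext i j
    fin_cases i <;> fin_cases j <;> simp

theorem diagMat_apply (y : normOne k F) : diagMat y = !![1, 0, 0; 0, (y.1 : F), 0; 0, 0, 1] := by
  ext i j
  fin_cases i <;> fin_cases j <;> simp [diagMat]

theorem map_frob_diagMat_transpose_mul (y : normOne k F) :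
    ((diagMat y).map (frob k))ᵀ * Om F * diagMat y = Om F := by
  rw [diagMat_apply, Om_eq]
  ext i j
  fin_cases i <;> fin_cases j <;> simp [Matrix.mul_apply, Fin.sum_univ_three, frob_coe]

/-- Conjugation by `diag(1, y, 1)`, an automorphism of `SU₃(q)`. -/
def diagConj (y : normOne k F) : SU k F →* SU k F :=
  MonoidHom.mk'
    (fun g => ofMatrix (diagMat y⁻¹ * mat g * diagMat y)
      (by rw [det_mul_right_comm, ← map_mul, inv_mul_cancel, map_one, one_mul, det_mat])
      (by
        calc ((diagMat y⁻¹ * mat g * diagMat y).map (frob k))ᵀ * Om F *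
              (diagMat y⁻¹ * mat g * diagMat y)
            = ((diagMat y).map (frob k))ᵀ * (((mat g).map (frob k))ᵀ *
              (((diagMat y⁻¹).map (frob k))ᵀ * Om F * diagMat y⁻¹) * mat g) * diagMat y := by
              simp only [Matrix.map_mul, transpose_mul, Matrix.mul_assoc]
          _ = Om F := by
              simp only [map_frob_diagMat_transpose_mul, map_frob_mat_transpose_mul]))
    fun g h => mat_injective <| by
      change diagMat y⁻¹ * (mat g * mat h) * diagMat y =
        diagMat y⁻¹ * mat g * diagMat y * (diagMat y⁻¹ * mat h * diagMat y)
      have hy : diagMat y * diagMat y⁻¹ = 1 := by rw [← map_mul, mul_inv_cancel, map_one]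
      simp only [Matrix.mul_assoc]
      rw [← Matrix.mul_assoc (diagMat y), hy, Matrix.one_mul]

theorem mat_diagConj (y : normOne k F) (g : SU k F) :
    mat (diagConj y g) = diagMat y⁻¹ * mat g * diagMat y := rfl

theorem diagConj_mul (y z : normOne k F) (g : SU k F) :
    diagConj (y * z) g = diagConj y (diagConj z g) :=
  mat_injective <| by
    rw [mul_comm y z]
    simp only [mat_diagConj, _root_.mul_inv_rev, map_mul, mul_assoc]

variable (k F) in
/-- The field automorphism of `SU₃(q)`. -/
def fieldConj : SU k F →* SU k F :=
  MonoidHom.mk'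
    (fun g => ofMatrix ((mat g).map (frob k))
      (by rw [← RingHom.mapMatrix_apply, ← RingHom.map_det, det_mat, map_one])
      (by
        have h := congrArg (fun M => M.map (frob k)) (map_frob_mat_transpose_mul g)
        have hOm : (Om F).map (frob k) = Om F := by
          rw [Om_eq]
          ext i j
          fin_cases i <;> fin_cases j <;> simp
        rwa [Matrix.map_mul, Matrix.map_mul, hOm, ← transpose_map] at h))
    fun g h => mat_injective (Matrix.map_mul (f := frob k))

namespace Unipotent

/-- Conjugation by `diag(1, y, 1)`. -/
def scale (y : normOne k F) (u : Unipotent k F) : Unipotent k F where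
  a := u.a * y.1
  b := u.b
  rel := by
    rw [map_mul, u.rel]
    linear_combination (-(u.a * frob k u.a)) * coe_mul_frob_coe y

/-- The field automorphism. -/
def conj (u : Unipotent k F) : Unipotent k F where
  a := frob k u.a
  b := frob k u.b
  rel := by rw [← map_add, u.rel, map_mul]

@[simp] theorem scale_a (y : normOne k F) (u : Unipotent k F) : (scale y u).a = u.a * y.1 := rfl
@[simp] theorem scale_b (y : normOne k F) (u : Unipotent k F) : (scale y u).b = u.b := rfl
@[simp] theorem conj_a (u : Unipotent k F) : (conj u).a = frob k u.a := rfl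
@[simp] theorem conj_b (u : Unipotent k F) : (conj u).b = frob k u.b := rfl

end Unipotent

theorem diagConj_weyl (y : normOne k F) : diagConj y (weyl : SU k F) = weyl := by
  apply mat_injective
  rw [mat_diagConj, mat_weyl, diagMat_apply, diagMat_apply]
  ext i j
  fin_cases i <;> fin_cases j <;> simp [Matrix.mul_apply, Fin.sum_univ_three]

theorem fieldConj_weyl : fieldConj k F (weyl : SU k F) = weyl := by
  apply mat_injective
  change (mat (weyl : SU k F)).map (frob k) = _
  rw [mat_weyl]
  ext i j
  fin_cases i <;> fin_cases j <;> simp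

/-- The antiautomorphism of `SU₃(q)` that composes inversion, conjugation by `diag(1, y, 1)` and the
field automorphism; for every `y` it fixes the Weyl element. -/
def antiConj (y : normOne k F) (g : SU k F) : SU k F := (diagConj y (fieldConj k F g))⁻¹

theorem antiConj_mul (y : normOne k F) (g h : SU k F) :
    antiConj y (g * h) = antiConj y h * antiConj y g := by
  simp only [antiConj, map_mul, _root_.mul_inv_rev]

theorem antiConj_weyl (y : normOne k F) : antiConj y (weyl : SU k F) = weyl := by
  rw [antiConj, fieldConj_weyl, diagConj_weyl, weyl_inv]

variable [Fintype F] [HasCardSq k F]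

theorem diagConj_upper (y : normOne k F) (u : Unipotent k F) :
    diagConj y (upper u) = upper (scale y u) := by
  apply mat_injective
  rw [mat_diagConj, mat_upper, mat_upper, diagMat_apply, diagMat_apply]
  ext i j
  fin_cases i <;> fin_cases j <;>
    simp [Matrix.mul_apply, Fin.sum_univ_three, frob_coe, mul_comm]

theorem diagConj_torus (y : normOne k F) (t : Fˣ) : diagConj y (torus t) = torus t := by
  apply mat_injective
  rw [mat_diagConj, mat_torus, diagMat_apply, diagMat_apply]
  ext i j
  fin_cases i <;> fin_cases j <;>
    simp [Matrix.mul_apply, Fin.sum_univ_three, mul_comm]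

theorem fieldConj_upper (u : Unipotent k F) : fieldConj k F (upper u) = upper (conj u) := by
  apply mat_injective
  change (mat (upper u)).map (frob k) = _
  rw [mat_upper, mat_upper]
  ext i j
  fin_cases i <;> fin_cases j <;> simp

theorem fieldConj_torus (t : Fˣ) :
    fieldConj k F (torus t) = torus (Units.map (frob k : F →+* F) t) := by
  apply mat_injective
  change (mat (torus t)).map (frob k) = _
  rw [mat_torus, mat_torus]
  ext i j
  fin_cases i <;> fin_cases j <;> simp

/-- The restriction of `antiConj` to the unipotent group. -/
def Unipotent.anti (y : normOne k F) (u : Unipotent k F) : Unipotent k F := (scale y (conj u))⁻¹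

@[simp] theorem Unipotent.anti_a (y : normOne k F) (u : Unipotent k F) :
    (anti y u).a = frob k u.a * y.1 := rfl

theorem Unipotent.anti_anti (y : normOne k F) (u : Unipotent k F) : anti y (anti y u) = u := by
  ext
  · simp [frob_coe]
  · simp [anti]

theorem antiConj_upper (y : normOne k F) (u : Unipotent k F) :
    antiConj y (upper u) = upper (anti y u) := by
  rw [antiConj, fieldConj_upper, diagConj_upper, anti, map_inv]

theorem antiConj_torus (y : normOne k F) (t : Fˣ) :
    antiConj y (torus t) = torus (invConj k t) := by
  rw [antiConj, fieldConj_torus, diagConj_torus, ← map_inv, invConj]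

end Automorphisms

theorem IsIrred.eq_zero_or_eq_zero_of_mul_map_mul {G : Type*} [Group G] {n : ℕ}
    {R : G →* Matrix (Fin n) (Fin n) ℂ} (hR : IsIrred R) {A B : Matrix (Fin n) (Fin n) ℂ}
    (h : ∀ g, A * R g * B = 0) : A = 0 ∨ B = 0 := by
  by_contra! hAB
  refine hAB.2 (Matrix.ext_of_mulVec_single fun i => ?_)
  rw [Matrix.zero_mulVec]
  by_contra hv
  refine hAB.1 (hR.eq_zero_of_mulVec_orbit hv fun g => ?_)
  rw [Matrix.mulVec_mulVec, Matrix.mulVec_mulVec, h, Matrix.zero_mulVec]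

theorem even_card_filter_ne_of_involutive {α : Type*} [DecidableEq α] {f : α → α}
    (hf : Function.Involutive f) {s : Finset α} (hs : ∀ a ∈ s, f a ∈ s) :
    Even (s.filter fun a => f a ≠ a).card := by
  rw [← ZMod.natCast_eq_zero_iff_even, Finset.card_eq_sum_ones, Nat.cast_sum, Nat.cast_one]
  refine Finset.sum_involution (fun a _ => f a) (fun _ _ => CharTwo.add_self_eq_zero 1)
    (fun a ha _ => (Finset.mem_filter.1 ha).2) (fun a ha => ?_) fun a _ => hf a
  obtain ⟨has, hne⟩ := Finset.mem_filter.1 ha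
  exact Finset.mem_filter.2 ⟨hs a has, fun h => hne (hf.injective h)⟩

section Multiplicities

open Unipotent

variable {k : ℕ} {F : Type} [Field F] [ExpChar F 2]

/-- The reflection `y ↦ ȳ x / x̄` of the field in the line through `x`. -/
def reflect (k : ℕ) (x : Fˣ) (y : F) : F := frob k y * (x : F) / frob k (x : F)

theorem frob_coe_ne_zero (x : Fˣ) : frob k (x : F) ≠ 0 := (map_ne_zero _).2 x.ne_zero

theorem reflect_self (x : Fˣ) : reflect k x (x : F) = x := by
  rw [reflect, mul_div_cancel_left₀ _ (frob_coe_ne_zero x)]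

theorem reflect_eq_self_iff (x : Fˣ) (y : F) : reflect k x y = y ↔ y / x ∈ baseField k F := by
  rw [mem_baseField, reflect, map_div₀, div_eq_div_iff (frob_coe_ne_zero x) x.ne_zero,
    div_eq_iff (frob_coe_ne_zero x)]

variable [Fintype F] [HasCardSq k F]

theorem reflect_involutive (x : Fˣ) : Function.Involutive (reflect k x) := fun y => by
  have := frob_coe_ne_zero (k := k) x
  have := x.ne_zero
  simp only [reflect, map_div₀, map_mul, frob_frob]
  field_simp

/-- The quotient `x̄ / x`, an element of norm one. -/
def frobDiv (x : Fˣ) : normOne k F :=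
  ⟨Units.map (frob k : F →+* F) x / x, by
    have := frob_coe_ne_zero (k := k) x
    have := x.ne_zero
    simp [mem_normOne, field]⟩

variable {n : ℕ} {ψ : AddChar F ℂ} {R : SU k F →* Matrix (Fin n) (Fin n) ℂ}

theorem IsFrobFixed.apply_mul_anti (hψ : IsFrobFixed k ψ) (x : Fˣ) (y : F) (u : Unipotent k F) :
    ψ (y * (anti (frobDiv x) u).a) = ψ (reflect k x y * u.a) := by
  have := frob_coe_ne_zero (k := k) x
  rw [← hψ.frob_eq, reflect]
  congr 1
  simp [frobDiv]
  field_simp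

theorem linProj_mul_invConj_mul_linProj (hψ : ψ ≠ 1) (x t : Fˣ) :
    linProj ψ R x * R (torus (invConj k t)) * linProj ψ R x =
      linProj ψ R x * R (torus t) * linProj ψ R x := by
  have hzero (s : Fˣ) (hs : (s : F) ^ 2 ≠ frob k (s : F)) :
      linProj ψ R x * R (torus s) * linProj ψ R x = 0 := by
    rw [← torus_mul_linProj, mul_assoc, linProj_mul_linProj_of_ne R hψ, mul_zero]
    intro h
    rw [mul_eq_left₀ x.ne_zero, div_eq_one_iff_eq (frob_coe_ne_zero s)] at h
    exact hs h
  have ht0 := t.ne_zero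
  have := frob_coe_ne_zero (k := k) t
  by_cases ht : (t : F) ^ 2 = frob k (t : F)
  · have hinv : invConj k t = t := by
      have hpow : frob k (t : F) ^ 2 = t := by rw [← map_pow, ht, frob_frob]
      have hcube : frob k (t : F) * t = 1 := mul_right_cancel₀ ht0 <| by
        rw [one_mul, mul_assoc, ← pow_two, ht, ← pow_two, hpow]
      ext
      rw [coe_invConj, inv_eq_of_mul_eq_one_right hcube]
    rw [hinv]
  · rw [hzero t ht, hzero]
    intro h
    refine ht ?_
    rw [coe_invConj, map_inv₀, frob_frob] at h
    field_simp at h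
    simpa using (congrArg (frob k) h).symm

theorem linProj_mul_antiConj_mul_linProj (hψ : IsFrobFixed k ψ) (x : Fˣ) (g : SU k F) :
    linProj ψ R x * R (antiConj (frobDiv x) g) * linProj ψ R x =
      linProj ψ R x * R g * linProj ψ R x := by
  have hsandwich (u v : Unipotent k F) (g : SU k F) :
      linProj ψ R x * R (upper u * g * upper v) * linProj ψ R x =
        (ψ (x * u.a) * ψ (x * v.a)) • (linProj ψ R x * R g * linProj ψ R x) := by
    rw [map_mul, map_mul, mul_assoc, mul_assoc, upper_mul_linProj, ← mul_assoc, ← mul_assoc,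
      linProj_mul_upper]
    simp only [Matrix.smul_mul, Matrix.mul_smul, smul_smul, mul_comm]
  have hanti (u : Unipotent k F) : ψ (x * (anti (frobDiv x) u).a) = ψ (x * u.a) := by
    rw [hψ.apply_mul_anti, reflect_self]
  obtain ⟨⟨u, t⟩ | ⟨u, t, v⟩, rfl⟩ := bruhatMap_bijective.2 g
  · have h₁ := hsandwich 1 (anti (frobDiv x) u) (torus (invConj k t))
    have h₂ := hsandwich u 1 (torus t)
    rw [map_one, one_mul, hanti, linProj_mul_invConj_mul_linProj hψ.ne_one] at h₁
    rw [map_one, mul_one] at h₂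
    rw [bruhatMap, antiConj_mul, antiConj_upper, antiConj_torus, h₁, h₂]
    simp
  · have hmul : antiConj (frobDiv x) (upper u * torus t * weyl * upper v) =
        upper (anti (frobDiv x) v) * (torus t * weyl) * upper (anti (frobDiv x) u) := by
      simp only [antiConj_mul, antiConj_upper, antiConj_torus, antiConj_weyl, mul_assoc,
        weyl_mul_torus, invConj_invConj]
    rw [bruhatMap, hmul, hsandwich, hanti, hanti, mul_comm (ψ _), ← hsandwich u v]
    simp only [mul_assoc]

theorem linProj_mul_linProj_mul_linProj (hψ : IsFrobFixed k ψ) (x : Fˣ) (y : F) (g g' : SU k F) :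
    linProj ψ R x * R g * linProj ψ R y * R g' * linProj ψ R x =
      linProj ψ R x * R (antiConj (frobDiv x) g') * linProj ψ R (reflect k x y) *
        R (antiConj (frobDiv x) g) * linProj ψ R x := by
  rw [linProj.eq_1 ψ R y, linProj.eq_1 ψ R (reflect k x y), charProj, charProj]
  simp only [Matrix.mul_smul, Matrix.smul_mul, Finset.mul_sum, Finset.sum_mul]
  congr 1
  refine Fintype.sum_bijective (anti (frobDiv x))
    (Function.Involutive.bijective (anti_anti _)) _ _ fun u => ?_
  have hmerge : linProj ψ R x * R g * R (upper u) * R g' * linProj ψ R x =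
      linProj ψ R x * R (g * upper u * g') * linProj ψ R x := by
    simp only [map_mul, mul_assoc]
  simp only [MonoidHom.comp_apply, linChar_apply, inv_a]
  rw [hmerge, ← linProj_mul_antiConj_mul_linProj hψ, antiConj_mul, antiConj_mul, antiConj_upper,
    hψ.apply_mul_anti x (reflect k x y), reflect_involutive x y]
  simp only [map_mul, mul_assoc]

theorem IsIrred.trace_linProj (hR : IsIrred R) (hψ : IsFrobFixed k ψ) (x : Fˣ)
    (hx : linProj ψ R x ≠ 0) : (linProj ψ R x).trace = 1 := by
  have he := isIdempotentElem_linProj ψ R x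
  refine hR.trace_eq_one_of_mul_mul_eq_smul he hx (hR.exists_mul_mul_eq_smul he hx fun g h => ?_)
  have hmerge (g h : SU k F) :
      linProj ψ R x * R g * linProj ψ R x * (linProj ψ R x * R h * linProj ψ R x) =
        linProj ψ R x * R g * linProj ψ R x * R h * linProj ψ R x := by
    calc _ = linProj ψ R x * R g * (linProj ψ R x * linProj ψ R x) * R h * linProj ψ R x := by
          simp only [mul_assoc]
      _ = _ := by rw [he.eq]
  rw [hmerge, linProj_mul_linProj_mul_linProj hψ, reflect_self, ← hmerge,
    linProj_mul_antiConj_mul_linProj hψ, linProj_mul_antiConj_mul_linProj hψ]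

theorem IsIrred.linProj_reflect_ne_zero (hR : IsIrred R) (hψ : IsFrobFixed k ψ) {x : Fˣ}
    (hx : linProj ψ R x ≠ 0) {y : F} (hy : linProj ψ R y ≠ 0) :
    linProj ψ R (reflect k x y) ≠ 0 := fun h => by
  have hzero (g g' : SU k F) : linProj ψ R x * R g * linProj ψ R y * R g' * linProj ψ R x = 0 := by
    rw [linProj_mul_linProj_mul_linProj hψ, h, mul_zero, Matrix.zero_mul, Matrix.zero_mul]
  have hzero' (g : SU k F) : linProj ψ R x * R g * linProj ψ R y = 0 :=
    (hR.eq_zero_or_eq_zero_of_mul_map_mul (hzero g)).resolve_right hx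
  exact (hR.eq_zero_or_eq_zero_of_mul_map_mul hzero').elim hx hy

theorem linProj_mul_ne_zero {x : F} (hx : linProj ψ R x ≠ 0) {c : F} (hc : c ∈ baseField k F)
    (hc0 : c ≠ 0) : linProj ψ R (x * c) ≠ 0 := fun h => hx <| by
  have htorus := torus_mul_linProj ψ R x (Units.mk0 c hc0)
  rw [Units.val_mk0, mem_baseField.1 hc, pow_two, mul_div_cancel_right₀ _ hc0, h,
    mul_zero] at htorus
  rw [← mul_one (linProj ψ R x), ← map_mul_map_inv R (torus (Units.mk0 c hc0)), ← mul_assoc,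
    ← htorus, zero_mul]

theorem card_filter_reflect_eq [DecidableEq F] (hR : unipotentProj R = 0) {x : Fˣ}
    (hx : linProj ψ R x ≠ 0) :
    (Finset.univ.filter fun y => linProj ψ R y ≠ 0 ∧ reflect k x y = y).card = 2 ^ k - 1 := by
  have himage : (Finset.univ.filter fun y => linProj ψ R y ≠ 0 ∧ reflect k x y = y) =
      (Finset.univ.erase (0 : baseField k F)).image fun c : baseField k F => (x : F) * c := by
    ext y
    simp only [Finset.mem_filter_univ, reflect_eq_self_iff, Finset.mem_image, Finset.mem_erase,
      Finset.mem_univ, and_true]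
    constructor
    · rintro ⟨hy, hmem⟩
      refine ⟨⟨y / x, hmem⟩, fun h0 => hy ?_, mul_div_cancel₀ y x.ne_zero⟩
      have hy0 : y / x = 0 := congrArg Subtype.val h0
      rw [(div_eq_zero_iff.1 hy0).resolve_right x.ne_zero, linProj_zero, hR]
    · rintro ⟨c, hc, rfl⟩
      refine ⟨linProj_mul_ne_zero hx c.2 fun h => hc (Subtype.ext h), ?_⟩
      rw [mul_div_cancel_left₀ _ x.ne_zero]
      exact c.2
  rw [himage, Finset.card_image_of_injective, Finset.card_erase_of_mem (Finset.mem_univ _),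
    Finset.card_univ, card_baseField]
  exact fun c d h => Subtype.ext (mul_left_cancel₀ x.ne_zero h)

theorem IsIrred.odd_card_filter_linProj_ne_zero (hR : IsIrred R) (hψ : IsFrobFixed k ψ)
    (h0 : unipotentProj R = 0) {x : Fˣ} (hx : linProj ψ R x ≠ 0) :
    Odd (Finset.univ.filter fun y => linProj ψ R y ≠ 0).card := by
  classical
  have hstable (y : F) (hy : y ∈ Finset.univ.filter fun y => linProj ψ R y ≠ 0) :
      reflect k x y ∈ Finset.univ.filter fun y => linProj ψ R y ≠ 0 := by
    rw [Finset.mem_filter_univ] at hy ⊢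
    exact hR.linProj_reflect_ne_zero hψ hx hy
  have hmoved := even_card_filter_ne_of_involutive (reflect_involutive x) hstable
  have hfixed : Odd (2 ^ k - 1) :=
    Nat.Even.sub_odd Nat.one_le_two_pow (even_two.pow_of_ne_zero (exponent_ne_zero k F)) odd_one
  rw [← Finset.card_filter_add_card_filter_not fun y => reflect k x y = y, Finset.filter_filter,
    card_filter_reflect_eq h0 hx]
  exact hfixed.add_even hmoved

theorem IsIrred.centralProj_zero_eq_zero (hR : IsIrred R) (hk : 2 ≤ k) (hn : Even n)
    (h0 : unipotentProj R = 0) : centralProj R 0 = 0 := by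
  classical
  obtain ⟨ψ, hψ⟩ := exists_isFrobFixed k (F := F)
  have hne {y : F} (hy : linProj ψ R y ≠ 0) : y ≠ 0 := by
    rintro rfl
    exact hy (by rw [linProj_zero, h0])
  by_contra hcon
  obtain ⟨x, -, hx⟩ :=
    Finset.exists_ne_zero_of_sum_ne_zero ((centralProj_zero hψ.ne_one).symm.trans_ne hcon)
  have hodd := hR.odd_card_filter_linProj_ne_zero hψ h0 (x := Units.mk0 x (hne hx)) hx
  set N := (Finset.univ.filter fun y => linProj ψ R y ≠ 0).card with hN
  have htrace_zero : (centralProj R 0).trace = N := by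
    rw [centralProj_zero hψ.ne_one, Matrix.trace_sum, hN, Finset.card_filter, Nat.cast_sum]
    refine Finset.sum_congr rfl fun y _ => ?_
    split_ifs with hy
    · exact (hR.trace_linProj hψ (Units.mk0 y (hne hy)) hy).trans Nat.cast_one.symm
    · rw [not_not.1 hy, Matrix.trace_zero, Nat.cast_zero]
  have htrace (l : {l : CentralChar k F // l ≠ 0}) :
      ∃ m : ℕ, (centralProj R l).trace = 2 * m := by
    obtain ⟨e, y, hey⟩ := exists_isFlipPair hk l.2
    exact hey.exists_trace_centralProj_eq R
  choose m hm using htrace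
  have hsum : (n : ℂ) = N + 2 * ∑ l, m l := by
    have h := congrArg Matrix.trace (sum_centralProj R)
    rw [Matrix.trace_sum, Matrix.trace_one, Fintype.card_fin,
      Fintype.sum_eq_add_sum_subtype_ne _ 0, htrace_zero] at h
    rw [← h, Nat.cast_sum, Finset.mul_sum, Finset.sum_congr rfl fun l _ => hm l]
  have hsum' : n = N + 2 * ∑ l, m l := by exact_mod_cast hsum
  exact Nat.not_even_iff_odd.2 (hsum' ▸ hodd.add_even (even_two_mul _)) hn

end Multiplicities

open Unipotent

section IsotropicVectors

variable {k : ℕ} {F : Type} [Field F]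

variable (k) in
/-- The polynomial whose value at `x` is `hermForm k x (M *ᵥ x)`. -/
def hermPoly (M : Matrix (Fin 3) (Fin 3) F) : MvPolynomial (Fin 3) F :=
  ∑ i, ∑ j, MvPolynomial.C (M i j) *
    (MvPolynomial.X (Fin.rev i) ^ 2 ^ k * MvPolynomial.X j)

theorem totalDegree_hermPoly_le (M : Matrix (Fin 3) (Fin 3) F) :
    (hermPoly k M).totalDegree ≤ 2 ^ k + 1 := by
  refine MvPolynomial.totalDegree_finsetSum_le fun i _ =>
    MvPolynomial.totalDegree_finsetSum_le fun j _ => ?_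
  calc _ ≤ _ := MvPolynomial.totalDegree_mul _ _
    _ ≤ 0 + (_ + _) := Nat.add_le_add (MvPolynomial.totalDegree_C _).le
        (MvPolynomial.totalDegree_mul _ _)
    _ ≤ 0 + (2 ^ k + 1) := by
        gcongr
        · exact MvPolynomial.totalDegree_X_pow _ _ |>.le
        · exact (MvPolynomial.totalDegree_X j).le
    _ = 2 ^ k + 1 := zero_add _

theorem totalDegree_one_sub_hermPoly_pow_le (M : Matrix (Fin 3) (Fin 3) F) (n : ℕ) :
    (1 - hermPoly k M ^ n).totalDegree ≤ n * (2 ^ k + 1) :=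
  calc _ ≤ max _ _ := MvPolynomial.totalDegree_sub _ _
    _ ≤ n * (2 ^ k + 1) := max_le (by simp) <| (MvPolynomial.totalDegree_pow _ _).trans <| by
        gcongr
        exact totalDegree_hermPoly_le M

variable [ExpChar F 2]

theorem frob_hermForm [Fintype F] [HasCardSq k F] (x y : Fin 3 → F) :
    frob k (hermForm k x y) = hermForm k y x := by
  simp only [hermForm, map_add, map_mul, frob_frob]
  ring

theorem hermForm_smul_left (c : F) (x y : Fin 3 → F) :
    hermForm k (c • x) y = frob k c * hermForm k x y := by
  simp only [hermForm, Pi.smul_apply, smul_eq_mul, map_mul]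
  ring

theorem hermForm_smul_right (c : F) (x y : Fin 3 → F) :
    hermForm k x (c • y) = c * hermForm k x y := by
  simp only [hermForm, Pi.smul_apply, smul_eq_mul]
  ring

theorem hermForm_add_right (x y z : Fin 3 → F) :
    hermForm k x (y + z) = hermForm k x y + hermForm k x z := by
  simp only [hermForm, Pi.add_apply]
  ring

theorem hermForm_sum_right (x : Fin 3 → F) (M : Matrix (Fin 3) (Fin 3) F) (y : Fin 3 → F) :
    hermForm k x (M *ᵥ y) = ∑ i, ∑ j, M i j * (frob k (x (Fin.rev i)) * y j) := by
  simp [hermForm, Matrix.mulVec, dotProduct, Fin.sum_univ_three, Fin.rev]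
  ring

theorem eval_hermPoly (M : Matrix (Fin 3) (Fin 3) F) (x : Fin 3 → F) :
    MvPolynomial.eval x (hermPoly k M) = hermForm k x (M *ᵥ x) := by
  simp [hermPoly, hermForm_sum_right, frob_apply]

theorem pow_sub_one_eq_one_of_frob_eq {c : F} (hc : frob k c = c) (h0 : c ≠ 0) :
    c ^ (2 ^ k - 1) = 1 := by
  apply mul_left_cancel₀ h0
  rw [← pow_succ', Nat.sub_add_cancel Nat.one_le_two_pow, ← frob_apply, hc, mul_one]

variable [Fintype F] [HasCardSq k F]

/- Chevalley–Warning for `(1 - A ^ (q - 1)) (1 - B ^ (q - 1))`: as the two forms take values in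
`𝔽_q`, this polynomial is the indicator function of their common zeros. -/
theorem exists_ne_zero_hermForm_eq_zero {A B : Matrix (Fin 3) (Fin 3) F}
    (hA : ∀ x, frob k (hermForm k x (A *ᵥ x)) = hermForm k x (A *ᵥ x))
    (hB : ∀ x, frob k (hermForm k x (B *ᵥ x)) = hermForm k x (B *ᵥ x)) :
    ∃ x, x ≠ 0 ∧ hermForm k x (A *ᵥ x) = 0 ∧ hermForm k x (B *ᵥ x) = 0 := by
  classical
  by_contra! hne
  have hq : 2 ≤ 2 ^ k := Nat.le_self_pow (exponent_ne_zero k F) 2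
  set P := (1 - hermPoly k A ^ (2 ^ k - 1)) * (1 - hermPoly k B ^ (2 ^ k - 1)) with hP
  have heval (x : Fin 3 → F) : MvPolynomial.eval x P = if x = 0 then 1 else 0 := by
    have hz : 2 ^ k - 1 ≠ 0 := by omega
    rw [hP]
    simp only [map_mul, map_sub, map_one, map_pow, eval_hermPoly]
    split_ifs with hx
    · simp [hx, hermForm, hz]
    by_cases h0 : hermForm k x (A *ᵥ x) = 0
    · rw [pow_sub_one_eq_one_of_frob_eq (hB x) (hne x hx h0), sub_self, mul_zero]
    · rw [pow_sub_one_eq_one_of_frob_eq (hA x) h0, sub_self, zero_mul]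
  have hdeg : P.totalDegree < (Fintype.card F - 1) * Fintype.card (Fin 3) := by
    have hcard : (2 ^ k) ^ 2 - 1 = (2 ^ k - 1) * (2 ^ k + 1) := by
      rw [mul_comm]
      exact Nat.sq_sub_sq (2 ^ k) 1
    rw [HasCardSq.card_eq (k := k) (F := F), Fintype.card_fin, hcard]
    have hpos : 0 < (2 ^ k - 1) * (2 ^ k + 1) := Nat.mul_pos (by omega) (by omega)
    calc P.totalDegree ≤ _ := MvPolynomial.totalDegree_mul _ _
      _ ≤ (2 ^ k - 1) * (2 ^ k + 1) + (2 ^ k - 1) * (2 ^ k + 1) :=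
          Nat.add_le_add (totalDegree_one_sub_hermPoly_pow_le A _)
            (totalDegree_one_sub_hermPoly_pow_le B _)
      _ < (2 ^ k - 1) * (2 ^ k + 1) * 3 := by omega
  simpa [heval] using MvPolynomial.sum_eval_eq_zero P hdeg

theorem exists_smul_eq_of_isotropic {x y : Fin 3 → F} (hx0 : x ≠ 0) (hx : hermForm k x x = 0)
    (hy : hermForm k y y = 0) (hxy : hermForm k x y = 0) : ∃ c : F, y = c • x := by
  obtain ⟨g, rfl⟩ := exists_col_eq_of_isotropic hx0 hx
  set z := mat g⁻¹ *ᵥ y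
  have hz : mat g *ᵥ z = y := by
    rw [mulVec_mulVec, ← mat_mul, mul_inv_cancel, mat_one, one_mulVec]
  have hcol : (mat g).col 0 = mat g *ᵥ (1 : Matrix (Fin 3) (Fin 3) F).col 0 := by
    rw [← mat_one, ← col_mat_mul, mul_one]
  rw [← hz, hermForm_mat_mulVec] at hy
  rw [← hz, hcol, hermForm_mat_mulVec] at hxy
  have hz2 : z 2 = 0 := by simpa [hermForm, Matrix.one_apply] using hxy
  have hz1 : z 1 = 0 := by simpa [hermForm, hz2] using hy
  refine ⟨z 0, ?_⟩
  rw [← hz, hcol, ← mulVec_smul]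
  congr 1
  ext i
  fin_cases i <;> simp [hz1, hz2]

omit [Fintype F] [HasCardSq k F] in
theorem mat_conj_two_zero (g h : SU k F) :
    mat (h⁻¹ * g * h) 2 0 = hermForm k ((mat h).col 0) (mat g *ᵥ (mat h).col 0) := by
  rw [← hermForm_mat_mulVec h⁻¹, ← col_mat_mul, ← col_mat_mul, ← col_mat_mul, inv_mul_cancel,
    ← mul_assoc]
  simp [hermForm]

/-- An element of `SU₃(q)` is elliptic if it fixes no isotropic line. -/
def IsElliptic (g : SU k F) : Prop :=
  ∀ x, x ≠ 0 → hermForm k x x = 0 → ∀ c : F, mat g *ᵥ x ≠ c • x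

theorem IsElliptic.hermForm_mulVec_ne_zero {g : SU k F} (hg : IsElliptic g) {x : Fin 3 → F}
    (hx0 : x ≠ 0) (hx : hermForm k x x = 0) : hermForm k x (mat g *ᵥ x) ≠ 0 := fun h => by
  obtain ⟨c, hc⟩ := exists_smul_eq_of_isotropic hx0 hx (by rw [hermForm_mat_mulVec, hx]) h
  exact hg x hx0 hx c hc

theorem exists_isotropic_frob_mul_hermForm_mulVec (g : SU k F) (t : F) :
    ∃ x, x ≠ 0 ∧ hermForm k x x = 0 ∧
      frob k (frob k t * hermForm k x (mat g *ᵥ x)) = frob k t * hermForm k x (mat g *ᵥ x) := by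
  have hinv (x : Fin 3 → F) :
      hermForm k x (mat g⁻¹ *ᵥ x) = frob k (hermForm k x (mat g *ᵥ x)) := by
    rw [frob_hermForm, ← hermForm_mat_mulVec g, mulVec_mulVec, ← mat_mul, mul_inv_cancel, mat_one,
      one_mulVec]
  have hB (x : Fin 3 → F) : hermForm k x ((frob k t • mat g + t • mat g⁻¹) *ᵥ x) =
      frob k t * hermForm k x (mat g *ᵥ x) +
        frob k (frob k t * hermForm k x (mat g *ᵥ x)) := by
    rw [add_mulVec, smul_mulVec, smul_mulVec, hermForm_add_right, hermForm_smul_right,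
      hermForm_smul_right, hinv, map_mul, frob_frob]
  obtain ⟨x, hx0, hx, hxB⟩ := exists_ne_zero_hermForm_eq_zero (k := k) (A := 1)
    (B := frob k t • mat g + t • mat g⁻¹) (fun x => by rw [one_mulVec, frob_hermForm])
    (fun x => by rw [hB, frob_add_frob_self])
  rw [one_mulVec] at hx
  rw [hB] at hxB
  exact ⟨x, hx0, hx, (CharTwo.add_eq_zero.1 hxB).symm⟩

theorem IsElliptic.exists_mat_conj_two_zero_eq {g : SU k F} (hg : IsElliptic g) (t : Fˣ) :
    ∃ h : SU k F, mat (h⁻¹ * g * h) 2 0 = invConj k t := by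
  obtain ⟨x, hx0, hx, hfix⟩ := exists_isotropic_frob_mul_hermForm_mulVec g (t : F)
  have hm := hg.hermForm_mulVec_ne_zero hx0 hx
  set m := hermForm k x (mat g *ᵥ x)
  have ht : frob k (t : F) ≠ 0 := frob_coe_ne_zero t
  obtain ⟨s, hs⟩ := exists_mul_frob_eq k (c := (frob k (t : F) * m)⁻¹) (by rw [map_inv₀, hfix])
  have hs0 : s ≠ 0 := fun h => by
    rw [h, zero_mul] at hs
    exact inv_ne_zero (mul_ne_zero ht hm) hs.symm
  obtain ⟨h, hh⟩ := exists_col_eq_of_isotropic (k := k) (smul_ne_zero hs0 hx0)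
    (by rw [hermForm_smul_left, hermForm_smul_right, hx, mul_zero, mul_zero])
  refine ⟨h, ?_⟩
  rw [mat_conj_two_zero, hh, mulVec_smul, hermForm_smul_left, hermForm_smul_right, ← mul_assoc,
    mul_comm (frob k s), hs, coe_invConj]
  change _ * m = _
  field_simp

theorem exists_conj_eq_upper_mul_torus {g : SU k F} (hg : ¬IsElliptic g) :
    ∃ (h : SU k F) (u : Unipotent k F) (t : Fˣ), h⁻¹ * g * h = upper u * torus t := by
  simp only [IsElliptic, not_forall, not_not] at hg
  obtain ⟨x, hx0, hx, c, hc⟩ := hg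
  obtain ⟨h, rfl⟩ := exists_col_eq_of_isotropic hx0 hx
  refine ⟨h, exists_eq_upper_mul_torus ?_⟩
  rw [mat_conj_two_zero, hc, hermForm_smul_right, hx, mul_zero]

end IsotropicVectors

open Unipotent

section BigCell

variable {k : ℕ} {F : Type} [Field F] [ExpChar F 2] [Fintype F] [HasCardSq k F]

theorem exists_unipotent_a_eq (a : F) : ∃ u : Unipotent k F, u.a = a := by
  obtain ⟨b, hb⟩ := exists_add_frob_eq k (frob_mul_frob_self k a)
  exact ⟨⟨a, b, hb⟩, rfl⟩

variable (k) in
theorem exists_unipotent_b_eq (b : F) : ∃ u : Unipotent k F, u.b = b := by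
  obtain ⟨a, ha⟩ := exists_mul_frob_eq k (frob_add_frob_self k b)
  exact ⟨⟨a, b, ha.symm⟩, rfl⟩

omit [Fintype F] [HasCardSq k F] in
theorem exists_scale_eq {u v : Unipotent k F} (h : u.b = v.b) : ∃ y, scale y u = v := by
  have hnorm : u.a * frob k u.a = v.a * frob k v.a := by rw [← u.rel, ← v.rel, h]
  by_cases ha : u.a = 0
  · refine ⟨1, Unipotent.ext ?_ h⟩
    have hva : v.a = 0 := by simpa [ha] using hnorm.symm
    rw [scale_a, ha, hva, zero_mul]
  · have hva : v.a ≠ 0 := fun hv => by simp [hv, ha] at hnorm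
    refine ⟨⟨Units.mk0 (v.a / u.a) (div_ne_zero hva ha), ?_⟩, Unipotent.ext ?_ h⟩
    · rw [mem_normOne, Units.val_mk0, map_div₀, div_mul_div_comm, ← hnorm,
        div_self (mul_ne_zero ha (by simpa using ha))]
    · exact mul_div_cancel₀ _ ha

omit [Fintype F] [HasCardSq k F] in
theorem trace_mat_mul_comm (g h : SU k F) : (mat (g * h)).trace = (mat (h * g)).trace :=
  Matrix.trace_mul_comm _ _

omit [Fintype F] [HasCardSq k F] in
theorem trace_mat_conj (g h : SU k F) : (mat (h⁻¹ * g * h)).trace = (mat g).trace := by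
  rw [trace_mat_mul_comm, ← mul_assoc, mul_inv_cancel, one_mul]

theorem mat_upper_mul_torus_mul_weyl (u : Unipotent k F) (t : Fˣ) :
    mat (upper u * torus t * weyl) =
      !![u.b / frob k (t : F), u.a * (frob k (t : F) / t), (t : F);
        frob k u.a / frob k (t : F), frob k (t : F) / t, 0; (frob k (t : F))⁻¹, 0, 0] := by
  rw [mat_mul, mat_mul, mat_upper, mat_torus, mat_weyl]
  ext i j
  fin_cases i <;> fin_cases j <;> simp [Matrix.mul_apply, Fin.sum_univ_three, div_eq_mul_inv]

theorem trace_mat_upper_mul_torus_mul_weyl (u : Unipotent k F) (t : Fˣ) :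
    (mat (upper u * torus t * weyl)).trace = u.b / frob k (t : F) + frob k (t : F) / t := by
  rw [mat_upper_mul_torus_mul_weyl]
  simp [Matrix.trace_fin_three]

theorem trace_mat_upper_mul_torus (u : Unipotent k F) (t : Fˣ) :
    (mat (upper u * torus t)).trace = t + frob k (t : F) / t + (frob k (t : F))⁻¹ := by
  simp [mat_upper, mat_torus, Matrix.trace_fin_three]

theorem trace_mat_upper_mul_torus_of_mul_frob_eq_one (u : Unipotent k F) {t : Fˣ}
    (ht : (t : F) * frob k (t : F) = 1) : (mat (upper u * torus t)).trace = (t : F)⁻¹ ^ 2 := by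
  rw [trace_mat_upper_mul_torus, eq_inv_of_mul_eq_one_right ht, inv_inv, add_right_comm,
    CharTwo.add_self_eq_zero, zero_add, div_eq_mul_inv, sq]

theorem mul_frob_eq_one_of_sq_eq_frob {t : F} (ht : t ≠ 0) (h : t ^ 2 = frob k t) :
    t * frob k t = 1 := by
  have hsq : (t ^ 2) ^ 2 = t := by rw [h, ← map_pow, h, frob_frob]
  rw [← h]
  apply mul_right_cancel₀ ht
  linear_combination hsq

theorem mul_frob_eq_one_of_trace {t : F} (ht : t ≠ 0)
    (h : (t + frob k t / t + (frob k t)⁻¹) * frob k (t + frob k t / t + (frob k t)⁻¹) = 1) :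
    t * frob k t = 1 := by
  have hs : frob k t ≠ 0 := by simpa using ht
  have hfactor : (t * frob k t + 1) * ((t ^ 2 + frob k t) * (frob k t ^ 2 + t)) = 0 := by
    simp only [map_add, map_div₀, map_inv₀, frob_frob] at h
    field_simp at h
    linear_combination h
  simp only [mul_eq_zero, CharTwo.add_eq_zero] at hfactor
  obtain h | h | h := hfactor
  · exact h
  · exact mul_frob_eq_one_of_sq_eq_frob ht h
  · refine mul_frob_eq_one_of_sq_eq_frob ht ?_
    rw [← frob_frob k (t ^ 2), map_pow, h]

variable (k) in
/-- An element of the coset `U t w` of the big cell with trace `x`. -/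
def bigCell (t : Fˣ) (x : F) : SU k F :=
  upper (exists_unipotent_b_eq k ((x + frob k (t : F) / t) * frob k (t : F))).choose *
    torus t * weyl

theorem trace_mat_bigCell (t : Fˣ) (x : F) : (mat (bigCell k t x)).trace = x := by
  rw [bigCell, trace_mat_upper_mul_torus_mul_weyl, Exists.choose_spec
    (exists_unipotent_b_eq k _), mul_div_cancel_right₀ _ (frob_coe_ne_zero t), add_assoc,
    CharTwo.add_self_eq_zero, add_zero]

/-- A unitary homology: an element annihilated by `(X - s) (X - s⁻²)` for some `s` of norm one,
that is, a scalar or an element fixing a nondegenerate hyperplane up to a scalar. -/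
def IsHomology (g : SU k F) : Prop :=
  ∃ s : F, s * frob k s = 1 ∧ (mat g + s • 1) * (mat g + s⁻¹ ^ 2 • 1) = 0

omit [Fintype F] [HasCardSq k F] in
theorem IsHomology.of_conj {g h : SU k F} (hh : IsHomology (h⁻¹ * g * h)) : IsHomology g := by
  obtain ⟨s, hs, h0⟩ := hh
  have hinv : mat h * mat h⁻¹ = 1 := by rw [← mat_mul, mul_inv_cancel, mat_one]
  have hconj (c : F) : mat g + c • 1 = mat h * (mat (h⁻¹ * g * h) + c • 1) * mat h⁻¹ := by
    rw [mul_add, add_mul, ← mat_mul, ← mat_mul, mul_smul_comm, smul_mul_assoc, mul_one, hinv]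
    group
  refine ⟨s, hs, ?_⟩
  have hinv' : mat h⁻¹ * mat h = 1 := by rw [← mat_mul, inv_mul_cancel, mat_one]
  calc (mat g + s • 1) * (mat g + s⁻¹ ^ 2 • 1)
      = mat h * (mat (h⁻¹ * g * h) + s • 1) * (mat h⁻¹ * mat h) *
          (mat (h⁻¹ * g * h) + s⁻¹ ^ 2 • 1) * mat h⁻¹ := by
        rw [hconj, hconj]
        simp only [mul_assoc]
    _ = 0 := by rw [hinv', mul_one, mul_assoc (mat h), h0, mul_zero, zero_mul]

theorem IsHomology.trace_mul_eq_one {u : Unipotent k F} {t : Fˣ}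
    (h : IsHomology (upper u * torus t * weyl)) :
    (mat (upper u * torus t * weyl)).trace * (frob k (t : F) / t) ^ 2 = 1 := by
  obtain ⟨s, hs, h0⟩ := h
  have ht := frob_coe_ne_zero (k := k) t
  have hs0 : s ≠ 0 := left_ne_zero_of_mul_eq_one hs
  rw [mat_upper_mul_torus_mul_weyl] at h0
  have hst : s = frob k (t : F) / t := by
    have h22 := congrFun (congrFun h0 2) 2
    simp only [inv_pow, Matrix.mul_apply, Matrix.add_apply, of_apply, cons_val', cons_val_fin_one,
      cons_val, Matrix.smul_apply, smul_eq_mul, Fin.sum_univ_three, ne_eq, Fin.reduceEq,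
      not_false_eq_true, one_apply_ne, mul_zero, add_zero, one_apply_eq, mul_one, zero_add,
      Matrix.zero_apply] at h22
    field_simp at h22 ⊢
    rw [mul_zero, CharTwo.add_eq_zero] at h22
    linear_combination h22
  have hb : u.b / frob k (t : F) + s = s⁻¹ ^ 2 := by
    have h20 := congrFun (congrFun h0 2) 0
    simp only [inv_pow, Matrix.mul_apply, Matrix.add_apply, of_apply, cons_val', cons_val_fin_one,
      cons_val, Matrix.smul_apply, smul_eq_mul, Fin.sum_univ_three, ne_eq, Fin.reduceEq,
      not_false_eq_true, one_apply_ne, mul_zero, add_zero, one_apply_eq, mul_one, one_ne_zero,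
      zero_mul, zero_add, Matrix.zero_apply] at h20
    rw [← CharTwo.add_eq_zero]
    field_simp at h20 ⊢
    linear_combination h20
  rw [trace_mat_upper_mul_torus_mul_weyl, ← hst, hb, ← mul_pow, inv_mul_cancel₀ hs0, one_pow]

theorem isHomology_torus {t : Fˣ} (ht : (t : F) * frob k (t : F) = 1) :
    IsHomology (torus t : SU k F) := by
  refine ⟨t, ht, ?_⟩
  rw [mat_torus, eq_inv_of_mul_eq_one_right ht]
  ext i j
  fin_cases i <;> fin_cases j <;>
    simp [Matrix.mul_apply, Fin.sum_univ_three, CharTwo.add_self_eq_zero]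
  field_simp
  simp [CharTwo.add_self_eq_zero]

theorem isHomology_upper_mul_torus {u : Unipotent k F} (hu : u.a = 0) {t : Fˣ}
    (ht : (t : F) * frob k (t : F) = 1) (ht3 : t ^ 3 = 1) :
    IsHomology (upper u * torus t : SU k F) := by
  have ht3' : (t : F) ^ 3 = 1 := by rw [← Units.val_pow_eq_pow_val, ht3, Units.val_one]
  have hdiv : (t : F)⁻¹ / t = t := by field_simp; exact ht3'.symm
  have hinv2 : (t : F)⁻¹ ^ 2 = t := by field_simp; exact ht3'.symm
  refine ⟨t, ht, ?_⟩
  rw [hinv2, mat_mul, mat_upper, mat_torus, eq_inv_of_mul_eq_one_right ht, inv_inv, hdiv, hu]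
  ext i j
  fin_cases i <;> fin_cases j <;>
    simp [Matrix.mul_apply, Fin.sum_univ_three, CharTwo.add_self_eq_zero]

end BigCell

open Unipotent

section CuspidalClassFunctions

variable {k : ℕ} {F : Type} [Field F] [ExpChar F 2] [Fintype F] [HasCardSq k F]

theorem inv_mul_mul_eq_center_mul {u v : Unipotent k F} {c : baseField k F}
    (h : v.a * frob k u.a + frob k (v.a * frob k u.a) = c) : v⁻¹ * u * v = center c * u := by
  rw [mul_assoc, inv_mul_eq_iff_eq_mul]
  refine Unipotent.ext (by simp [add_comm]) ?_
  simp only [mul_b, mul_a, center_a, center_b, zero_mul, add_zero, zero_add]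
  rw [map_mul, frob_frob] at h
  linear_combination h - (v.a * frob k u.a) * CharTwo.two_eq_zero (R := F)

theorem exists_inv_mul_mul_torusAct_eq_center (u : Unipotent k F) {t : Fˣ}
    (ht : (t : F) * frob k (t : F) = 1) (ht3 : t ^ 3 ≠ 1) :
    ∃ (v : Unipotent k F) (c : baseField k F), v⁻¹ * u * torusAct t v = center c := by
  have _ := t.ne_zero
  have ht3' : 1 + (t : F) ^ 3 ≠ 0 := fun h => ht3 (Units.ext (CharTwo.add_eq_zero.1 h).symm)
  obtain ⟨v, hv⟩ := exists_unipotent_a_eq (k := k) (u.a / (1 + (t : F) ^ 3))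
  have ha : (v⁻¹ * u * torusAct t v).a = 0 := by
    simp only [mul_a, inv_a, torusAct_a, hv, eq_inv_of_mul_eq_one_right ht]
    field_simp
    linear_combination (u.a + u.a * (t : F) ^ 3) * CharTwo.two_eq_zero (R := F)
  refine ⟨v, ⟨(v⁻¹ * u * torusAct t v).b, ?_⟩, Unipotent.ext ha rfl⟩
  have hrel := (v⁻¹ * u * torusAct t v).rel
  rw [ha, zero_mul, CharTwo.add_eq_zero] at hrel
  exact mem_baseField.2 hrel.symm

theorem trace_mul_frob_trace_eq_one_iff (u : Unipotent k F) (t : Fˣ) :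
    (mat (upper u * torus t)).trace * frob k (mat (upper u * torus t)).trace = 1 ↔
      (t : F) * frob k (t : F) = 1 := by
  refine ⟨fun h => mul_frob_eq_one_of_trace t.ne_zero (trace_mat_upper_mul_torus u t ▸ h),
    fun h => ?_⟩
  rw [trace_mat_upper_mul_torus_of_mul_frob_eq_one u h, map_pow, map_inv₀, ← mul_pow,
    ← _root_.mul_inv, h, inv_one, one_pow]

theorem sum_eq_zero_of_sum_line_eq_zero {G : F → ℂ} (a : F)
    (h : ∀ x, ∑ c : baseField k F, G (x + (c : F) * a) = 0) : ∑ x, G x = 0 := by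
  have hsum : ∑ c : baseField k F, ∑ x, G (x + (c : F) * a) = 0 := by
    rw [Finset.sum_comm]
    exact Finset.sum_eq_zero fun x _ => h x
  have hshift (c : baseField k F) : ∑ x, G (x + (c : F) * a) = ∑ x, G x :=
    Fintype.sum_equiv (Equiv.addRight ((c : F) * a)) _ _ fun _ => rfl
  simp only [hshift, Finset.sum_const, Finset.card_univ, card_baseField, nsmul_eq_mul] at hsum
  simpa using hsum

-- Double counting: `∑ c, ∑ a, G (x + c * a)` is `q * G x` and also `q ^ 2 * G x`.
theorem eq_zero_of_sum_line_eq_zero {G : F → ℂ}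
    (h : ∀ a ≠ 0, ∀ x, ∑ c : baseField k F, G (x + (c : F) * a) = 0) (x : F) : G x = 0 := by
  have htotal : ∑ x, G x = 0 := sum_eq_zero_of_sum_line_eq_zero 1 (h 1 one_ne_zero)
  have hline (c : baseField k F) (hc : c ≠ 0) : ∑ a, G (x + (c : F) * a) = 0 := by
    have hc' : (c : F) ≠ 0 := fun h0 => hc (Subtype.ext h0)
    rw [← htotal]
    exact Fintype.sum_equiv ((Equiv.mulLeft₀ (c : F) hc').trans (Equiv.addLeft x)) _ _
      fun _ => rfl
  have hcomm := Finset.sum_comm (s := Finset.univ) (t := Finset.univ)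
    (f := fun (c : baseField k F) (a : F) => G (x + (c : F) * a))
  rw [Finset.sum_eq_single 0 (fun c _ hc => hline c hc) (by simp),
    Finset.sum_eq_single 0 (fun a _ ha => h a ha x) (by simp)] at hcomm
  simp only [ZeroMemClass.coe_zero, zero_mul, mul_zero, add_zero, Finset.sum_const,
    Finset.card_univ, card_baseField, HasCardSq.card_eq (k := k) (F := F), nsmul_eq_mul] at hcomm
  have hq : ((2 ^ k : ℕ) : ℂ) ≠ 1 :=
    Nat.cast_ne_one.2 (Nat.one_lt_two_pow (exponent_ne_zero k F)).ne'
  have hq0 : ((2 ^ k : ℕ) : ℂ) ≠ 0 := Nat.cast_ne_zero.2 (pow_ne_zero k two_ne_zero)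
  have hprod : ((2 ^ k : ℕ) : ℂ) * (((2 ^ k : ℕ) : ℂ) - 1) * G x = 0 := by
    push_cast at hcomm ⊢
    linear_combination hcomm
  exact (mul_eq_zero.1 hprod).resolve_left (mul_ne_zero hq0 (sub_ne_zero.2 hq))

/-- Class functions on `SU₃(q)` invariant under the diagonal automorphisms, without fixed vectors
under the centre of the unipotent group, and vanishing at `1`. -/
structure IsCuspidalClassFun (f : SU k F → ℂ) : Prop where
  map_mul_comm : ∀ g h, f (g * h) = f (h * g)
  map_diagConj : ∀ y g, f (diagConj y g) = f g
  sum_center : ∀ g, ∑ c : baseField k F, f (g * upper (center c)) = 0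
  map_one : f 1 = 0

namespace IsCuspidalClassFun

variable {f : SU k F → ℂ} (hf : IsCuspidalClassFun f)

include hf

theorem map_conj (g h : SU k F) : f (h⁻¹ * g * h) = f g := by
  rw [hf.map_mul_comm, ← mul_assoc, mul_inv_cancel, one_mul]

theorem map_upper_mul_torus_mul_weyl (u : Unipotent k F) (t : Fˣ) :
    f (upper u * torus t * weyl) = f (bigCell k t (mat (upper u * torus t * weyl)).trace) := by
  have ht := frob_coe_ne_zero (k := k) t
  have hb : ((u.b / frob k (t : F) + frob k (t : F) / t) + frob k (t : F) / t) * frob k (t : F) =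
      u.b := by
    rw [add_assoc, CharTwo.add_self_eq_zero, add_zero, div_mul_cancel₀ _ ht]
  obtain ⟨y, hy⟩ := exists_scale_eq (hb.symm.trans (exists_unipotent_b_eq k _).choose_spec.symm)
  rw [← hf.map_diagConj y, map_mul, map_mul, diagConj_upper, diagConj_torus, diagConj_weyl, hy,
    trace_mat_upper_mul_torus_mul_weyl, bigCell]

theorem eq_bigCell_of_conj {g h : SU k F} {t : Fˣ} (hgh : mat (h⁻¹ * g * h) 2 0 = invConj k t) :
    f g = f (bigCell k t (mat g).trace) := by
  obtain ⟨u, v, huv⟩ := exists_big_cell hgh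
  rw [← hf.map_conj g h, ← trace_mat_conj g h, huv, hf.map_mul_comm, trace_mat_mul_comm,
    ← mul_assoc, ← mul_assoc, ← map_mul, hf.map_upper_mul_torus_mul_weyl]

theorem eq_bigCell_of_isElliptic {g : SU k F} (hg : IsElliptic g) (t : Fˣ) :
    f g = f (bigCell k t (mat g).trace) :=
  have ⟨_, hgh⟩ := hg.exists_mat_conj_two_zero_eq t
  hf.eq_bigCell_of_conj hgh

theorem sum_bigCell (t : Fˣ) (x : F) :
    ∑ c : baseField k F, f (bigCell k t (x + (c : F) * invConj k t)) = 0 := by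
  obtain ⟨u, hu⟩ := exists_unipotent_b_eq k ((x + frob k (t : F) / t) * frob k (t : F))
  rw [← hf.sum_center (torus t * weyl * upper u)]
  refine Finset.sum_congr rfl fun c _ => ?_
  rw [mul_assoc (torus t * weyl), ← map_mul, hf.map_mul_comm, ← mul_assoc,
    hf.map_upper_mul_torus_mul_weyl, trace_mat_upper_mul_torus_mul_weyl]
  congr 2
  have ht := frob_coe_ne_zero (k := k) t
  rw [mul_b, center_b, center_a, map_zero, mul_zero, add_zero, hu, add_div,
    mul_div_cancel_right₀ _ ht, coe_invConj, ← div_eq_mul_inv, add_right_comm, add_assoc x,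
    CharTwo.add_self_eq_zero, add_zero]

theorem eq_zero_of_center_mul {g : SU k F}
    (h : ∀ c : baseField k F, f (upper (center c) * g) = f g) : f g = 0 := by
  have hsum := hf.sum_center g
  simp only [hf.map_mul_comm g, h, Finset.sum_const, Finset.card_univ, card_baseField,
    nsmul_eq_mul] at hsum
  simpa using hsum

theorem map_upper_conj_mul_torus (u v : Unipotent k F) (t : Fˣ) :
    f (upper (v⁻¹ * u * torusAct t v) * torus t) = f (upper u * torus t) := by
  rw [← hf.map_conj (upper u * torus t) (upper v), mul_assoc (upper v)⁻¹, mul_assoc (upper u),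
    torus_mul_upper, map_mul, map_mul, map_inv]
  simp only [mul_assoc]

theorem map_upper_mul_torus_eq_zero (u : Unipotent k F) {t : Fˣ}
    (ht : (t : F) * frob k (t : F) ≠ 1) : f (upper u * torus t) = 0 := by
  have hN : 1 + (t : F) * frob k (t : F) ≠ 0 := fun h => ht (CharTwo.add_eq_zero.1 h).symm
  refine hf.eq_zero_of_center_mul fun c => ?_
  have hd : (c : F) / (1 + (t : F) * frob k (t : F)) ∈ baseField k F := by
    rw [mem_baseField, map_div₀, map_add, frob_mul_frob_self, mem_baseField.1 c.2,
      _root_.map_one]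
  rw [← hf.map_upper_conj_mul_torus u (center ⟨_, hd⟩), ← mul_assoc, ← map_mul]
  congr 3
  refine Unipotent.ext (by simp) ?_
  simp [mem_baseField.1 hd]
  field_simp
  ring

theorem map_upper_mul_torus_eq_zero_of_pow_three {u : Unipotent k F} (hu : u.a ≠ 0) {t : Fˣ}
    (ht : (t : F) * frob k (t : F) = 1) (ht3 : t ^ 3 = 1) : f (upper u * torus t) = 0 := by
  have htF : frob k (t : F) = (t : F)⁻¹ := eq_inv_of_mul_eq_one_right ht
  have ht3' : (t : F) ^ 3 = 1 := by rw [← Units.val_pow_eq_pow_val, ht3, Units.val_one]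
  have hact (v : Unipotent k F) : torusAct t v = v :=
    Unipotent.ext (by rw [torusAct_a, htF, div_inv_eq_mul, ← pow_succ, ht3', one_mul])
      (by rw [torusAct_b, ht, one_mul])
  refine hf.eq_zero_of_center_mul fun c => ?_
  obtain ⟨d, hd⟩ := exists_add_frob_eq k (mem_baseField.1 c.2)
  have hfu : frob k u.a ≠ 0 := by simpa using hu
  obtain ⟨v, hv⟩ := exists_unipotent_a_eq (k := k) (d / frob k u.a)
  rw [← hf.map_upper_conj_mul_torus u v, hact, ← mul_assoc, ← map_mul]
  congr 3
  refine (inv_mul_mul_eq_center_mul ?_).symm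
  rw [hv, div_mul_cancel₀ _ hfu, hd]

theorem map_center_mul_torus {c : baseField k F} (hc : c ≠ 0) (t : Fˣ) :
    f (upper (center c) * torus t) = f (upper (center 1) * torus t) := by
  obtain ⟨s, hs⟩ := exists_mul_frob_eq k (mem_baseField.1 c.2)
  have hs0 : s ≠ 0 := fun h => hc (Subtype.ext (by rw [← hs, h, zero_mul]; rfl))
  rw [← hf.map_conj (upper (center c) * torus t) (torus (Units.mk0 s hs0))]
  have hcomm : upper (center c) * torus t * torus (Units.mk0 s hs0) =
      torus (Units.mk0 s hs0) * (upper (center 1) * torus t) := by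
    rw [← mul_assoc, torus_mul_upper, mul_assoc, mul_assoc, ← map_mul, ← map_mul, mul_comm t]
    congr 2
    exact Unipotent.ext (by simp) (by simp [hs])
  rw [mul_assoc, hcomm, inv_mul_cancel_left]

theorem map_upper_mul_torus_eq_center {u : Unipotent k F} {t : Fˣ}
    (ht : (t : F) * frob k (t : F) = 1) (ht3 : t ^ 3 ≠ 1)
    (hh : ¬IsHomology (upper u * torus t)) :
    f (upper u * torus t) = f (upper (center 1) * torus t) := by
  obtain ⟨v, c, hc⟩ := exists_inv_mul_mul_torusAct_eq_center u ht ht3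
  have hc0 : c ≠ 0 := fun h0 => hh <| IsHomology.of_conj (h := upper v) <| by
    rw [mul_assoc, mul_assoc, torus_mul_upper, ← map_inv, ← mul_assoc, ← mul_assoc, ← map_mul,
      ← map_mul, hc, h0, center_zero, _root_.map_one, one_mul]
    exact isHomology_torus ht
  rw [← hf.map_upper_conj_mul_torus u v, hc, hf.map_center_mul_torus hc0]

theorem eq_of_not_isHomology {u v : Unipotent k F} {t : Fˣ}
    (ht : (t : F) * frob k (t : F) = 1) (hu : ¬IsHomology (upper u * torus t))
    (hv : ¬IsHomology (upper v * torus t)) : f (upper u * torus t) = f (upper v * torus t) := by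
  by_cases ht3 : t ^ 3 = 1
  · rw [hf.map_upper_mul_torus_eq_zero_of_pow_three
        (fun ha => hu (isHomology_upper_mul_torus ha ht ht3)) ht ht3,
      hf.map_upper_mul_torus_eq_zero_of_pow_three
        (fun ha => hv (isHomology_upper_mul_torus ha ht ht3)) ht ht3]
  · rw [hf.map_upper_mul_torus_eq_center ht ht3 hu, hf.map_upper_mul_torus_eq_center ht ht3 hv]

theorem eq_of_trace_eq_of_borel {u v : Unipotent k F} {s t : Fˣ}
    (hu : ¬IsHomology (upper u * torus s)) (hv : ¬IsHomology (upper v * torus t))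
    (htr : (mat (upper u * torus s)).trace = (mat (upper v * torus t)).trace) :
    f (upper u * torus s) = f (upper v * torus t) := by
  have hst : (s : F) * frob k (s : F) = 1 ↔ (t : F) * frob k (t : F) = 1 := by
    rw [← trace_mul_frob_trace_eq_one_iff u, htr, trace_mul_frob_trace_eq_one_iff]
  by_cases hs : (s : F) * frob k (s : F) = 1
  · have ht := hst.1 hs
    rw [trace_mat_upper_mul_torus_of_mul_frob_eq_one u hs,
      trace_mat_upper_mul_torus_of_mul_frob_eq_one v ht, CharTwo.sq_inj, _root_.inv_inj] at htr
    obtain rfl := Units.ext htr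
    exact hf.eq_of_not_isHomology hs hu hv
  · rw [hf.map_upper_mul_torus_eq_zero u hs, hf.map_upper_mul_torus_eq_zero v (mt hst.2 hs)]

theorem eq_of_trace_eq {g h : SU k F} (hg : ¬IsElliptic g) (hh : ¬IsElliptic h)
    (hg' : ¬IsHomology g) (hh' : ¬IsHomology h) (htr : (mat g).trace = (mat h).trace) :
    f g = f h := by
  obtain ⟨x, u, s, hu⟩ := exists_conj_eq_upper_mul_torus hg
  obtain ⟨y, v, t, hv⟩ := exists_conj_eq_upper_mul_torus hh
  rw [← hf.map_conj g x, ← hf.map_conj h y, hu, hv]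
  refine hf.eq_of_trace_eq_of_borel (fun hH => hg' (IsHomology.of_conj (hu ▸ hH)))
    (fun hH => hh' (IsHomology.of_conj (hv ▸ hH))) ?_
  rw [← hu, ← hv, trace_mat_conj, trace_mat_conj, htr]

theorem bigCell_eq_bigCell {s t : Fˣ} {x : F} (hs : x * (frob k (s : F) / s) ^ 2 ≠ 1)
    (ht : x * (frob k (t : F) / t) ^ 2 ≠ 1) : f (bigCell k s x) = f (bigCell k t x) := by
  by_cases hg : IsElliptic (bigCell k s x)
  · rw [hf.eq_bigCell_of_isElliptic hg t, trace_mat_bigCell]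
  by_cases hh : IsElliptic (bigCell k t x)
  · rw [hf.eq_bigCell_of_isElliptic hh s, trace_mat_bigCell]
  refine hf.eq_of_trace_eq hg hh (fun h => hs ?_) (fun h => ht ?_) ?_
  · rw [← IsHomology.trace_mul_eq_one h, ← bigCell, trace_mat_bigCell]
  · rw [← IsHomology.trace_mul_eq_one h, ← bigCell, trace_mat_bigCell]
  · rw [trace_mat_bigCell, trace_mat_bigCell]

theorem map_upper_center (c : baseField k F) : f (upper (center c)) = 0 := by
  classical
  by_cases hc : c = 0
  · rw [hc, center_zero, _root_.map_one, hf.map_one]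
  have hconst (d : baseField k F) (hd : d ≠ 0) :
      f (upper (center d)) = f (upper (center c)) := by
    have h1 (e : baseField k F) (he : e ≠ 0) : f (upper (center e)) = f (upper (center 1)) := by
      simpa using hf.map_center_mul_torus he 1
    rw [h1 d hd, h1 c hc]
  have hsum := hf.sum_center 1
  simp only [one_mul] at hsum
  rw [← Finset.add_sum_erase _ _ (Finset.mem_univ (0 : baseField k F)), center_zero,
    _root_.map_one, hf.map_one, zero_add,
    Finset.sum_congr rfl fun d hd => hconst d (Finset.ne_of_mem_erase hd), Finset.sum_const,
    Finset.card_erase_of_mem (Finset.mem_univ _), Finset.card_univ, card_baseField,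
    nsmul_eq_mul, mul_eq_zero, Nat.cast_eq_zero] at hsum
  refine hsum.resolve_left ?_
  have hq : 1 < 2 ^ k := Nat.one_lt_two_pow (exponent_ne_zero k F)
  omega

theorem map_upper_eq_bigCell {u : Unipotent k F} (hu : u ≠ 1) :
    f (upper u) = f (bigCell k (invConj k (unitB u hu)) 1) := by
  have htr : (mat (upper u)).trace = 1 := by
    simp [mat_upper, Matrix.trace_fin_three, CharTwo.add_self_eq_zero]
  rw [← htr]
  refine hf.eq_bigCell_of_conj (h := weyl) ?_
  rw [invConj_invConj, weyl_inv, mat_mul, mat_mul, mat_upper, mat_weyl]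
  simp [Matrix.mul_apply, Fin.sum_univ_three, unitB]

theorem bigCell_one_one : f (bigCell k 1 1) = 0 := by
  have hc : (center 1 : Unipotent k F) ≠ 1 := fun h => one_ne_zero (congrArg Unipotent.b h)
  have hunit : invConj k (unitB (center 1 : Unipotent k F) hc) = 1 := Units.ext (by simp [unitB])
  rw [← hunit, ← hf.map_upper_eq_bigCell hc, hf.map_upper_center]

theorem bigCell_eq_zero_of_trace_eq_one {t : Fˣ} (ht : (1 : F) * (frob k (t : F) / t) ^ 2 ≠ 1) :
    f (bigCell k t 1) = 0 := by
  obtain ⟨u, hu⟩ := exists_unipotent_a_eq (k := k) (1 : F)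
  have hb : u.b + frob k u.b = 1 := by rw [u.rel, hu, _root_.map_one, mul_one]
  have hu1 : u ≠ 1 := fun h => by simp [h] at hu
  have h0 : f (upper u) = 0 := by
    simpa using hf.map_upper_mul_torus_eq_zero_of_pow_three (t := 1) (by simp [hu]) (by simp)
      (one_pow 3)
  rw [← h0, hf.map_upper_eq_bigCell hu1]
  refine hf.bigCell_eq_bigCell ht fun h => ?_
  have hfb : frob k u.b ≠ 0 := by simpa using b_ne_zero hu1
  have hbb := b_ne_zero hu1
  rw [one_mul, ← one_pow 2, CharTwo.sq_inj, coe_invConj] at h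
  simp only [unitB, Units.val_mk0, map_inv₀, frob_frob] at h
  field_simp at h
  rw [h, CharTwo.add_self_eq_zero] at hb
  exact zero_ne_one hb

theorem sum_bigCell_univ (t : Fˣ) : ∑ x, f (bigCell k t x) = 0 :=
  sum_eq_zero_of_sum_line_eq_zero (invConj k t : F) (hf.sum_bigCell t)

/- For `t` fixed there is at most one trace `x` to which `bigCell_eq_bigCell` does not apply, and
the value there is determined by the vanishing of the total sum. -/
theorem bigCell_eq_bigCell_one (t : Fˣ) (x : F) : f (bigCell k t x) = f (bigCell k 1 x) := by
  have hne (y : F) (hy : y * (frob k (t : F) / t) ^ 2 ≠ 1) :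
      f (bigCell k t y) = f (bigCell k 1 y) := by
    by_cases hy1 : y = 1
    · rw [hy1, hf.bigCell_one_one, hf.bigCell_eq_zero_of_trace_eq_one (hy1 ▸ hy)]
    · exact hf.bigCell_eq_bigCell hy (by simpa using hy1)
  by_cases hx : x * (frob k (t : F) / t) ^ 2 = 1
  · have hsum : ∑ y, (f (bigCell k t y) - f (bigCell k 1 y)) = 0 := by
      rw [Finset.sum_sub_distrib, hf.sum_bigCell_univ, hf.sum_bigCell_univ, sub_zero]
    rw [Finset.sum_eq_single x (fun y _ hyx => ?_) (by simp)] at hsum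
    · exact sub_eq_zero.1 hsum
    refine sub_eq_zero.2 (hne y fun hy => hyx ?_)
    exact mul_right_cancel₀ (right_ne_zero_of_mul_eq_one hx) (hy.trans hx.symm)
  · exact hne x hx

theorem bigCell_eq_zero (t : Fˣ) (x : F) : f (bigCell k t x) = 0 := by
  rw [hf.bigCell_eq_bigCell_one]
  refine eq_zero_of_sum_line_eq_zero (k := k) (G := fun y => f (bigCell k 1 y))
    (fun a ha y => ?_) x
  simpa only [hf.bigCell_eq_bigCell_one, invConj_invConj, Units.val_mk0] using
    hf.sum_bigCell (invConj k (Units.mk0 a ha)) y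

theorem eq_zero_of_conj {g h : SU k F} (hgh : mat (h⁻¹ * g * h) 2 0 ≠ 0) : f g = 0 := by
  rw [hf.eq_bigCell_of_conj (h := h) (t := invConj k (Units.mk0 _ hgh)) (by simp),
    hf.bigCell_eq_zero]

theorem map_upper_mul_torus_eq_zero_of_ne_one {u : Unipotent k F} (hu : u ≠ 1) (t : Fˣ) :
    f (upper u * torus t) = 0 := by
  refine hf.eq_zero_of_conj (h := weyl) ?_
  rw [weyl_inv, mat_mul, mat_mul, mat_mul, mat_upper, mat_torus, mat_weyl]
  simp [Matrix.mul_apply, Fin.sum_univ_three, b_ne_zero hu]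

protected theorem eq_zero (g : SU k F) : f g = 0 := by
  by_cases h : mat g 2 0 = 0
  · obtain ⟨u, t, rfl⟩ := exists_eq_upper_mul_torus h
    by_cases hu : u = 1
    · have hsum := hf.sum_center (torus t)
      simp only [hf.map_mul_comm (torus t)] at hsum
      rw [Finset.sum_eq_single 0 (fun c _ hc => ?_) (by simp), center_zero] at hsum
      · rwa [hu]
      · exact hf.map_upper_mul_torus_eq_zero_of_ne_one
          (fun h1 => hc (Subtype.ext (congrArg Unipotent.b h1))) t
    · exact hf.map_upper_mul_torus_eq_zero_of_ne_one hu t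
  · exact hf.eq_zero_of_conj (h := 1) (by simpa using h)

end IsCuspidalClassFun

end CuspidalClassFunctions

open Unipotent

section ConjugateRepresentations

variable {G : Type*} [Group G] {n : ℕ} {R S : G →* Matrix (Fin n) (Fin n) ℂ}

theorem IsIrred.trace_eq_of_sum_ne_zero [Fintype G] (hR : IsIrred R)
    (h : ∑ g, (S g).trace * (R g⁻¹).trace ≠ 0) (g : G) : (S g).trace = (R g).trace :=
  have ⟨_, hY, hSR⟩ := hR.exists_mul_eq_mul h
  trace_eq_of_mul_eq_mul hY hSR g

/-- The complex conjugate of a matrix representation. -/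
def conjRep (S : G →* Matrix (Fin n) (Fin n) ℂ) : G →* Matrix (Fin n) (Fin n) ℂ :=
  ((starRingEnd ℂ).mapMatrix : Matrix (Fin n) (Fin n) ℂ →+* _).toMonoidHom.comp S

theorem trace_conjRep (S : G →* Matrix (Fin n) (Fin n) ℂ) (g : G) :
    (conjRep S g).trace = starRingEnd ℂ (S g).trace :=
  (AddMonoidHom.map_trace (starRingEnd ℂ).toAddMonoidHom (S g)).symm

theorem IsIrred.star_trace_eq_of_sum_ne_zero [Fintype G] (hR : IsIrred R)
    (h : ∑ g, (S g⁻¹).trace * (R g⁻¹).trace ≠ 0) (g : G) :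
    (S g).trace = starRingEnd ℂ (R g).trace := by
  rw [← hR.trace_eq_of_sum_ne_zero (S := conjRep S)
    (by simpa only [trace_conjRep, ← trace_map_inv] using h) g, trace_conjRep, Complex.conj_conj]

theorem IsIrred.sum_sum_trace_mul_trace_inv_ne_zero [Fintype G] {ι : Type*} [Fintype ι]
    {T : ι → G →* Matrix (Fin n) (Fin n) ℂ} (hR : IsIrred R) {i : ι} (hi : T i = R) :
    ∑ j, ∑ g, (T j g).trace * (R g⁻¹).trace ≠ 0 := by
  classical
  have hpair (j : ι) : ∑ g, (T j g).trace * (R g⁻¹).trace =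
      if ∑ g, (T j g).trace * (R g⁻¹).trace ≠ 0 then ∑ g, (R g).trace * (R g⁻¹).trace else 0 := by
    split_ifs with h
    · simp only [hR.trace_eq_of_sum_ne_zero h]
    · exact not_not.1 h
  have hne := sum_trace_mul_trace_inv_ne_zero R hR.pos
  rw [Finset.sum_congr rfl fun j _ => hpair j, ← Finset.sum_filter, Finset.sum_const]
  exact smul_ne_zero (Finset.card_ne_zero_of_mem
    (Finset.mem_filter.2 ⟨Finset.mem_univ i, hi ▸ hne⟩)) hne

end ConjugateRepresentations

section Reality

variable {k n : ℕ} {F : Type} [Field F] [ExpChar F 2] [Fintype F] [HasCardSq k F]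
  {R : SU k F →* Matrix (Fin n) (Fin n) ℂ}

omit [Fintype F] [HasCardSq k F] in
theorem diagConj_one (g : SU k F) : diagConj 1 g = g :=
  mat_injective <| by rw [mat_diagConj, inv_one, _root_.map_one, one_mul, mul_one]

theorem diagConj_upper_center (y : normOne k F) (c : baseField k F) :
    diagConj y (upper (center c)) = upper (center c) := by
  rw [diagConj_upper]
  exact congrArg upper (Unipotent.ext (by simp) (by simp))

theorem inv_upper_center (c : baseField k F) :
    (upper (center c) : SU k F)⁻¹ = upper (center c) := by
  rw [← map_inv]
  exact congrArg upper (Unipotent.ext (by simp) (by simp [mem_baseField.1 c.2]))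

theorem sum_map_upper_center_eq_zero (h0 : centralProj R 0 = 0) :
    ∑ c : baseField k F, R (upper (center c)) = 0 := by
  have h : ∑ c : Multiplicative (baseField k F), R (upper (center c.toAdd)) = 0 := by
    simpa [centralProj, charProj, centerHom] using h0
  rw [← h]
  exact Fintype.sum_equiv Multiplicative.ofAdd _ _ fun _ => rfl

theorem isCuspidalClassFun_sum_trace_sub [Fintype (normOne k F)] (h0 : centralProj R 0 = 0) :
    IsCuspidalClassFun fun g : SU k F =>
      ∑ y : normOne k F, ((R (diagConj y g)).trace - (R (diagConj y g⁻¹)).trace) where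
  map_mul_comm g h := by
    refine Finset.sum_congr rfl fun y _ => ?_
    simp only [_root_.mul_inv_rev, map_mul]
    rw [Matrix.trace_mul_comm, Matrix.trace_mul_comm (R (diagConj y h⁻¹))]
  map_diagConj z g := by
    simp only [← map_inv, ← diagConj_mul]
    exact Fintype.sum_equiv (Equiv.mulRight z) _ _ fun _ => rfl
  sum_center g := by
    have hsum := sum_map_upper_center_eq_zero h0
    rw [Finset.sum_comm]
    refine Finset.sum_eq_zero fun y _ => ?_
    rw [Finset.sum_sub_distrib]
    simp only [_root_.mul_inv_rev, map_mul, inv_upper_center, diagConj_upper_center]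
    rw [← Matrix.trace_sum, ← Matrix.trace_sum, ← Finset.mul_sum, ← Finset.sum_mul, hsum,
      mul_zero, zero_mul, sub_self]
  map_one := by simp

theorem IsIrred.exists_trace_diagConj_eq_star (hR : IsIrred R) (h0 : centralProj R 0 = 0) :
    ∃ y : normOne k F, ∀ g, (R (diagConj y g)).trace = starRingEnd ℂ (R g).trace := by
  classical
  have hsum : ∑ y : normOne k F, ∑ g, (R (diagConj y g)).trace * (R g⁻¹).trace =
      ∑ y : normOne k F, ∑ g, (R (diagConj y g⁻¹)).trace * (R g⁻¹).trace := by
    rw [Finset.sum_comm, Finset.sum_comm (s := Finset.univ (α := normOne k F))]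
    refine Finset.sum_congr rfl fun g _ => ?_
    have hg := (isCuspidalClassFun_sum_trace_sub h0).eq_zero g
    rw [Finset.sum_sub_distrib, sub_eq_zero] at hg
    rw [← Finset.sum_mul, ← Finset.sum_mul, hg]
  have hne := hR.sum_sum_trace_mul_trace_inv_ne_zero
    (T := fun y : normOne k F => R.comp (diagConj y)) (i := 1)
    (MonoidHom.ext fun g => congrArg R (diagConj_one g))
  obtain ⟨y, -, hy⟩ := Finset.exists_ne_zero_of_sum_ne_zero (hsum ▸ hne)
  exact ⟨y, hR.star_trace_eq_of_sum_ne_zero (S := R.comp (diagConj y)) hy⟩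

/- If twisting by `y` conjugates the character then twisting by `y ^ 2` fixes it, and `y⁻¹` is a
power of `y ^ 2`. -/
theorem IsIrred.star_trace_eq_of_centralProj_zero_eq_zero (hR : IsIrred R)
    (h0 : centralProj R 0 = 0) (g : SU k F) : starRingEnd ℂ (R g).trace = (R g).trace := by
  obtain ⟨y, hy⟩ := hR.exists_trace_diagConj_eq_star h0
  have hpow (m : ℕ) (g : SU k F) : (R (diagConj ((y ^ 2) ^ m) g)).trace = (R g).trace := by
    induction m generalizing g with
    | zero => rw [pow_zero, diagConj_one]
    | succ m ih => rw [pow_succ, diagConj_mul, ih, sq, diagConj_mul, hy, hy, Complex.conj_conj]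
  have hinv : (y ^ 2) ^ 2 ^ (k - 1) = y⁻¹ := by
    refine Subtype.ext (Units.ext ?_)
    rw [← pow_mul, mul_pow_sub_one (exponent_ne_zero k F)]
    simp only [Subgroup.coe_pow, Units.val_pow_eq_pow_val, Subgroup.coe_inv,
      Units.val_inv_eq_inv_val]
    rw [← frob_coe, frob_apply]
  rw [← hy, ← hpow (2 ^ (k - 1)), hinv, ← diagConj_mul, inv_mul_cancel, diagConj_one]

end Reality

section ColBasis

universe u

variable {m : Type u} {J K 𝕜 : Type*} [Fintype m] [Fintype J]

/-- The columns of `C` form a basis of the range of the idempotent `P`, and the rows of `D` are the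
coordinate functionals of this basis. -/
structure IsColBasis [CommRing 𝕜] [DecidableEq J] (P : Matrix m m 𝕜) (C : Matrix m J 𝕜)
    (D : Matrix J m 𝕜) : Prop where
  mul_eq : C * D = P
  mul_eq_one : D * C = 1

theorem exists_col_ne_zero_mulVec_eq [CommRing 𝕜] {P : Matrix m m 𝕜} (hP : IsIdempotentElem P)
    (h0 : P ≠ 0) : ∃ j, P.col j ≠ 0 ∧ P *ᵥ P.col j = P.col j := by
  obtain ⟨j, hj⟩ : ∃ j, P.col j ≠ 0 := by
    by_contra! h
    exact h0 (ext_col h)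
  exact ⟨j, hj, congrArg (fun M => Matrix.col M j) hP.eq⟩

theorem exists_isColBasis [Field 𝕜] {P : Matrix m m 𝕜} (hP : IsIdempotentElem P) :
    ∃ (J : Type u) (_ : Fintype J) (_ : DecidableEq J) (a : J → m) (D : Matrix J m 𝕜),
      IsColBasis P (P.submatrix id a) D := by
  classical
  obtain ⟨J, a, ha, hspan, hli⟩ := exists_linearIndependent' 𝕜 P.col
  have := Fintype.ofInjective a ha
  let C := P.submatrix id a
  have hcol (j : m) : ∃ d, C *ᵥ d = P.col j := by
    have hmem : P.col j ∈ Submodule.span 𝕜 (Set.range C.col) :=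
      hspan ▸ Submodule.subset_span ⟨j, rfl⟩
    rwa [← range_mulVecLin] at hmem
  choose D hD using hcol
  have hCD : C * (Matrix.of D)ᵀ = P := ext_col hD
  have hPC : P * C = C := by
    ext i j
    exact congrFun₂ hP.eq i (a j)
  refine ⟨J, this, inferInstance, a, (Matrix.of D)ᵀ, hCD, ext_col fun j => ?_⟩
  refine mulVec_injective_iff.2 hli ?_
  have hCDC : C * ((Matrix.of D)ᵀ * C) = C * (1 : Matrix J J 𝕜) := by
    rw [← Matrix.mul_assoc, hCD, hPC, Matrix.mul_one]
  exact congrArg (fun M => Matrix.col M j) hCDC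

theorem exists_isColBasis_sum [Field 𝕜] [DecidableEq J] {E : J → Matrix m m 𝕜} {X : Matrix m J 𝕜}
    (hX : ∀ i, X.col i ≠ 0) (hEX : ∀ i j, E i *ᵥ X.col j = if i = j then X.col i else 0)
    (hE : ∀ i y, ∃ c : 𝕜, E i *ᵥ y = c • X.col i) : ∃ D, IsColBasis (∑ i, E i) X D := by
  classical
  choose c hc using hE
  let D : Matrix J m 𝕜 := Matrix.of fun i j => c i (Pi.single j 1)
  have hED (i : J) : E i = vecMulVec (X.col i) (D.row i) := by
    ext l j
    rw [vecMulVec_apply, mul_comm]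
    simpa [D] using congrFun (hc i (Pi.single j 1)) l
  refine ⟨D, ?_, ?_⟩
  · ext l j
    simp only [Matrix.mul_apply, Matrix.sum_apply, hED, vecMulVec_apply]
    rfl
  · ext i j
    have hsmul : (D * X) i j • X.col i = (1 : Matrix J J 𝕜) i j • X.col i := by
      rw [Matrix.one_apply, ite_smul, one_smul, zero_smul, ← hEX, hED, vecMulVec_mulVec]
      exact (op_smul_eq_smul _ _).symm
    exact smul_left_injective 𝕜 (hX i) hsmul

namespace IsColBasis

section CommRing

variable [CommRing 𝕜] [DecidableEq J] [DecidableEq K] [Fintype K] {P P' : Matrix m m 𝕜}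
  {C : Matrix m J 𝕜} {D : Matrix J m 𝕜} {C' : Matrix m K 𝕜} {D' : Matrix K m 𝕜}

theorem mul_left_eq (h : IsColBasis P C D) : P * C = C := by
  rw [← h.mul_eq, Matrix.mul_assoc, h.mul_eq_one, Matrix.mul_one]

theorem mul_right_eq (h : IsColBasis P C D) : D * P = D := by
  rw [← h.mul_eq, ← Matrix.mul_assoc, h.mul_eq_one, Matrix.one_mul]

theorem isIdempotentElem (h : IsColBasis P C D) : IsIdempotentElem P := by
  rw [IsIdempotentElem]
  nth_rw 2 [← h.mul_eq]
  rw [← Matrix.mul_assoc, h.mul_left_eq, h.mul_eq]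

theorem dual_mul_eq_zero (h : IsColBasis P C D) (h' : IsColBasis P' C' D') (hPP' : P * P' = 0) :
    D * C' = 0 := by
  rw [← h.mul_right_eq, ← h'.mul_left_eq, Matrix.mul_assoc, ← Matrix.mul_assoc P, hPP',
    Matrix.zero_mul, Matrix.mul_zero]

theorem add (h : IsColBasis P C D) (h' : IsColBasis P' C' D') (hPP' : P * P' = 0)
    (hP'P : P' * P = 0) : IsColBasis (P + P') (fromCols C C') (fromRows D D') where
  mul_eq := by rw [fromCols_mul_fromRows, h.mul_eq, h'.mul_eq]
  mul_eq_one := by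
    rw [fromRows_mul_fromCols, h.mul_eq_one, h'.mul_eq_one, h.dual_mul_eq_zero h' hPP',
      h'.dual_mul_eq_zero h hP'P, fromBlocks_one]

theorem conj (h : IsColBasis P C D) [DecidableEq m] {Y Y' : Matrix m m 𝕜} (hY : Y' * Y = 1) :
    IsColBasis (Y * P * Y') (Y * C) (D * Y') where
  mul_eq := by rw [← h.mul_eq]; simp only [Matrix.mul_assoc]
  mul_eq_one := by
    rw [Matrix.mul_assoc, ← Matrix.mul_assoc Y', hY, Matrix.one_mul, h.mul_eq_one]

variable [StarRing 𝕜] {H : Matrix m m 𝕜}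

theorem gram_eq_zero (h : IsColBasis P C D) (h' : IsColBasis P' C' D') (hPH : Pᴴ * H = H * P)
    (hPP' : P * P' = 0) : Cᴴ * H * C' = 0 := by
  rw [← h.mul_left_eq, ← h'.mul_left_eq, conjTranspose_mul, Matrix.mul_assoc Cᴴ, hPH,
    Matrix.mul_assoc, Matrix.mul_assoc, ← Matrix.mul_assoc P, hPP', Matrix.zero_mul,
    Matrix.mul_zero, Matrix.mul_zero]

theorem det_gram_fromCols (h : IsColBasis P C D) (h' : IsColBasis P' C' D')
    (hPH : Pᴴ * H = H * P) (hP'H : P'ᴴ * H = H * P') (hPP' : P * P' = 0) (hP'P : P' * P = 0) :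
    ((fromCols C C')ᴴ * H * fromCols C C').det = (Cᴴ * H * C).det * (C'ᴴ * H * C').det := by
  rw [conjTranspose_fromCols_eq_fromRows_conjTranspose, fromRows_mul, fromRows_mul_fromCols,
    h.gram_eq_zero h' hPH hPP', h'.gram_eq_zero h hP'H hP'P, det_fromBlocks_zero₂₁]

end CommRing

end IsColBasis

end ColBasis

section Entries

variable {I J K : Type*} {L : Subfield ℂ}

/-- All entries of the matrix `M` lie in the subfield `L`. -/
def EntriesIn (L : Subfield ℂ) (M : Matrix I J ℂ) : Prop := ∀ i j, M i j ∈ L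

namespace EntriesIn

theorem one [DecidableEq I] : EntriesIn L (1 : Matrix I I ℂ) := fun i j => by
  rw [Matrix.one_apply]
  split_ifs
  exacts [one_mem L, zero_mem L]

theorem add {M N : Matrix I J ℂ} (hM : EntriesIn L M) (hN : EntriesIn L N) :
    EntriesIn L (M + N) := fun i j => add_mem (hM i j) (hN i j)

theorem smul {c : ℂ} {M : Matrix I J ℂ} (hc : c ∈ L) (hM : EntriesIn L M) : EntriesIn L (c • M) :=
  fun i j => mul_mem hc (hM i j)

theorem sum {ι : Type*} {s : Finset ι} {M : ι → Matrix I J ℂ} (hM : ∀ l, EntriesIn L (M l)) :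
    EntriesIn L (∑ l ∈ s, M l) := fun i j => by
  rw [Matrix.sum_apply]
  exact sum_mem fun l _ => hM l i j

theorem mul [Fintype J] {M : Matrix I J ℂ} {N : Matrix J K ℂ} (hM : EntriesIn L M)
    (hN : EntriesIn L N) : EntriesIn L (M * N) := fun i j => by
  rw [Matrix.mul_apply]
  exact sum_mem fun l _ => mul_mem (hM i l) (hN l j)

theorem mulVec_mem [Fintype J] {M : Matrix I J ℂ} (hM : EntriesIn L M) {x : J → ℂ}
    (hx : ∀ j, x j ∈ L) (i : I) : (M *ᵥ x) i ∈ L :=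
  sum_mem fun j _ => mul_mem (hM i j) (hx j)

theorem fromCols {M : Matrix I J ℂ} {N : Matrix I K ℂ} (hM : EntriesIn L M)
    (hN : EntriesIn L N) : EntriesIn L (Matrix.fromCols M N) := fun i j => by
  rcases j with j | j
  exacts [hM i j, hN i j]

theorem submatrix {I' J' : Type*} {M : Matrix I J ℂ} (hM : EntriesIn L M) (a : I' → I)
    (b : J' → J) : EntriesIn L (M.submatrix a b) := fun i j => hM (a i) (b j)

theorem det [Fintype I] [DecidableEq I] {M : Matrix I I ℂ} (hM : EntriesIn L M) : M.det ∈ L := by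
  rw [Matrix.det_apply]
  refine sum_mem fun s _ => ?_
  rw [Units.smul_def, zsmul_eq_mul]
  exact mul_mem (intCast_mem L _) (prod_mem fun i _ => hM _ _)

theorem gram [Fintype I] (hL : ∀ z ∈ L, (starRingEnd ℂ) z ∈ L) {H : Matrix I I ℂ}
    (hH : EntriesIn L H) {C : Matrix I J ℂ} (hC : EntriesIn L C) : EntriesIn L (Cᴴ * H * C) :=
  (mul (fun i j => hL _ (hC j i)) hH).mul hC

end EntriesIn

end Entries

section GramDet

variable {m I J : Type*} [Fintype m] [Fintype I] [Fintype J] [DecidableEq m] [DecidableEq I]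
  [DecidableEq J] {L : Subfield ℂ} {H : Matrix m m ℂ}

theorem IsColBasis.exists_det_mul_norm_eq {C : Matrix m J ℂ} {D : Matrix J m ℂ}
    (h : IsColBasis 1 C D) (hC : EntriesIn L C) :
    ∃ d ∈ L, d ≠ 0 ∧ H.det * (d * (starRingEnd ℂ) d) = (Cᴴ * H * C).det := by
  let e : m ≃ J := Fintype.equivOfCardEq (square_of_invertible C D h.mul_eq h.mul_eq_one)
  have hmul : C.submatrix id e * D.submatrix e id = 1 := by
    rw [submatrix_mul_equiv, h.mul_eq, submatrix_id_id]
  refine ⟨(C.submatrix id e).det, (hC.submatrix id e).det,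
    (isUnit_det_of_right_inverse hmul).ne_zero, ?_⟩
  have hgram : (C.submatrix id e)ᴴ * H * C.submatrix id e = (Cᴴ * H * C).submatrix e e := rfl
  rw [← det_submatrix_equiv_self e (Cᴴ * H * C), ← hgram, det_mul, det_mul, det_conjTranspose,
    starRingEnd_apply]
  ring

theorem IsColBasis.exists_det_mul_norm_eq_mul_sq {Z P Y : Matrix m m ℂ} {X : Matrix m I ℂ}
    {X' : Matrix I m ℂ} {C : Matrix m J ℂ} {D : Matrix J m ℂ} (hX : IsColBasis Z X X')
    (hC : IsColBasis P C D) (hH : IsUnit H.det) (hZP : Z * P = 0) (hPZ : P * Z = 0)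
    (hYP : Y * P = (1 - Z - P) * Y) (hZH : Zᴴ * H = H * Z) (hPH : Pᴴ * H = H * P)
    (hYH : Yᴴ * H * Y = H) (hXL : EntriesIn L X) (hCL : EntriesIn L C)
    (hYL : EntriesIn L Y) :
    ∃ d ∈ L, d ≠ 0 ∧
      H.det * (d * (starRingEnd ℂ) d) = (Xᴴ * H * X).det * (Cᴴ * H * C).det ^ 2 := by
  have hY : H⁻¹ * Yᴴ * H * Y = 1 := by
    rw [Matrix.mul_assoc, Matrix.mul_assoc, ← Matrix.mul_assoc Yᴴ, hYH, nonsing_inv_mul H hH]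
  have hC' : IsColBasis (1 - Z - P) (Y * C) (D * (H⁻¹ * Yᴴ * H)) := by
    have hconj := hC.conj hY
    rwa [hYP, Matrix.mul_assoc, mul_eq_one_comm.1 hY, Matrix.mul_one] at hconj
  have hPP' : P * (1 - Z - P) = 0 := by
    rw [mul_sub, mul_sub, mul_one, hPZ, sub_zero, hC.isIdempotentElem.eq, sub_self]
  have hP'P : (1 - Z - P) * P = 0 := by
    rw [sub_mul, sub_mul, one_mul, hZP, sub_zero, hC.isIdempotentElem.eq, sub_self]
  have hP'H : (1 - Z - P)ᴴ * H = H * (1 - Z - P) := by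
    simp only [conjTranspose_sub, conjTranspose_one, sub_mul, mul_sub, one_mul, mul_one, hZH, hPH]
  have hCC' : IsColBasis (1 - Z) (Matrix.fromCols C (Y * C))
      (Matrix.fromRows D (D * (H⁻¹ * Yᴴ * H))) := by
    simpa using hC.add hC' hPP' hP'P
  have hZZ' : Z * (1 - Z) = 0 := by rw [mul_sub, mul_one, hX.isIdempotentElem.eq, sub_self]
  have hZ'Z : (1 - Z) * Z = 0 := by rw [sub_mul, one_mul, hX.isIdempotentElem.eq, sub_self]
  have hZ'H : (1 - Z)ᴴ * H = H * (1 - Z) := by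
    rw [conjTranspose_sub, conjTranspose_one, sub_mul, mul_sub, one_mul, mul_one, hZH]
  obtain ⟨d, hd, hd0, hdet⟩ := IsColBasis.exists_det_mul_norm_eq (H := H)
    (add_sub_cancel Z 1 ▸ hX.add hCC' hZZ' hZ'Z) (hXL.fromCols (hCL.fromCols (hYL.mul hCL)))
  have hgram : (Y * C)ᴴ * H * (Y * C) = Cᴴ * H * C := by
    conv_rhs => rw [← hYH]
    simp only [conjTranspose_mul, Matrix.mul_assoc]
  refine ⟨d, hd, hd0, ?_⟩
  rw [hdet, hX.det_gram_fromCols hCC' hZH hZ'H hZZ' hZ'Z,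
    hC.det_gram_fromCols hC' hPH hP'H hPP' hP'P, hgram, sq]

end GramDet

section FixedVectors

variable {k : ℕ} {F : Type} [Field F] [Fintype F] [ExpChar F 2] [HasCardSq k F] [DecidableEq F]
  {n : ℕ} {A : MulChar F ℂ} {R : SU k F →* Matrix (Fin n) (Fin n) ℂ} {c : ℂ} {v : Fin n → ℂ}

theorem upper_mulVec_eq (hv : borelProj A R *ᵥ v = v) (u : Unipotent k F) :
    R (upper u) *ᵥ v = v := by
  rw [← hv, mulVec_mulVec, upper_mul_borelProj]

theorem torus_mulVec_eq (hv : borelProj A R *ᵥ v = v) (t : Fˣ) : R (torus t) *ᵥ v = A t • v := by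
  rw [← hv, mulVec_mulVec, torus_mul_borelProj, smul_mulVec]

theorem IsIrred.mulVec_mem_span_pair (hR : IsIrred R) (hv0 : v ≠ 0) (hv : borelProj A R *ᵥ v = v)
    {M : Matrix (Fin n) (Fin n) ℂ} (hM : ∀ u, ∃ a : ℂ, M * R (upper u) = a • M) (y : Fin n → ℂ) :
    M *ᵥ y ∈ Submodule.span ℂ {M *ᵥ v, M *ᵥ (R weyl *ᵥ v)} := by
  have hle : Submodule.span ℂ (Set.range fun g => R g *ᵥ v) ≤
      (Submodule.span ℂ {M *ᵥ v, M *ᵥ (R weyl *ᵥ v)}).comap M.mulVecLin := by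
    rw [Submodule.span_le, Set.range_subset_iff]
    intro g
    rw [SetLike.mem_coe, Submodule.mem_comap, mulVecLin_apply, Submodule.mem_span_pair]
    obtain ⟨⟨u, t⟩ | ⟨u, t, u'⟩, rfl⟩ := (bruhatMap_bijective (k := k)).2 g
    · refine ⟨A t, 0, ?_⟩
      rw [bruhatMap, map_mul, ← mulVec_mulVec, torus_mulVec_eq hv, mulVec_smul,
        upper_mulVec_eq hv, mulVec_smul]
      module
    · obtain ⟨a, ha⟩ := hM u
      refine ⟨0, a * A (invConj k t), ?_⟩
      have hswap : (torus t * weyl : SU k F) = weyl * torus (invConj k t) := by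
        rw [weyl_mul_torus, invConj_invConj]
      rw [bruhatMap, mul_assoc (upper u), hswap, map_mul, ← mulVec_mulVec, upper_mulVec_eq hv,
        map_mul, map_mul, ← mulVec_mulVec, ← mulVec_mulVec _ (R weyl), torus_mulVec_eq hv,
        mulVec_mulVec _ M (R (upper u)), ha, mulVec_smul, mulVec_smul, smul_mulVec]
      module
  exact hle (hR.span_orbit_eq_top hv0 ▸ Submodule.mem_top)

theorem unipotentProj_mul_weyl_mulVec (hA : ∀ t : Fˣ, A (invConj k t) = A t)
    (hv : borelProj A R *ᵥ v = v) :
    unipotentProj R *ᵥ (R weyl *ᵥ v) = borelProj A R *ᵥ (R weyl *ᵥ v) := by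
  have htorus : torusProj A R *ᵥ v = v := by
    rw [← hv, mulVec_mulVec, torusProj_mul_borelProj]
  rw [borelProj, ← mulVec_mulVec, mulVec_mulVec _ (torusProj A R), ← weyl_mul_torusProj hA,
    ← mulVec_mulVec, htorus]

omit [DecidableEq F] in
theorem unipotentProj_mul_upper (u : Unipotent k F) :
    unipotentProj R * R (upper u) = (1 : ℂ) • unipotentProj R :=
  charProj_mul_map (χ := 1) (S := R.comp upper) u

theorem unipotentProj_mulVec_eq (hv : borelProj A R *ᵥ v = v) : unipotentProj R *ᵥ v = v := by
  rw [← hv, mulVec_mulVec, borelProj, ← mul_assoc, isIdempotentElem_unipotentProj.eq]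

theorem IsIrred.unipotentProj_eq_borelProj (hR : IsIrred R)
    (hA : ∀ t : Fˣ, A (invConj k t) = A t) (h0 : borelProj A R ≠ 0) :
    unipotentProj R = borelProj A R := by
  obtain ⟨j, hv0, hv⟩ := exists_col_ne_zero_mulVec_eq isIdempotentElem_borelProj h0
  refine sub_eq_zero.1 (hR.eq_zero_of_mulVec_orbit hv0 fun g => ?_)
  have hmem := hR.mulVec_mem_span_pair hv0 hv (M := unipotentProj R - borelProj A R)
    (fun u => ⟨1, by rw [sub_mul, unipotentProj_mul_upper, borelProj_mul_upper, smul_sub,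
      one_smul, one_smul]⟩) (R g *ᵥ (borelProj A R).col j)
  rwa [sub_mulVec, sub_mulVec, unipotentProj_mulVec_eq hv, hv,
    unipotentProj_mul_weyl_mulVec hA hv, sub_self, sub_self, Set.pair_eq_singleton,
    Submodule.span_zero_singleton, Submodule.mem_bot] at hmem

end FixedVectors

section LinVectors

variable {k : ℕ} {F : Type} [Field F] [Fintype F] [ExpChar F 2] [HasCardSq k F] {n : ℕ}
  {ψ : AddChar F ℂ} {A : MulChar F ℂ} {R : SU k F →* Matrix (Fin n) (Fin n) ℂ}
  {v : Fin n → ℂ} {x : F}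

variable (ψ R v) in
/-- The matrix whose columns are the components in the linear characters of the unipotent group of
the image of `v` under the Weyl element. -/
def linVectors : Matrix (Fin n) F ℂ := Matrix.of fun i x => (linProj ψ R x *ᵥ (R weyl *ᵥ v)) i

theorem col_linVectors : (linVectors ψ R v).col x = linProj ψ R x *ᵥ (R weyl *ᵥ v) := rfl

variable [DecidableEq F]

/-- The squared length of the column with index `x` of `linVectors ψ R v`, relative to that of
`v`. -/
def gramValue (k : ℕ) (x : F) : ℂ := ((2 ^ k) ^ 4)⁻¹ * if x = 0 then 1 else 2 ^ k + 1

omit [Fintype F] [ExpChar F 2] [HasCardSq k F] in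
theorem gramValue_ne_zero : gramValue k x ≠ 0 := by
  have h1 : (2 : ℂ) ^ k + 1 ≠ 0 := by exact_mod_cast Nat.succ_ne_zero (2 ^ k)
  rw [gramValue]
  split_ifs <;> simp [h1]

theorem HasHeckeEigenvalue.mul_weyl_mul_linProj_mul_weyl_mul
    (h : HasHeckeEigenvalue A R ((2 ^ k) ^ 2)⁻¹) (hA1 : A ≠ 1) (hψ : ψ ≠ 1) :
    borelProj A R * (R weyl * linProj ψ R x * R weyl) * borelProj A R =
      gramValue k x • borelProj A R := by
  have hA := h.apply_invConj (by simp)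
  have hbase := apply_eq_one_of_apply_invConj hA
  have hsum := sum_mul_mulChar_unipotent (k := k) hbase (f := fun a => ψ (x * a)) (by simp)
  rw [sum_mulChar_add_frob_eq_one_of_ne_one hbase hA1] at hsum
  simp only [mul_comm x, AddChar.sum_mulShift x (AddChar.IsPrimitive.of_ne_one hψ),
    HasCardSq.card_eq (k := k)] at hsum
  rw [linProj, h.mul_weyl_mul_charProj_mul_weyl_mul hA]
  simp only [linChar_apply, Unipotent.inv_a, mul_comm x, hsum, gramValue]
  congr 1
  have h0 : (2 : ℂ) ^ k ≠ 0 := pow_ne_zero k two_ne_zero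
  split_ifs <;> push_cast <;> field_simp <;> ring

theorem HasHeckeEigenvalue.borelProj_mulVec_weyl_mulVec {c : ℂ} (h : HasHeckeEigenvalue A R c)
    (hv : borelProj A R *ᵥ v = v) : borelProj A R *ᵥ (R weyl *ᵥ v) = c • v := by
  conv_lhs => rw [← hv, mulVec_mulVec, mulVec_mulVec, h.mul_weyl_mul, smul_mulVec, hv]

theorem HasHeckeEigenvalue.exists_linProj_mulVec_eq_smul {c : ℂ} (h : HasHeckeEigenvalue A R c)
    (hc : c ≠ 0) (hψ : ψ ≠ 1) (hv : borelProj A R *ᵥ v = v) (x : F) :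
    ∃ a : ℂ, linProj ψ R x *ᵥ v = a • (linVectors ψ R v).col x := by
  rcases eq_or_ne x 0 with rfl | hx
  · refine ⟨c⁻¹, ?_⟩
    rw [col_linVectors, linProj_zero, unipotentProj_mulVec_eq hv,
      unipotentProj_mul_weyl_mulVec (h.apply_invConj hc) hv, h.borelProj_mulVec_weyl_mulVec hv,
      inv_smul_smul₀ hc]
  · refine ⟨0, ?_⟩
    rw [← unipotentProj_mulVec_eq hv, ← linProj_zero ψ, mulVec_mulVec,
      linProj_mul_linProj_of_ne R hψ hx, zero_mulVec, zero_smul]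

theorem HasHeckeEigenvalue.borelProj_mulVec_weyl_mulVec_col_linVectors
    (h : HasHeckeEigenvalue A R ((2 ^ k) ^ 2)⁻¹) (hA1 : A ≠ 1) (hψ : ψ ≠ 1)
    (hv : borelProj A R *ᵥ v = v) :
    borelProj A R *ᵥ (R weyl *ᵥ (linVectors ψ R v).col x) = gramValue k x • v := by
  have hmul := congrArg (· *ᵥ v) (h.mul_weyl_mul_linProj_mul_weyl_mul hA1 hψ (x := x))
  rw [col_linVectors]
  simpa only [← mulVec_mulVec, smul_mulVec, hv] using hmul

theorem HasHeckeEigenvalue.exists_isColBasis_linVectors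
    (h : HasHeckeEigenvalue A R ((2 ^ k) ^ 2)⁻¹) (hR : IsIrred R) (hA1 : A ≠ 1) (hψ : ψ ≠ 1)
    (hv0 : v ≠ 0) (hv : borelProj A R *ᵥ v = v) :
    ∃ D, IsColBasis (centralProj R 0) (linVectors ψ R v) D := by
  rw [centralProj_zero hψ]
  refine exists_isColBasis_sum (fun x h0 => ?_) (fun x y => ?_) fun x y => ?_
  · have hcol := h.borelProj_mulVec_weyl_mulVec_col_linVectors hA1 hψ hv (x := x)
    rw [h0, mulVec_zero, mulVec_zero] at hcol
    exact smul_ne_zero gramValue_ne_zero hv0 hcol.symm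
  · rw [col_linVectors, mulVec_mulVec]
    split_ifs with hxy
    · rw [hxy, (isIdempotentElem_linProj ψ R y).eq, col_linVectors]
    · rw [linProj_mul_linProj_of_ne R hψ hxy, zero_mulVec]
  · obtain ⟨a, ha⟩ := h.exists_linProj_mulVec_eq_smul (by simp) hψ hv x
    have hmem := hR.mulVec_mem_span_pair hv0 hv (fun u => ⟨_, linProj_mul_upper ψ R x u⟩) y
    rw [ha, Submodule.mem_span_pair] at hmem
    obtain ⟨b, d, hbd⟩ := hmem
    exact ⟨b * a + d, by rw [← hbd, add_smul, mul_smul]; rfl⟩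

end LinVectors

section Gram

variable {k : ℕ} {F : Type} [Field F] [Fintype F] [ExpChar F 2] [HasCardSq k F] {n : ℕ}
  {ψ : AddChar F ℂ} {A : MulChar F ℂ} {R : SU k F →* Matrix (Fin n) (Fin n) ℂ}
  {v : Fin n → ℂ} {H : Matrix (Fin n) (Fin n) ℂ}

theorem star_mulVec_dotProduct_mulVec {M M' : Matrix (Fin n) (Fin n) ℂ} (hM : Mᴴ * H = H * M')
    (x y : Fin n → ℂ) : star (M *ᵥ x) ⬝ᵥ (H *ᵥ y) = star x ⬝ᵥ (H *ᵥ (M' *ᵥ y)) := by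
  rw [star_mulVec, ← dotProduct_mulVec, mulVec_mulVec, hM, mulVec_mulVec]

theorem conjTranspose_map_mul {G : Type*} [Group G] {S : G →* Matrix (Fin n) (Fin n) ℂ}
    (hH : ∀ g, (S g)ᴴ * H * S g = H) (g : G) : (S g)ᴴ * H = H * S g⁻¹ := by
  rw [← hH g, mul_assoc _ (S g), map_mul_map_inv, mul_one, hH]

variable (hH : ∀ g, (R g)ᴴ * H * R g = H)
include hH

theorem linProj_conjTranspose_mul (x : F) : (linProj ψ R x)ᴴ * H = H * linProj ψ R x :=
  charProj_conjTranspose_mul fun _ => hH _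

variable [DecidableEq F]

theorem borelProj_conjTranspose_mul : (borelProj A R)ᴴ * H = H * borelProj A R := by
  have hunip : (unipotentProj R)ᴴ * H = H * unipotentProj R :=
    charProj_conjTranspose_mul fun _ => hH _
  have htorus : (torusProj A R)ᴴ * H = H * torusProj A R :=
    charProj_conjTranspose_mul fun _ => hH _
  rw [borelProj, conjTranspose_mul, mul_assoc, hunip, ← mul_assoc, htorus, mul_assoc,
    torusProj_mul_unipotentProj]

theorem HasHeckeEigenvalue.gram_linVectors (h : HasHeckeEigenvalue A R ((2 ^ k) ^ 2)⁻¹)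
    (hA1 : A ≠ 1) (hψ : ψ ≠ 1) (hv : borelProj A R *ᵥ v = v) :
    (linVectors ψ R v)ᴴ * H * linVectors ψ R v =
      diagonal fun x => gramValue k x * (star v ⬝ᵥ (H *ᵥ v)) := by
  ext x y
  have hentry : ((linVectors ψ R v)ᴴ * H * linVectors ψ R v) x y =
      star ((linVectors ψ R v).col x) ⬝ᵥ (H *ᵥ (linVectors ψ R v).col y) := by
    rw [Matrix.mul_assoc]
    rfl
  rw [hentry, col_linVectors, star_mulVec_dotProduct_mulVec (linProj_conjTranspose_mul hH x),
    star_mulVec_dotProduct_mulVec (conjTranspose_map_mul hH weyl), weyl_inv, col_linVectors,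
    mulVec_mulVec _ (linProj ψ R x), diagonal_apply]
  split_ifs with hxy
  · rw [hxy, (isIdempotentElem_linProj ψ R y).eq, ← col_linVectors]
    conv_lhs => rw [← hv, star_mulVec_dotProduct_mulVec (borelProj_conjTranspose_mul hH), hv,
      h.borelProj_mulVec_weyl_mulVec_col_linVectors hA1 hψ hv, mulVec_smul, dotProduct_smul,
      smul_eq_mul]
  · rw [linProj_mul_linProj_of_ne R hψ hxy, zero_mulVec, mulVec_zero, mulVec_zero,
      dotProduct_zero]

end Gram

section FlipBlocks

variable {k : ℕ} {F : Type} [Field F] [Fintype F] [ExpChar F 2] [HasCardSq k F] {n : ℕ}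
  {R : SU k F →* Matrix (Fin n) (Fin n) ℂ} {H : Matrix (Fin n) (Fin n) ℂ}
  {l : CentralChar k F} {e y : CentralChar k F → Unipotent k F}

/-- The operator acting on the `l`-isotypic component of the centre of the unipotent group as the
element `y l`. -/
def blockUpper (R : SU k F →* Matrix (Fin n) (Fin n) ℂ) (y : CentralChar k F → Unipotent k F) :
    Matrix (Fin n) (Fin n) ℂ :=
  ∑ l, R (upper (y l)) * centralProj R l

theorem blockUpper_mul_centralProj :
    blockUpper R y * centralProj R l = R (upper (y l)) * centralProj R l := by
  rw [blockUpper, Finset.sum_mul, Finset.sum_eq_single_of_mem l (Finset.mem_univ l) fun m _ hm => by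
    rw [mul_assoc, centralProj_mul_centralProj_of_ne R hm, mul_zero], mul_assoc,
    (isIdempotentElem_centralProj R l).eq]

theorem centralProj_mul_blockUpper :
    centralProj R l * blockUpper R y = R (upper (y l)) * centralProj R l := by
  simp only [blockUpper, Finset.mul_sum, ← mul_assoc, centralProj_mul_upper]
  rw [Finset.sum_eq_single_of_mem l (Finset.mem_univ l) fun m _ hm => by
    rw [mul_assoc, centralProj_mul_centralProj_of_ne R hm.symm, mul_zero], mul_assoc,
    (isIdempotentElem_centralProj R l).eq]

section Adjoint

variable (hH : ∀ g, (R g)ᴴ * H * R g = H)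
include hH

theorem centralProj_conjTranspose_mul (l : CentralChar k F) :
    (centralProj R l)ᴴ * H = H * centralProj R l :=
  charProj_conjTranspose_mul fun _ => hH _

theorem blockUpper_conjTranspose_mul_mul : (blockUpper R y)ᴴ * H * blockUpper R y = H := by
  have hblock (l : CentralChar k F) :
      (R (upper (y l)) * centralProj R l)ᴴ * H * blockUpper R y = H * centralProj R l := by
    rw [conjTranspose_mul, mul_assoc _ _ H, conjTranspose_map_mul hH, ← mul_assoc,
      centralProj_conjTranspose_mul hH, ← map_inv, mul_assoc H, centralProj_mul_upper, mul_assoc,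
      mul_assoc, centralProj_mul_blockUpper, map_inv, ← mul_assoc (R _⁻¹), map_inv_mul_map,
      one_mul]
  nth_rw 1 [blockUpper]
  rw [conjTranspose_sum, Finset.sum_mul, Finset.sum_mul, Finset.sum_congr rfl fun l _ => hblock l,
    ← Finset.mul_sum, sum_centralProj, mul_one]

theorem IsFlipPair.posProj_conjTranspose_mul {e y : Unipotent k F} (h : IsFlipPair l e y) :
    (posProj R l e)ᴴ * H = H * posProj R l e := by
  obtain ⟨c, hsq, hc⟩ := h.sq_eq
  have hinv : R (upper e)⁻¹ * centralProj R l = R (upper e) * centralProj R l := by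
    conv_lhs => rw [← one_smul ℂ (centralProj R l), ← hc, ← center_mul_centralProj, ← hsq,
      map_mul, map_mul, mul_assoc, ← mul_assoc, map_inv_mul_map, one_mul]
  have hcomm : centralProj R l * R (upper e)⁻¹ = R (upper e)⁻¹ * centralProj R l := by
    rw [← map_inv, centralProj_mul_upper]
  rw [posProj, conjTranspose_smul, conjTranspose_mul, Matrix.smul_mul, Matrix.mul_smul, mul_assoc,
    conjTranspose_add, conjTranspose_one, add_mul, one_mul, conjTranspose_map_mul hH, mul_add,
    centralProj_conjTranspose_mul hH, ← mul_assoc _ H, centralProj_conjTranspose_mul hH,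
    mul_assoc H, hcomm, hinv, ← mul_add, add_mul, one_mul, star_inv₀, star_ofNat]

end Adjoint

variable [DecidableEq (CentralChar k F)]

/-- The projection onto the sum over `l ≠ 0` of the `1`-eigenspaces of `e l` in the `l`-isotypic
component of the centre of the unipotent group. -/
def posSum (R : SU k F →* Matrix (Fin n) (Fin n) ℂ) (e : CentralChar k F → Unipotent k F) :
    Matrix (Fin n) (Fin n) ℂ :=
  ∑ l ∈ Finset.univ.erase 0, posProj R l (e l)

theorem centralProj_zero_mul_posSum : centralProj R 0 * posSum R e = 0 := by
  rw [posSum, Finset.mul_sum]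
  refine Finset.sum_eq_zero fun m hm => ?_
  rw [← centralProj_mul_posProj, ← mul_assoc,
    centralProj_mul_centralProj_of_ne R (Finset.ne_of_mem_erase hm).symm, zero_mul]

theorem posSum_mul_centralProj_zero : posSum R e * centralProj R 0 = 0 := by
  rw [posSum, Finset.sum_mul]
  refine Finset.sum_eq_zero fun m hm => ?_
  rw [← posProj_mul_centralProj, mul_assoc,
    centralProj_mul_centralProj_of_ne R (Finset.ne_of_mem_erase hm), mul_zero]

theorem centralProj_mul_posSum (hl : l ≠ 0) : centralProj R l * posSum R e = posProj R l (e l) := by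
  rw [posSum, Finset.mul_sum, Finset.sum_eq_single_of_mem l
    (Finset.mem_erase.2 ⟨hl, Finset.mem_univ l⟩) fun m _ hm => by
      rw [← centralProj_mul_posProj, ← mul_assoc, centralProj_mul_centralProj_of_ne R hm.symm,
        zero_mul], centralProj_mul_posProj]

variable (h : ∀ l ≠ 0, IsFlipPair l (e l) (y l))
include h

theorem isIdempotentElem_posSum : IsIdempotentElem (posSum R e) := by
  rw [IsIdempotentElem]
  nth_rw 1 [posSum]
  rw [Finset.sum_mul]
  refine Finset.sum_congr rfl fun l hl => ?_
  have hl0 := Finset.ne_of_mem_erase hl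
  nth_rw 1 [← posProj_mul_centralProj]
  rw [mul_assoc, centralProj_mul_posSum hl0, ((h l hl0).isIdempotentElem_posProj R).eq]

theorem blockUpper_mul_posSum :
    blockUpper R y * posSum R e = (1 - centralProj R 0 - posSum R e) * blockUpper R y := by
  have hsplit : 1 - centralProj R 0 - posSum R e =
      ∑ l ∈ Finset.univ.erase 0, (centralProj R l - posProj R l (e l)) := by
    rw [Finset.sum_sub_distrib, ← sum_centralProj R, posSum,
      ← Finset.add_sum_erase _ _ (Finset.mem_univ 0), add_sub_cancel_left]
  rw [hsplit, Finset.sum_mul, posSum, Finset.mul_sum]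
  refine Finset.sum_congr rfl fun l hl => ?_
  have hneg : (centralProj R l - posProj R l (e l)) * centralProj R l =
      centralProj R l - posProj R l (e l) := by
    rw [sub_mul, (isIdempotentElem_centralProj R l).eq, posProj_mul_centralProj]
  rw [← hneg, mul_assoc _ _ (blockUpper R y), centralProj_mul_blockUpper,
    ← centralProj_mul_upper, ← mul_assoc, hneg,
    ← (h l (Finset.ne_of_mem_erase hl)).upper_mul_posProj_eq, ← centralProj_mul_posProj,
    ← mul_assoc, blockUpper_mul_centralProj, mul_assoc]

theorem posSum_conjTranspose_mul (hH : ∀ g, (R g)ᴴ * H * R g = H) :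
    (posSum R e)ᴴ * H = H * posSum R e := by
  rw [posSum, conjTranspose_sum, Finset.sum_mul, Finset.mul_sum]
  exact Finset.sum_congr rfl fun l hl =>
    (h l (Finset.ne_of_mem_erase hl)).posProj_conjTranspose_mul hH

end FlipBlocks

section Rationality

theorem addChar_mem {V : Type*} [Ring V] [CharP V 2] (ψ : AddChar V ℂ) (L : Subfield ℂ) (a : V) :
    ψ a ∈ L := by
  rcases mul_self_eq_one_iff.1 (addChar_mul_self ψ a) with h | h <;> rw [h]
  exacts [one_mem L, neg_mem (one_mem L)]

theorem EntriesIn.charProj {G : Type*} [Group G] [Fintype G] {n : ℕ} {L : Subfield ℂ}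
    {S : G →* Matrix (Fin n) (Fin n) ℂ} (hS : ∀ g, EntriesIn L (S g)) {χ : G →* ℂ}
    (hχ : ∀ g, χ g ∈ L) : EntriesIn L (Paper.charProj χ S) :=
  .smul (inv_mem (natCast_mem L _)) (.sum fun g => .smul (hχ g⁻¹) (hS g))

variable {k : ℕ} {F : Type} [Field F] [Fintype F] [ExpChar F 2] [HasCardSq k F] {n : ℕ}
  {R : SU k F →* Matrix (Fin n) (Fin n) ℂ} {L : Subfield ℂ} (hRL : ∀ g, EntriesIn L (R g))
include hRL

theorem entriesIn_linProj (ψ : AddChar F ℂ) (x : F) : EntriesIn L (linProj ψ R x) :=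
  .charProj (S := R.comp upper) (fun _ => hRL _) fun _ => addChar_mem ψ L _

theorem entriesIn_unipotentProj : EntriesIn L (unipotentProj R) :=
  linProj_zero (1 : AddChar F ℂ) R ▸ entriesIn_linProj hRL 1 0

theorem entriesIn_linVectors (ψ : AddChar F ℂ) {v : Fin n → ℂ} (hv : ∀ i, v i ∈ L) :
    EntriesIn L (linVectors ψ R v) := fun i x =>
  (entriesIn_linProj hRL ψ x).mulVec_mem ((hRL weyl).mulVec_mem hv) i

theorem entriesIn_centralProj (l : CentralChar k F) : EntriesIn L (centralProj R l) :=
  .charProj (S := R.comp (upper.comp centerHom)) (fun _ => hRL _) fun _ => addChar_mem l L _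

theorem entriesIn_posSum [DecidableEq (CentralChar k F)] (e : CentralChar k F → Unipotent k F) :
    EntriesIn L (posSum R e) :=
  .sum fun l => .smul (inv_mem (ofNat_mem L 2))
    ((EntriesIn.one.add (hRL _)).mul (entriesIn_centralProj hRL l))

theorem entriesIn_blockUpper (y : CentralChar k F → Unipotent k F) :
    EntriesIn L (blockUpper R y) :=
  .sum fun l => (hRL _).mul (entriesIn_centralProj hRL l)

end Rationality

section Discriminant

theorem star_dotProduct_mulVec_self {I : Type*} [Fintype I] {H : Matrix I I ℂ} (hH : Hᴴ = H)
    (v : I → ℂ) : star (star v ⬝ᵥ (H *ᵥ v)) = star v ⬝ᵥ (H *ᵥ v) := by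
  rw [← star_dotProduct, star_mulVec, hH, dotProduct_mulVec]

theorem star_det_gram {I J : Type*} [Fintype I] [Fintype J] [DecidableEq J] {H : Matrix I I ℂ}
    (hH : Hᴴ = H) (C : Matrix I J ℂ) : star (Cᴴ * H * C).det = (Cᴴ * H * C).det := by
  rw [← det_conjTranspose, conjTranspose_mul, conjTranspose_mul, hH, conjTranspose_conjTranspose,
    Matrix.mul_assoc]

theorem prod_gramValue_mul {k N : ℕ} {F : Type} [Field F] [Fintype F] [DecidableEq F]
    (hN : Fintype.card F = N + N) (a : ℂ) :
    ∏ x : F, gramValue k x * a =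
      (2 ^ k + 1) * (((2 ^ k + 1) * ((2 ^ k) ^ 4)⁻¹ * a) ^ N * (2 ^ k + 1)⁻¹) ^ 2 := by
  have h1 : (2 : ℂ) ^ k + 1 ≠ 0 := by exact_mod_cast Nat.succ_ne_zero (2 ^ k)
  have hx (x : F) : gramValue k x * a =
      ((2 ^ k + 1) * ((2 ^ k) ^ 4)⁻¹ * a) * if x = 0 then (2 ^ k + 1)⁻¹ else 1 := by
    rw [gramValue]
    split_ifs <;> field_simp
  simp only [hx]
  rw [Finset.prod_mul_distrib, Finset.prod_const, Finset.card_univ, hN, pow_add,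
    Fintype.prod_ite_eq']
  field_simp

variable {k : ℕ} {F : Type} [Field F] [Fintype F] [ExpChar F 2] [HasCardSq k F] [DecidableEq F]
  {n : ℕ} {A : MulChar F ℂ} {R : SU k F →* Matrix (Fin n) (Fin n) ℂ} {L : Subfield ℂ}
  {H : Matrix (Fin n) (Fin n) ℂ}

theorem HasHeckeEigenvalue.exists_fixed_vector (h : HasHeckeEigenvalue A R ((2 ^ k) ^ 2)⁻¹)
    (hR : IsIrred R) (hRL : ∀ g, EntriesIn L (R g)) :
    ∃ v, v ≠ 0 ∧ borelProj A R *ᵥ v = v ∧ ∀ i, v i ∈ L := by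
  have h0 : borelProj A R ≠ 0 := fun h0 => by simpa [h0] using h.trace_eq_one
  have heq := hR.unipotentProj_eq_borelProj (h.apply_invConj (by simp)) h0
  obtain ⟨j, hv0, hv⟩ := exists_col_ne_zero_mulVec_eq isIdempotentElem_borelProj h0
  exact ⟨_, hv0, hv, fun i => heq ▸ entriesIn_unipotentProj hRL i j⟩

theorem HasHeckeEigenvalue.exists_det_mul_norm_eq (h : HasHeckeEigenvalue A R ((2 ^ k) ^ 2)⁻¹)
    (hk : 2 ≤ k) (hR : IsIrred R) (hA1 : A ≠ 1) (hRL : ∀ g, EntriesIn L (R g))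
    (hL : ∀ z ∈ L, (starRingEnd ℂ) z ∈ L) (hHL : EntriesIn L H) (hH : Hᴴ = H)
    (hdet : IsUnit H.det) (hinv : ∀ g, (R g)ᴴ * H * R g = H) :
    ∃ d ∈ L, d ≠ 0 ∧ ∃ r ∈ L, (starRingEnd ℂ) r = r ∧
      H.det * (d * (starRingEnd ℂ) d) = (2 ^ k + 1) * r ^ 2 := by
  classical
  obtain ⟨ψ, hψ⟩ := exists_isFrobFixed (F := F) k
  choose! e y hflip using fun l (hl : l ≠ 0) => exists_isFlipPair (k := k) (F := F) hk hl
  obtain ⟨v, hv0, hv, hvL⟩ := h.exists_fixed_vector hR hRL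
  obtain ⟨X', hX⟩ := h.exists_isColBasis_linVectors hR hA1 hψ.ne_one hv0 hv
  obtain ⟨J, _, _, a, D, hC⟩ := exists_isColBasis (isIdempotentElem_posSum (R := R) hflip)
  have hCL := (entriesIn_posSum hRL e).submatrix id a
  obtain ⟨d, hd, hd0, hdd⟩ := hX.exists_det_mul_norm_eq_mul_sq hC hdet centralProj_zero_mul_posSum
    posSum_mul_centralProj_zero (blockUpper_mul_posSum hflip) (centralProj_conjTranspose_mul hinv 0)
    (posSum_conjTranspose_mul hflip hinv) (blockUpper_conjTranspose_mul_mul hinv)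
    (entriesIn_linVectors hRL ψ hvL) hCL (entriesIn_blockUpper hRL y)
  obtain ⟨N, hN⟩ : Even (Fintype.card F) := by
    rw [HasCardSq.card_eq (k := k)]
    exact (even_two.pow_of_ne_zero (exponent_ne_zero k F)).pow_of_ne_zero two_ne_zero
  rw [h.gram_linVectors hinv hA1 hψ.ne_one hv, det_diagonal, prod_gramValue_mul hN,
    mul_assoc, ← mul_pow] at hdd
  have hq : (2 : ℂ) ^ k ∈ L := pow_mem (ofNat_mem L 2) k
  have hq1 : (2 : ℂ) ^ k + 1 ∈ L := add_mem hq (one_mem L)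
  have hvv : star v ⬝ᵥ (H *ᵥ v) ∈ L :=
    sum_mem fun i _ => mul_mem (hL _ (hvL i)) (hHL.mulVec_mem hvL i)
  refine ⟨d, hd, hd0, _, mul_mem (mul_mem (pow_mem (mul_mem (mul_mem hq1 (inv_mem (pow_mem hq 4)))
    hvv) N) (inv_mem hq1)) (hHL.gram hL hCL).det, ?_, hdd⟩
  simp only [map_mul, map_pow, map_inv₀, map_add, map_one, starRingEnd_apply, star_ofNat,
    star_dotProduct_mulVec_self hH, star_det_gram hH]

theorem HasHeckeEigenvalue.exists_det_eq_mul_norm (h : HasHeckeEigenvalue A R ((2 ^ k) ^ 2)⁻¹)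
    (hk : 2 ≤ k) (hR : IsIrred R) (hA1 : A ≠ 1) (hRL : ∀ g, EntriesIn L (R g))
    (hL : ∀ z ∈ L, (starRingEnd ℂ) z ∈ L) (hHL : EntriesIn L H) (hH : Hᴴ = H)
    (hdet : IsUnit H.det) (hinv : ∀ g, (R g)ᴴ * H * R g = H) :
    ∃ z ∈ L, z ≠ 0 ∧ H.det = (2 ^ k + 1) * (z * (starRingEnd ℂ) z) := by
  obtain ⟨d, hd, hd0, r, hr, hrr, hdd⟩ :=
    h.exists_det_mul_norm_eq hk hR hA1 hRL hL hHL hH hdet hinv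
  have hd1 : (starRingEnd ℂ) d ≠ 0 := (map_ne_zero _).2 hd0
  have hr0 : r ≠ 0 := by
    rintro rfl
    simp [hdet.ne_zero, hd0] at hdd
  refine ⟨r / d, div_mem hr hd, div_ne_zero hr0 hd0, ?_⟩
  rw [map_div₀, hrr]
  field_simp
  linear_combination hdd

end Discriminant

section CharacterFields

variable {G : Type} [Group G] {n : ℕ}

theorem NotReal.not_forall_conj_eq {χ : G → ℂ} (h : NotReal χ) :
    ¬∀ g, starRingEnd ℂ (χ g) = χ g := by
  refine fun hreal => h (Subfield.closure_le.2 ?_)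
  rintro _ ⟨g, rfl⟩
  obtain ⟨r, hr⟩ := Complex.conj_eq_iff_real.1 (hreal g)
  exact hr ▸ Subfield.subset_closure (Set.mem_range_self r)

/-- A representation `ρ` with its values regarded as matrices. -/
def matrixRep (ρ : G →* GL (Fin n) ℂ) : G →* Matrix (Fin n) (Fin n) ℂ := (Units.coeHom _).comp ρ

theorem trace_matrixRep (ρ : G →* GL (Fin n) ℂ) (g : G) : (matrixRep ρ g).trace = charOf ρ g := rfl

theorem charOf_one (ρ : G →* GL (Fin n) ℂ) : charOf ρ 1 = n := by
  rw [← trace_matrixRep, map_one, trace_one, Fintype.card_fin]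

theorem IsIrredRep.isIrred {ρ : G →* GL (Fin n) ℂ} (h : IsIrredRep ρ) : IsIrred (matrixRep ρ) :=
  ⟨h.1, h.2⟩

variable [Finite G]

theorem conj_mem_charField (ρ : G →* GL (Fin n) ℂ) {z : ℂ} (hz : z ∈ charField (charOf ρ)) :
    starRingEnd ℂ z ∈ charField (charOf ρ) := by
  have := Fintype.ofFinite G
  have hle : charField (charOf ρ) ≤ (charField (charOf ρ)).comap (starRingEnd ℂ) := by
    refine Subfield.closure_le.2 ?_
    rintro _ ⟨g, rfl⟩
    have hconj : starRingEnd ℂ (charOf ρ g) = charOf ρ g⁻¹ := (trace_map_inv (matrixRep ρ) g).symm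
    rw [SetLike.mem_coe, Subfield.mem_comap, hconj]
    exact Subfield.subset_closure (Set.mem_range_self g⁻¹)
  exact hle hz

theorem IsIrred.of_trace_eq {R S : G →* Matrix (Fin n) (Fin n) ℂ} (hR : IsIrred R)
    (h : ∀ g, (S g).trace = (R g).trace) : IsIrred S := by
  have := Fintype.ofFinite G
  obtain ⟨Y, hY, hYR⟩ := hR.exists_mul_eq_mul (S := S) <| by
    simpa only [h] using sum_trace_mul_trace_inv_ne_zero R hR.pos
  exact hR.of_mul_eq_mul hY hYR

end CharacterFields

section EvenDegree

variable {k : ℕ} {F : Type} [Field F] [Fintype F] [ExpChar F 2] [HasCardSq k F] {n : ℕ}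

theorem IsIrred.exists_hasHeckeEigenvalue_of_even [DecidableEq F]
    {R : SU k F →* Matrix (Fin n) (Fin n) ℂ} (hR : IsIrred R) (hk : 2 ≤ k) (hn : Even n)
    (hreal : ¬∀ g, starRingEnd ℂ (R g).trace = (R g).trace) :
    ∃ A : MulChar F ℂ, A ≠ 1 ∧ HasHeckeEigenvalue A R ((2 ^ k) ^ 2)⁻¹ := by
  have h0 : unipotentProj R ≠ 0 := fun h0 => hreal
    (hR.star_trace_eq_of_centralProj_zero_eq_zero (hR.centralProj_zero_eq_zero hk hn h0))
  obtain ⟨A, hA⟩ := exists_borelProj_ne_zero h0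
  obtain ⟨c, hc⟩ := hR.exists_hasHeckeEigenvalue hA
  obtain ⟨hA1, rfl⟩ := hc.eq_of_even hR hn hreal
  exact ⟨A, hA1, hc⟩

theorem neg_one_pow_mul_pred_div_two {n : ℕ} (hn : 4 ∣ n) : (-1 : ℂ) ^ (n * (n - 1) / 2) = 1 := by
  obtain ⟨m, rfl⟩ := hn
  have hdiv : 4 * m * (4 * m - 1) / 2 = 2 * (m * (4 * m - 1)) := by
    rw [show 4 * m * (4 * m - 1) = 2 * (2 * (m * (4 * m - 1))) by ring,
      Nat.mul_div_cancel_left _ two_pos]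
  rw [hdiv, pow_mul, neg_one_sq, one_pow]

variable {ρ : SU k F →* GL (Fin n) ℂ} (hρ : IsIrredRep ρ) (hk : 2 ≤ k) (hn : Even n)
  (hreal : ¬∀ g, starRingEnd ℂ (charOf ρ g) = charOf ρ g)
include hρ hk hn hreal

theorem IsIrredRep.degree_eq_of_even : n + (2 ^ k) ^ 2 = (2 ^ k) ^ 3 + 2 ^ k := by
  classical
  obtain ⟨A, -, h⟩ := hρ.isIrred.exists_hasHeckeEigenvalue_of_even hk hn hreal
  exact h.degree_eq hρ.isIrred

theorem IsIrredRep.four_dvd_of_even : 4 ∣ n := by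
  have hq : 4 ∣ 2 ^ k := pow_dvd_pow 2 hk
  rw [← Nat.dvd_add_left (hq.trans (dvd_pow_self _ two_ne_zero)),
    hρ.degree_eq_of_even hk hn hreal]
  exact dvd_add (hq.trans (dvd_pow_self _ three_ne_zero)) hq

theorem IsIrredRep.hasUnitaryDisc_of_even : HasUnitaryDisc (charOf ρ) (2 ^ k + 1) := by
  classical
  intro n' ρ' hρρ' hL H hHL hdet hH hinv
  obtain rfl : n = n' := by
    rw [← Nat.cast_inj (R := ℂ), ← charOf_one ρ, hρρ', charOf_one]
  have hρ' : IsIrred (matrixRep ρ') :=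
    hρ.isIrred.of_trace_eq fun g => (congrFun hρρ' g).symm
  have hreal' : ¬∀ g, starRingEnd ℂ (matrixRep ρ' g).trace = (matrixRep ρ' g).trace := by
    simpa only [trace_matrixRep, ← hρρ'] using hreal
  obtain ⟨A, hA1, h⟩ := hρ'.exists_hasHeckeEigenvalue_of_even hk hn hreal'
  rw [neg_one_pow_mul_pred_div_two (hρ.four_dvd_of_even hk hn hreal), one_mul]
  exact h.exists_det_eq_mul_norm hk hρ' hA1 hL (fun z => conj_mem_charField ρ) hHL hH hdet hinv

end EvenDegree

end Paper

namespace Paper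

/-- for `q ≥ 4` a power of 2, every even-degree irreducible complex
character of `SU₃(q)` with non-real character field has degree `q(q²-q+1)` and
unitary discriminant `q+1`. -/
theorem stmt5 (k q : ℕ) (hk : 0 < k) (hq : q = 2 ^ k) (hq4 : 4 ≤ q)
    (F : Type) [Field F] [Fintype F] [ExpChar F 2]
    (hF : Fintype.card F = q ^ 2)
    (χ : ↥(SU3 2 k F) → ℂ) (hχ : IsIrrChar χ)
    (heven : ∃ m : ℕ, χ 1 = 2 * (m : ℂ))
    (hnr : NotReal χ) :
    χ 1 = (q : ℂ) * ((q : ℂ) ^ 2 - q + 1) ∧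
    HasUnitaryDisc χ ((q : ℂ) + 1) := by
  subst hq
  have : HasCardSq k F := ⟨hF⟩
  have hk2 : 2 ≤ k := (Nat.pow_le_pow_iff_right one_lt_two).1 hq4
  obtain ⟨n, ρ, hρ, rfl⟩ := hχ
  have hn : Even n := by
    obtain ⟨m, hm⟩ := heven
    rw [charOf_one] at hm
    exact even_iff_exists_two_mul.2 ⟨m, by exact_mod_cast hm⟩
  have hreal := hnr.not_forall_conj_eq
  have hdeg : (n + (2 ^ k) ^ 2 : ℂ) = (2 ^ k) ^ 3 + 2 ^ k := by
    exact_mod_cast hρ.degree_eq_of_even hk2 hn hreal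
  push_cast
  refine ⟨?_, hρ.hasUnitaryDisc_of_even hk2 hn hreal⟩
  rw [charOf_one]
  linear_combination hdeg

end Paper
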